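/- arXiv:2208.02359 — 2 statements merged into one kernel-verified Lean document; each statement's English description precedes it below -/
import Mathlib

section
/- Assume the Riemann Hypothesis. For all τ ≥ 2 and x ≥ 2, Σ_γ ( sin(½(γ−τ) log x) / (½(γ−τ) log x) )² = (log(τ/2π))/log x − (2/log x) Σ_{n≤x} Λ(n) n^{−1/2} (1 − (log n)/(log x)) cos(τ log n) + O(1/(τ log x)) + O(x^{1/2}/(τ log x)²), where the sum on the left runs over all ordinates γ ∈ ℝ of nontrivial zeros 1/2+iγ of ζ counted with multiplicity, and the implied constants are absolute. -/
open Filter MeasureTheory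
open scoped Real

noncomputable section

/-- The multiplicity (order of vanishing) of the Riemann zeta function at a point `z`:
the least `n` such that the `n`-th derivative of `ζ` at `z` is nonzero. -/
def zetaMult (z : ℂ) : ℕ := sInf {n : ℕ | iteratedDeriv n riemannZeta z ≠ 0}

/-- Under RH, the set of ordinates `γ` with `0 < γ ≤ T` of nontrivial zeros `1/2 + iγ` of `ζ`. -/
def zetaOrds (T : ℝ) : Set ℝ :=
  {γ : ℝ | 0 < γ ∧ γ ≤ T ∧ riemannZeta (1 / 2 + γ * Complex.I) = 0}

/-- The multiplicity of the zero of `ζ` at `1/2 + iγ`. -/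
def ordMult (γ : ℝ) : ℕ := zetaMult (1 / 2 + γ * Complex.I)

/-- `N(T)`: the number of ordinates of nontrivial zeros in `(0, T]`, counted with multiplicity. -/
def zetaN (T : ℝ) : ℕ := ∑ᶠ γ ∈ zetaOrds T, ordMult γ

/-- The next ordinate of a nontrivial zero strictly above `γ`. -/
def nextOrd (γ : ℝ) : ℝ :=
  sInf {γ' : ℝ | γ < γ' ∧ riemannZeta (1 / 2 + γ' * Complex.I) = 0}

/-- The set of all real ordinates of nontrivial zeros of `ζ` (under RH). -/
def allOrds : Set ℝ := {γ : ℝ | riemannZeta (1 / 2 + γ * Complex.I) = 0}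

/-- `(sin u / u)²`, interpreted as `1` at `u = 0`. -/
def sincSq (u : ℝ) : ℝ := if u = 0 then 1 else (Real.sin u / u) ^ 2

/-! Let `ξ` be the completed zeta function and `L = log x`. By Hadamard's theorem the real part of
`logDeriv ξ s` is the sum of `Re 1 / (s - ρ)` over the zeros `ρ`. On the other hand, for `Re s > 1`,
`logDeriv ξ s = 1 / s + 1 / (s - 1) - (log π) / 2 + ψ (s / 2) / 2 - ∑ Λ(n) n ^ (-s)`.
Integrate both expressions at `s = 3/2 + i (τ + 2πw)` against the Fourier transform of
`v ↦ max (1 - |v| / L) 0 * exp |v|`. Fourier inversion replaces every `exp (-s v)`, `v ≥ 0`, by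
`max (1 - v / L) 0 * exp (-(1/2 + i τ) v)`. Since `1 / (s - ρ)` is the Laplace transform of
`exp (ρ v)`, each zero contributes a multiple of `sin² u / u²`; the Dirichlet series becomes the
finite sum over `n ≤ x`; Gauss's integral turns the digamma term into `log (τ / 2) + O(1 / τ)`;
and the poles at `0` and `1` contribute `O(√x / (τ² L) + 1 / τ²)`.
-/

section Hadamard

/-! ### Partial fractions of the logarithmic derivative of an entire function -/

open Metric

variable {f g : ℂ → ℂ} {c : ℂ} {R : ℝ}

lemma exists_differentiable_eq_pow_mul (hf : Differentiable ℂ f) {p : ℂ} {n : ℕ}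
    (hn : analyticOrderAt f p = n) :
    ∃ g : ℂ → ℂ, Differentiable ℂ g ∧ g p ≠ 0 ∧ ∀ z, f z = (z - p) ^ n * g z := by
  induction n generalizing f with
  | zero => exact ⟨f, hf, (hf.analyticAt p).analyticOrderAt_eq_zero.mp hn, by simp⟩
  | succ n ih =>
    have hfp : f p = 0 := apply_eq_zero_of_analyticOrderAt_ne_zero (by simp [hn])
    have hslope : Differentiable ℂ (dslope f p) := differentiableOn_univ.mp
      ((Complex.differentiableOn_dslope univ_mem).mpr hf.differentiableOn)
    have hfactor : f = (fun z ↦ z - p) * dslope f p := by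
      ext z
      simpa [hfp] using (sub_smul_dslope f p z).symm
    have horder : analyticOrderAt (dslope f p) p = n := by
      rw [hfactor, analyticOrderAt_mul (by fun_prop) (hslope.analyticAt p),
        analyticOrderAt_id_sub_const_self, add_comm,
        Nat.cast_add, Nat.cast_one] at hn
      exact ENat.add_left_injective_of_ne_top ENat.one_ne_top hn
    obtain ⟨g, hg, hgp, hfg⟩ := ih hslope horder
    refine ⟨g, hg, hgp, fun z ↦ ?_⟩
    rw [hfactor, Pi.mul_apply, hfg, pow_succ']
    ring

lemma exists_differentiable_eq_prod_pow_mul (hf : Differentiable ℂ f)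
    (hord : ∀ p, analyticOrderAt f p ≠ ⊤) (S : Finset ℂ) :
    ∃ g : ℂ → ℂ, Differentiable ℂ g ∧ (∀ p ∈ S, g p ≠ 0) ∧
      ∀ z, f z = (∏ p ∈ S, (z - p) ^ analyticOrderNatAt f p) * g z := by
  classical
  induction S using Finset.induction_on with
  | empty => exact ⟨f, hf, by simp, by simp⟩
  | insert p S hp ih =>
    obtain ⟨g, hg, hgS, hfg⟩ := ih
    have hprod : Differentiable ℂ (fun z ↦ ∏ q ∈ S, (z - q) ^ analyticOrderNatAt f q) := by
      fun_prop
    have hprod_ne : (∏ q ∈ S, (p - q) ^ analyticOrderNatAt f q) ≠ 0 :=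
      Finset.prod_ne_zero_iff.mpr fun q hq ↦
        pow_ne_zero _ (sub_ne_zero.mpr fun h ↦ hp (h ▸ hq))
    have horder : analyticOrderAt g p = analyticOrderNatAt f p := by
      rw [Nat.cast_analyticOrderNatAt (hord p)]
      conv_rhs => rw [show f = (fun z ↦ ∏ q ∈ S, (z - q) ^ analyticOrderNatAt f q) * g from
        funext hfg]
      rw [analyticOrderAt_mul (hprod.analyticAt p) (hg.analyticAt p),
        (hprod.analyticAt p).analyticOrderAt_eq_zero.mpr hprod_ne, zero_add]
    obtain ⟨k, hk, hkp, hgk⟩ := exists_differentiable_eq_pow_mul hg horder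
    refine ⟨k, hk, fun q hq ↦ ?_, fun z ↦ ?_⟩
    · rcases Finset.mem_insert.mp hq with rfl | hqS
      · exact hkp
      · exact right_ne_zero_of_mul (hgk q ▸ hgS q hqS)
    · rw [hfg, hgk, Finset.prod_insert hp]
      ring

lemma logDeriv_eq_sum_div_add_logDeriv {S : Finset ℂ} {m : ℂ → ℕ} (hg : Differentiable ℂ g)
    (hfg : ∀ z, f z = (∏ p ∈ S, (z - p) ^ m p) * g z) {z : ℂ} (hz : f z ≠ 0) (hzS : z ∉ S) :
    logDeriv f z = ∑ p ∈ S, (m p : ℂ) / (z - p) + logDeriv g z := by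
  have hz' := hfg z ▸ hz
  rw [show f = fun z ↦ (∏ p ∈ S, (z - p) ^ m p) * g z from funext hfg,
    logDeriv_mul z (left_ne_zero_of_mul hz') (right_ne_zero_of_mul hz') (by fun_prop) (hg z),
    logDeriv_prod]
  · congr 1
    refine Finset.sum_congr rfl fun p _ ↦ ?_
    rw [logDeriv_fun_pow (by fun_prop), logDeriv_apply]
    simp [div_eq_mul_inv]
  · exact fun p hp ↦ pow_ne_zero _ (sub_ne_zero.mpr fun h ↦ hzS (h ▸ hp))
  · exact fun p _ ↦ by fun_prop

lemma exists_hasDerivAt_logDeriv_eq_mul_exp (hg : DifferentiableOn ℂ g (ball c R)) (hR : 0 < R)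
    (hne : ∀ z ∈ ball c R, g z ≠ 0) :
    ∃ φ : ℂ → ℂ, φ c = 0 ∧ (∀ w ∈ ball c R, HasDerivAt φ (logDeriv g w) w) ∧
      ∀ w ∈ ball c R, g w = g c * Complex.exp (φ w) := by
  have hlog : DifferentiableOn ℂ (logDeriv g) (ball c R) :=
    (hg.deriv isOpen_ball).div hg hne
  obtain ⟨φ, hφc, hφ⟩ := hlog.isExactOn_ball.with_val_at c 0
  refine ⟨φ, hφc, hφ, fun w hw ↦ ?_⟩
  have hderiv : ∀ v ∈ ball c R, HasDerivAt (fun v ↦ g v * Complex.exp (-φ v)) 0 v := by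
    intro v hv
    have hgv := (hg.differentiableAt (isOpen_ball.mem_nhds hv)).hasDerivAt
    convert! hgv.mul (hφ v hv).neg.cexp using 1
    rw [logDeriv_apply]
    field_simp [hne v hv]
    ring
  have hconst : g w * Complex.exp (-φ w) = g c * Complex.exp (-φ c) :=
    isOpen_ball.is_const_of_deriv_eq_zero (convex_ball c R).isPreconnected
      (fun v hv ↦ (hderiv v hv).differentiableAt.differentiableWithinAt)
      (fun v hv ↦ (hderiv v hv).deriv) hw (mem_ball_self hR)
  rw [hφc, neg_zero, Complex.exp_zero, mul_one] at hconst
  rw [← hconst, mul_assoc, ← Complex.exp_add, neg_add_cancel, Complex.exp_zero, mul_one]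

/-- Borel–Carathéodory for `log (g / g c)`, followed by Cauchy's estimate. -/
lemma norm_logDeriv_le (hg : DifferentiableOn ℂ g (ball c R)) (hR : 0 < R)
    (hne : ∀ z ∈ ball c R, g z ≠ 0) {M : ℝ} (hM : 0 < M)
    (hgrowth : ∀ z ∈ ball c R, ‖g z‖ ≤ Real.exp M * ‖g c‖) {w : ℂ} (hw : ‖w - c‖ < R / 4) :
    ‖logDeriv g w‖ ≤ 8 * M / R := by
  obtain ⟨φ, hφc, hφ, hgφ⟩ := exists_hasDerivAt_logDeriv_eq_mul_exp hg hR hne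
  have hφ_diff : DifferentiableOn ℂ φ (ball c R) := fun v hv ↦
    (hφ v hv).differentiableAt.differentiableWithinAt
  have hφ_re : ∀ v ∈ ball c R, (φ v).re ≤ M := by
    intro v hv
    have hv_le := hgrowth v hv
    rw [hgφ v hv, norm_mul, Complex.norm_exp, mul_comm] at hv_le
    exact Real.exp_le_exp.mp
      (le_of_mul_le_mul_right hv_le (norm_pos_iff.mpr (hne c (mem_ball_self hR))))
  have hφ_norm : ∀ v, ‖v - c‖ ≤ R / 2 → ‖φ v‖ ≤ 2 * M := by
    intro v hv
    have hmem : ∀ u, u ∈ ball (0 : ℂ) R → c + u ∈ ball c R := fun u hu ↦ by simpa using hu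
    have hv0 : v - c ∈ ball (0 : ℂ) R := by simpa using hv.trans_lt (half_lt_self hR)
    have hBC := Complex.borelCaratheodory_zero (f := fun u ↦ φ (c + u)) hM
      (hφ_diff.comp (by fun_prop) hmem) (fun u hu ↦ hφ_re _ (hmem u hu)) hR hv0 (by simpa using hφc)
    rw [add_sub_cancel] at hBC
    refine hBC.trans ?_
    rw [div_le_iff₀ (by linarith)]
    nlinarith
  have hball : ∀ v ∈ closedBall w (R / 4), ‖v - c‖ ≤ R / 2 := by
    intro v hv
    linarith [norm_sub_le_norm_sub_add_norm_sub v w c, mem_closedBall_iff_norm.mp hv]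
  have hsub : closedBall w (R / 4) ⊆ ball c R := fun v hv ↦
    mem_ball_iff_norm.mpr ((hball v hv).trans_lt (by linarith))
  have hcauchy : ‖deriv φ w‖ ≤ 2 * M / (R / 4) :=
    Complex.norm_deriv_le_of_forall_mem_sphere_norm_le (by positivity)
      (hφ_diff.diffContOnCl_ball hsub)
      fun v hv ↦ hφ_norm v (hball v (sphere_subset_closedBall hv))
  rw [(hφ w (hsub (mem_closedBall_self (by positivity)))).deriv] at hcauchy
  exact hcauchy.trans_eq (by field_simp; ring)

/-- Schwarz's lemma for `logDeriv g - logDeriv g c`. -/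
lemma norm_logDeriv_sub_le (hg : DifferentiableOn ℂ g (ball c R)) (hR : 0 < R)
    (hne : ∀ z ∈ ball c R, g z ≠ 0) {M : ℝ} (hM : 0 < M)
    (hgrowth : ∀ z ∈ ball c R, ‖g z‖ ≤ Real.exp M * ‖g c‖) {z : ℂ} (hz : ‖z - c‖ < R / 4) :
    ‖logDeriv g z - logDeriv g c‖ ≤ 64 * M / R ^ 2 * ‖z - c‖ := by
  have hdiff : DifferentiableOn ℂ (logDeriv g) (ball c (R / 4)) :=
    ((hg.deriv isOpen_ball).div hg hne).mono (ball_subset_ball (by linarith))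
  have hmaps : Set.MapsTo (logDeriv g) (ball c (R / 4))
      (closedBall (logDeriv g c) (8 * M / R + 8 * M / R)) := by
    intro w hw
    rw [mem_closedBall_iff_norm]
    exact (norm_sub_le _ _).trans (add_le_add
      (norm_logDeriv_le hg hR hne hM hgrowth (mem_ball_iff_norm.mp hw))
      (norm_logDeriv_le hg hR hne hM hgrowth (by simpa using hR)))
  have hschwarz := Complex.dist_le_div_mul_dist_of_mapsTo_ball hdiff hmaps
    (mem_ball_iff_norm.mpr hz)
  rw [dist_eq_norm, dist_eq_norm] at hschwarz
  exact hschwarz.trans_eq (by field_simp; ring)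

/-- Every factor `w - p` with `p` in the disc of radius `R` is larger on the circle of radius `2R`
than at the centre, so dividing by them only improves the growth, by the maximum principle. -/
lemma norm_le_of_eq_prod_pow_mul {S : Finset ℂ} {m : ℂ → ℕ} (hg : Differentiable ℂ g)
    (hfg : ∀ z, f z = (∏ p ∈ S, (z - p) ^ m p) * g z) (hfc : f c ≠ 0)
    (hS : ∀ p ∈ S, ‖p - c‖ ≤ R) (hR : 0 < R) {K : ℝ}
    (hf : ∀ w ∈ sphere c (2 * R), ‖f w‖ ≤ K * ‖f c‖) {z : ℂ} (hz : z ∈ closedBall c (2 * R)) :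
    ‖g z‖ ≤ K * ‖g c‖ := by
  have hsphere : ∀ w ∈ sphere c (2 * R), ‖g w‖ ≤ K * ‖g c‖ := by
    intro w hw
    have hprod : ‖∏ p ∈ S, (c - p) ^ m p‖ ≤ ‖∏ p ∈ S, (w - p) ^ m p‖ := by
      simp only [norm_prod, norm_pow]
      refine Finset.prod_le_prod (fun _ _ ↦ by positivity) fun p hp ↦ ?_
      gcongr 1
      linarith [norm_sub_le_norm_sub_add_norm_sub w p c, norm_sub_rev c p, hS p hp,
        mem_sphere_iff_norm.mp hw]
    have hprod_pos : 0 < ‖∏ p ∈ S, (c - p) ^ m p‖ :=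
      norm_pos_iff.mpr (left_ne_zero_of_mul (hfg c ▸ hfc))
    refine le_of_mul_le_mul_left ?_ hprod_pos
    calc ‖∏ p ∈ S, (c - p) ^ m p‖ * ‖g w‖
        ≤ ‖∏ p ∈ S, (w - p) ^ m p‖ * ‖g w‖ := by gcongr
      _ = ‖f w‖ := by rw [hfg w, norm_mul]
      _ ≤ K * ‖f c‖ := hf w hw
      _ = ‖∏ p ∈ S, (c - p) ^ m p‖ * (K * ‖g c‖) := by rw [hfg c, norm_mul]; ring
  refine Complex.norm_le_of_forall_mem_frontier_norm_le isBounded_ball hg.diffContOnCl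
    (fun w hw ↦ hsphere w (frontier_ball_subset_sphere hw)) ?_
  rwa [closure_ball _ (by positivity)]

lemma analyticOrderAt_ne_top_of_apply_ne_zero (hf : Differentiable ℂ f) (hfc : f c ≠ 0) (p : ℂ) :
    analyticOrderAt f p ≠ ⊤ :=
  (Complex.analyticOnNhd_univ_iff_differentiable.mpr hf).analyticOrderAt_ne_top_of_isPreconnected
    isPreconnected_univ (Set.mem_univ c) (Set.mem_univ p)
    (by simp [(hf.analyticAt c).analyticOrderAt_eq_zero.mpr hfc])

lemma norm_logDeriv_sub_sum_zeros_le (hf : Differentiable ℂ f) (hfc : f c ≠ 0) (hR : 0 < R)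
    {Z : Finset ℂ} (hZ : ∀ z, z ∈ Z ↔ f z = 0 ∧ ‖z - c‖ ≤ R) {M : ℝ} (hM : 0 < M)
    (hgrowth : ∀ w ∈ sphere c (2 * R), ‖f w‖ ≤ Real.exp M * ‖f c‖)
    {z : ℂ} (hz : f z ≠ 0) (hzR : ‖z - c‖ < R / 4) :
    ‖logDeriv f z - logDeriv f c -
        ∑ p ∈ Z, (analyticOrderNatAt f p : ℂ) * (1 / (z - p) - 1 / (c - p))‖
      ≤ 64 * M / R ^ 2 * ‖z - c‖ := by
  obtain ⟨g, hg, hgZ, hfg⟩ := exists_differentiable_eq_prod_pow_mul hf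
    (analyticOrderAt_ne_top_of_apply_ne_zero hf hfc) Z
  have hg_ne : ∀ w ∈ ball c R, g w ≠ 0 := by
    intro w hw
    by_cases hfw : f w = 0
    · exact hgZ w ((hZ w).mpr ⟨hfw, (mem_ball_iff_norm.mp hw).le⟩)
    · exact right_ne_zero_of_mul (hfg w ▸ hfw)
  have hg_growth : ∀ w ∈ ball c R, ‖g w‖ ≤ Real.exp M * ‖g c‖ := fun w hw ↦
    norm_le_of_eq_prod_pow_mul hg hfg hfc (fun p hp ↦ ((hZ p).mp hp).2) hR hgrowth
      (ball_subset_closedBall (ball_subset_ball (by linarith) hw))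
  have hlog : ∀ w, f w ≠ 0 → logDeriv f w =
      ∑ p ∈ Z, (analyticOrderNatAt f p : ℂ) / (w - p) + logDeriv g w := fun w hw ↦
    logDeriv_eq_sum_div_add_logDeriv hg hfg hw fun hwZ ↦ hw ((hZ w).mp hwZ).1
  convert! norm_logDeriv_sub_le hg.differentiableOn hR hg_ne hM hg_growth hzR using 2
  rw [hlog z hz, hlog c hfc]
  simp only [mul_sub, Finset.sum_sub_distrib, mul_one_div]
  ring

theorem tendsto_logDeriv_sub_sum_zeros (hf : Differentiable ℂ f) (hfc : f c ≠ 0) {B : ℝ → ℝ}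
    (hB : B =o[atTop] fun R ↦ R ^ 2)
    (hgrowth : ∀ᶠ R in atTop, ∀ z, ‖z - c‖ ≤ R → ‖f z‖ ≤ Real.exp (B R))
    {Z : ℝ → Finset ℂ} (hZ : ∀ R z, z ∈ Z R ↔ f z = 0 ∧ ‖z - c‖ ≤ R) {z : ℂ} (hz : f z ≠ 0) :
    Tendsto (fun R ↦ logDeriv f z - logDeriv f c -
      ∑ p ∈ Z R, (analyticOrderNatAt f p : ℂ) * (1 / (z - p) - 1 / (c - p))) atTop (nhds 0) := by
  set K : ℝ := |Real.log ‖f c‖| + 1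
  have hK : 1 ≤ Real.exp K * ‖f c‖ := by
    rw [← Real.exp_log (norm_pos_iff.mpr hfc), ← Real.exp_add]
    exact Real.one_le_exp (by linarith [neg_abs_le (Real.log ‖f c‖)])
  have hdouble : Tendsto (fun R : ℝ ↦ 2 * R) atTop atTop := tendsto_id.const_mul_atTop two_pos
  have hbound : ∀ᶠ R in atTop, ‖logDeriv f z - logDeriv f c -
      ∑ p ∈ Z R, (analyticOrderNatAt f p : ℂ) * (1 / (z - p) - 1 / (c - p))‖ ≤
        64 * (|B (2 * R)| + K) / R ^ 2 * ‖z - c‖ := by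
    filter_upwards [eventually_gt_atTop 0, eventually_gt_atTop (4 * ‖z - c‖),
      hdouble.eventually hgrowth] with R hR hzR hfR
    refine norm_logDeriv_sub_sum_zeros_le hf hfc hR (hZ R) (by positivity) (fun w hw ↦ ?_) hz
      (by linarith)
    calc ‖f w‖ ≤ Real.exp (B (2 * R)) * 1 := by
          rw [mul_one]
          exact hfR w (mem_sphere_iff_norm.mp hw).le
      _ ≤ Real.exp |B (2 * R)| * (Real.exp K * ‖f c‖) := by
          gcongr
          exact le_abs_self _
      _ = Real.exp (|B (2 * R)| + K) * ‖f c‖ := by rw [Real.exp_add _ K, mul_assoc]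
  refine squeeze_zero_norm' hbound ?_
  have hB' : Tendsto (fun R ↦ |B (2 * R)| / (2 * R) ^ 2) atTop (nhds 0) :=
    hB.abs_left.tendsto_div_nhds_zero.comp hdouble
  have hK' : Tendsto (fun R : ℝ ↦ K / R ^ 2) atTop (nhds 0) :=
    (tendsto_pow_atTop two_ne_zero).const_div_atTop K
  have hlim := ((hB'.const_mul 4).add hK').const_mul (64 * ‖z - c‖)
  simp only [mul_zero, add_zero] at hlim
  refine hlim.congr fun R ↦ ?_
  ring

end Hadamard

section XiGrowth

/-! ### Growth of the Riemann xi function -/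

open Set

lemma rpow_le_exp_mul_log_mul_exp {a δ t : ℝ} (ha : 0 < a) (hδ : 0 < δ) (ht : 0 < t) :
    t ^ a ≤ Real.exp (a * Real.log (a / δ)) * Real.exp (δ * t) := by
  have hlog : Real.log t - Real.log (a / δ) ≤ t / (a / δ) - 1 := by
    rw [← Real.log_div ht.ne' (by positivity)]
    exact Real.log_le_sub_one_of_pos (by positivity)
  have hmul : a * (t / (a / δ) - 1) = δ * t - a := by field_simp
  rw [Real.rpow_def_of_pos ht, ← Real.exp_add, Real.exp_le_exp]
  nlinarith [mul_le_mul_of_nonneg_left hlog ha.le]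

lemma norm_mellin_le {E : Type*} [NormedAddCommGroup E] [NormedSpace ℂ E] {f : ℝ → E} {a δ : ℝ}
    (hf : MellinConvergent f a) (hδ : 0 < δ)
    (hf_exp : IntegrableOn (fun t ↦ ‖f t‖ * Real.exp (δ * t)) (Ioi 1))
    {w : ℂ} (haw : a ≤ w.re) (hw : 0 < w.re) :
    ‖mellin f w‖ ≤ (∫ t in Ioi 0, t ^ (a - 1) * ‖f t‖) +
      Real.exp (w.re * Real.log (w.re / δ)) * ∫ t in Ioi 1, ‖f t‖ * Real.exp (δ * t) := by
  set K := Real.exp (w.re * Real.log (w.re / δ))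
  set tail : ℝ → ℝ := (Ioi 1).indicator fun t ↦ ‖f t‖ * Real.exp (δ * t)
  have hhead : IntegrableOn (fun t ↦ t ^ (a - 1) * ‖f t‖) (Ioi 0) :=
    IntegrableOn.congr_fun hf.norm (fun t ht ↦ by
      simp [norm_smul, Complex.norm_cpow_eq_rpow_re_of_pos (mem_Ioi.mp ht)]) measurableSet_Ioi
  have htail : IntegrableOn (fun t ↦ K * tail t) (Ioi 0) :=
    (hf_exp.integrable_indicator measurableSet_Ioi).integrableOn.const_mul K
  have hpoint : ∀ t ∈ Ioi (0 : ℝ),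
      ‖(t : ℂ) ^ (w - 1) • f t‖ ≤ t ^ (a - 1) * ‖f t‖ + K * tail t := by
    intro t ht
    rw [norm_smul, Complex.norm_cpow_eq_rpow_re_of_pos ht, Complex.sub_re, Complex.one_re]
    rcases lt_or_ge 1 t with h1 | h1
    · have htw : t ^ (w.re - 1) ≤ K * Real.exp (δ * t) :=
        (Real.rpow_le_rpow_of_exponent_le h1.le (by linarith)).trans
          (rpow_le_exp_mul_log_mul_exp hw hδ ht)
      calc t ^ (w.re - 1) * ‖f t‖ ≤ K * Real.exp (δ * t) * ‖f t‖ := by gcongr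
        _ = K * tail t := by
          rw [show tail t = ‖f t‖ * Real.exp (δ * t) from indicator_of_mem h1 _]
          ring
        _ ≤ t ^ (a - 1) * ‖f t‖ + K * tail t :=
          le_add_of_nonneg_left (mul_nonneg (Real.rpow_nonneg (le_of_lt ht) _) (norm_nonneg _))
    · rw [show tail t = 0 from indicator_of_notMem h1.not_gt _, mul_zero, add_zero]
      gcongr ?_ * ‖f t‖
      exact Real.rpow_le_rpow_of_exponent_ge ht h1 (by linarith)
  refine (norm_integral_le_of_norm_le (hhead.add htail)
    (ae_restrict_of_forall_mem measurableSet_Ioi hpoint)).trans_eq ?_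
  rw [integral_add' hhead htail, integral_const_mul, setIntegral_indicator measurableSet_Ioi,
    inter_eq_self_of_subset_right (Ioi_subset_Ioi zero_le_one)]

lemma exists_integrableOn_norm_hurwitzEvenFEPair_mul_exp :
    ∃ δ : ℝ, 0 < δ ∧ IntegrableOn
      (fun t ↦ ‖(HurwitzZeta.hurwitzEvenFEPair 0).f_modif t‖ * Real.exp (δ * t)) (Ioi 1) := by
  obtain ⟨p, hp, hO⟩ := HurwitzZeta.isBigO_atTop_evenKernel_sub 0
  set g : ℝ → ℝ := fun t ↦ HurwitzZeta.evenKernel 0 t - 1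
  have hgO : g =O[atTop] fun t ↦ Real.exp (-p * t) := by simpa [g] using hO
  have hg_cont : ContinuousOn g (Ici 1) :=
    ((HurwitzZeta.continuousOn_evenKernel 0).sub continuousOn_const).mono
      (Ici_subset_Ioi.mpr one_pos)
  have hg_int : IntegrableOn (fun t ↦ ‖g t‖ * Real.exp (p / 2 * t)) (Ioi 1) := by
    refine integrable_of_isBigO_exp_neg (b := p / 2) (by positivity)
      (hg_cont.norm.mul (by fun_prop)) ?_
    refine (hgO.norm_left.mul (Asymptotics.isBigO_refl _ atTop)).congr_right fun t ↦ ?_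
    rw [← Real.exp_add]
    ring_nf
  refine ⟨p / 2, by positivity, hg_int.congr_fun (fun t ht ↦ ?_) measurableSet_Ioi⟩
  have hmodif : (HurwitzZeta.hurwitzEvenFEPair 0).f_modif t = (g t : ℂ) := by
    simp [WeakFEPair.f_modif, HurwitzZeta.hurwitzEvenFEPair, g, mem_Ioi.mp ht,
      (mem_Ioi.mp ht).le.not_gt]
  simp only [hmodif, Complex.norm_real]

lemma exists_norm_completedRiemannZeta₀_le :
    ∃ A B δ : ℝ, 0 ≤ A ∧ 0 ≤ B ∧ 0 < δ ∧ ∀ s : ℂ, 1 / 2 ≤ s.re →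
      ‖completedRiemannZeta₀ s‖ ≤ A + B * Real.exp (s.re / 2 * Real.log (s.re / 2 / δ)) := by
  set P := HurwitzZeta.hurwitzEvenFEPair 0
  obtain ⟨δ, hδ, hintegrable⟩ := exists_integrableOn_norm_hurwitzEvenFEPair_mul_exp
  have hconv : MellinConvergent P.f_modif ((1 / 4 : ℝ) : ℂ) :=
    (P.isStrongFEPair_toStrongFEPair.hasMellin _).1
  refine ⟨∫ t in Ioi 0, t ^ (1 / 4 - 1 : ℝ) * ‖P.f_modif t‖,
    ∫ t in Ioi 1, ‖P.f_modif t‖ * Real.exp (δ * t), δ,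
    setIntegral_nonneg measurableSet_Ioi fun t ht ↦
      mul_nonneg (Real.rpow_nonneg (le_of_lt ht) _) (norm_nonneg _),
    integral_nonneg fun t ↦ by positivity, hδ, fun s hs ↦ ?_⟩
  have hre : (s / 2).re = s.re / 2 := by simp
  have hmellin := norm_mellin_le hconv hδ hintegrable (w := s / 2) (by linarith) (by linarith)
  have hzeta : completedRiemannZeta₀ s = mellin P.f_modif (s / 2) / 2 := rfl
  rw [hre] at hmellin
  rw [hzeta, norm_div, Complex.norm_ofNat]
  linarith [norm_nonneg (mellin P.f_modif (s / 2))]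

/-- Twice Riemann's `ξ(s) = s(s-1)π^{-s/2}Γ(s/2)ζ(s)/2`, written through the entire function
`completedRiemannZeta₀` so that no value has to be filled in at the poles `0` and `1`. Its zeros are
the nontrivial zeros of `ζ`. -/
def riemannXi (s : ℂ) : ℂ := s * (s - 1) * completedRiemannZeta₀ s + 1

lemma differentiable_riemannXi : Differentiable ℂ riemannXi := by
  have := differentiable_completedZeta₀
  unfold riemannXi
  fun_prop

lemma riemannXi_one_sub (s : ℂ) : riemannXi (1 - s) = riemannXi s := by
  simp only [riemannXi, completedRiemannZeta₀_one_sub]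
  ring

lemma mul_log_div_le_mul_rpow {δ D R u : ℝ} (hδ : 0 < δ) (hD : -Real.log δ ≤ D) (hD0 : 0 ≤ D)
    (hR : 1 ≤ R) (hu : 0 < u) (huR : u ≤ R) :
    u * Real.log (u / δ) ≤ (2 + D) * R ^ (3 / 2 : ℝ) := by
  have hsqrt : 1 ≤ R ^ (1 / 2 : ℝ) := Real.one_le_rpow hR (by norm_num)
  have hlogR : Real.log R ≤ R ^ (1 / 2 : ℝ) / (1 / 2) :=
    Real.log_le_rpow_div (by linarith) (by norm_num)
  have hlog : Real.log (u / δ) ≤ (2 + D) * R ^ (1 / 2 : ℝ) := by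
    rw [Real.log_div hu.ne' hδ.ne']
    nlinarith [Real.log_le_log hu huR]
  calc u * Real.log (u / δ) ≤ u * ((2 + D) * R ^ (1 / 2 : ℝ)) := by gcongr
    _ ≤ R * ((2 + D) * R ^ (1 / 2 : ℝ)) := by gcongr
    _ = (2 + D) * R ^ (3 / 2 : ℝ) := by
      rw [show (3 / 2 : ℝ) = 1 + 1 / 2 by norm_num, Real.rpow_add (by linarith), Real.rpow_one]
      ring

lemma exists_norm_riemannXi_le_of_half_le_re :
    ∃ C : ℝ, ∀ R : ℝ, 1 ≤ R → ∀ s : ℂ, ‖s‖ ≤ R → 1 / 2 ≤ s.re →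
      ‖riemannXi s‖ ≤ Real.exp (C * R ^ (3 / 2 : ℝ)) := by
  obtain ⟨A, B, δ, hA, hB, hδ, hbound⟩ := exists_norm_completedRiemannZeta₀_le
  set D := |Real.log δ|
  refine ⟨2 + (A + B) + (2 + D), fun R hR s hs hre ↦ ?_⟩
  have hsR : s.re ≤ R := (Complex.re_le_norm s).trans hs
  have hRr : R ≤ R ^ (3 / 2 : ℝ) := by
    simpa using Real.rpow_le_rpow_of_exponent_le hR (by norm_num : (1 : ℝ) ≤ 3 / 2)
  have hzeta : ‖completedRiemannZeta₀ s‖ ≤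
      (A + B) * Real.exp ((2 + D) * R ^ (3 / 2 : ℝ)) := by
    have hexp := Real.exp_le_exp.mpr (mul_log_div_le_mul_rpow hδ (neg_le_abs _) (abs_nonneg _) hR
      (by linarith : 0 < s.re / 2) (by linarith))
    have hone : 1 ≤ Real.exp ((2 + D) * R ^ (3 / 2 : ℝ)) := Real.one_le_exp (by positivity)
    nlinarith [hbound s hre]
  have hquad : ‖s * (s - 1)‖ ≤ 2 * R * R := by
    have hs1 : ‖s - 1‖ ≤ 2 * R := (norm_sub_le _ _).trans (by rw [norm_one]; linarith)
    rw [norm_mul]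
    nlinarith [norm_nonneg s, norm_nonneg (s - 1)]
  have hpoly : 2 * R * R * (A + B) + 1 ≤ Real.exp (2 * R) * Real.exp (A + B) := by
    have hquad_exp : 1 + 2 * R * R ≤ Real.exp (2 * R) := by
      nlinarith [Real.quadratic_le_exp_of_nonneg (by linarith : 0 ≤ 2 * R)]
    calc 2 * R * R * (A + B) + 1 ≤ (1 + 2 * R * R) * (A + B + 1) := by nlinarith
      _ ≤ Real.exp (2 * R) * Real.exp (A + B) := by
        gcongr
        exact Real.add_one_le_exp _
  set K := Real.exp ((2 + D) * R ^ (3 / 2 : ℝ))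
  have hK : 1 ≤ K := Real.one_le_exp (by positivity)
  calc ‖riemannXi s‖ ≤ ‖s * (s - 1)‖ * ‖completedRiemannZeta₀ s‖ + 1 := by
        simpa [riemannXi] using norm_add_le (s * (s - 1) * completedRiemannZeta₀ s) 1
    _ ≤ 2 * R * R * ((A + B) * K) + 1 := by gcongr
    _ ≤ (2 * R * R * (A + B) + 1) * K := by linarith
    _ ≤ Real.exp (2 * R) * Real.exp (A + B) * K := by gcongr
    _ ≤ Real.exp ((2 + (A + B) + (2 + D)) * R ^ (3 / 2 : ℝ)) := by
        rw [← Real.exp_add, ← Real.exp_add, Real.exp_le_exp]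
        nlinarith

lemma exists_norm_riemannXi_le :
    ∃ C : ℝ, ∀ R : ℝ, 1 ≤ R → ∀ s : ℂ, ‖s‖ ≤ R →
      ‖riemannXi s‖ ≤ Real.exp (C * (2 * R) ^ (3 / 2 : ℝ)) := by
  obtain ⟨C, hbound⟩ := exists_norm_riemannXi_le_of_half_le_re
  refine ⟨C, fun R hR s hs ↦ ?_⟩
  rcases le_total (1 / 2) s.re with hre | hre
  · exact hbound (2 * R) (by linarith) s (by linarith) hre
  · rw [← riemannXi_one_sub]
    refine hbound (2 * R) (by linarith) (1 - s) ?_ ?_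
    · exact (norm_sub_le _ _).trans (by rw [norm_one]; linarith)
    · rw [Complex.sub_re, Complex.one_re]
      linarith

end XiGrowth

section XiZeros

/-! ### Zeros of the Riemann xi function -/

lemma sInf_iteratedDeriv_ne_zero_eq_analyticOrderNatAt {f : ℂ → ℂ} {z : ℂ} (hf : AnalyticAt ℂ f z)
    (hf_top : analyticOrderAt f z ≠ ⊤) :
    sInf {n : ℕ | iteratedDeriv n f z ≠ 0} = analyticOrderNatAt f z := by
  have hcast := Nat.cast_analyticOrderNatAt hf_top
  set m := analyticOrderNatAt f z
  have hbelow : ∀ i < m, iteratedDeriv i f z = 0 :=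
    (natCast_le_analyticOrderAt_iff_iteratedDeriv_eq_zero hf).mp hcast.le
  have hm : iteratedDeriv m f z ≠ 0 := fun hzero ↦ by
    have hsucc : ((m + 1 : ℕ) : ℕ∞) ≤ m := by
      rw [hcast, natCast_le_analyticOrderAt_iff_iteratedDeriv_eq_zero hf]
      intro i hi
      rcases Nat.lt_succ_iff_lt_or_eq.mp hi with hlt | rfl
      exacts [hbelow i hlt, hzero]
    exact absurd (Nat.cast_le.mp hsucc) (by omega)
  exact le_antisymm (Nat.sInf_le hm)
    (le_csInf ⟨m, hm⟩ fun n hn ↦ not_lt.mp fun hlt ↦ hn (hbelow n hlt))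

lemma differentiableAt_Gammaℝ {s : ℂ} (hs : 0 < s.re) : DifferentiableAt ℂ Complex.Gammaℝ s := by
  simpa using (Complex.differentiable_Gammaℝ_inv s).fun_inv
    (inv_ne_zero (Complex.Gammaℝ_ne_zero_of_re_pos hs))

lemma riemannXi_eq_mul_riemannZeta {s : ℂ} (hs : 0 < s.re) (hs1 : s ≠ 1) :
    riemannXi s = s * (s - 1) * Complex.Gammaℝ s * riemannZeta s := by
  have hs0 : s ≠ 0 := Complex.ne_zero_of_re_pos hs
  have hs1' : 1 - s ≠ 0 := sub_ne_zero.mpr hs1.symm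
  have hΓ := Complex.Gammaℝ_ne_zero_of_re_pos hs
  rw [riemannZeta_def_of_ne_zero hs0, completedRiemannZeta_eq, riemannXi]
  field_simp
  ring

lemma mul_Gammaℝ_ne_zero {s : ℂ} (hs : 0 < s.re) (hs1 : s ≠ 1) :
    s * (s - 1) * Complex.Gammaℝ s ≠ 0 :=
  mul_ne_zero (mul_ne_zero (Complex.ne_zero_of_re_pos hs) (sub_ne_zero.mpr hs1))
    (Complex.Gammaℝ_ne_zero_of_re_pos hs)

lemma riemannXi_eq_zero_iff {s : ℂ} (hs : 0 < s.re) (hs1 : s ≠ 1) :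
    riemannXi s = 0 ↔ riemannZeta s = 0 := by
  rw [riemannXi_eq_mul_riemannZeta hs hs1, mul_eq_zero_iff_left (mul_Gammaℝ_ne_zero hs hs1)]

lemma riemannXi_ne_zero_of_one_le_re {s : ℂ} (hs : 1 ≤ s.re) : riemannXi s ≠ 0 := by
  rcases eq_or_ne s 1 with rfl | hs1
  · simp [riemannXi]
  · exact (riemannXi_eq_zero_iff (by linarith) hs1).not.mpr (riemannZeta_ne_zero_of_one_le_re hs)

lemma re_eq_half_of_riemannXi_eq_zero (hRH : RiemannHypothesis) {s : ℂ} (hs : riemannXi s = 0) :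
    s.re = 1 / 2 := by
  have hlt : s.re < 1 := lt_of_not_ge fun hge ↦ riemannXi_ne_zero_of_one_le_re hge hs
  have hpos : 0 < s.re := lt_of_not_ge fun hle ↦
    riemannXi_ne_zero_of_one_le_re (s := 1 - s) (by simpa using hle) (by rw [riemannXi_one_sub, hs])
  have hs1 : s ≠ 1 := by
    rintro rfl
    simp at hlt
  refine hRH s ((riemannXi_eq_zero_iff hpos hs1).mp hs) ?_ hs1
  rintro ⟨n, rfl⟩
  have hre : (-2 * ((n : ℂ) + 1)).re = -2 * ((n : ℝ) + 1) := by simp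
  linarith [(n.cast_nonneg : (0 : ℝ) ≤ n)]

lemma analyticOrderAt_riemannXi {s : ℂ} (hs : 0 < s.re) (hs1 : s ≠ 1) :
    analyticOrderAt riemannXi s = analyticOrderAt riemannZeta s := by
  set factor : ℂ → ℂ := fun z ↦ z * (z - 1) * Complex.Gammaℝ z
  have hre : {z : ℂ | 0 < z.re} ∈ nhds s :=
    (isOpen_lt continuous_const Complex.continuous_re).mem_nhds hs
  have hfactor : AnalyticAt ℂ factor s := by
    refine DifferentiableOn.analyticAt (fun z hz ↦ ?_) hre
    have := differentiableAt_Gammaℝ hz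
    exact DifferentiableAt.differentiableWithinAt (by fun_prop)
  have hfactor_order : analyticOrderAt factor s = 0 :=
    analyticOrderAt_eq_zero.mpr (Or.inr (mul_Gammaℝ_ne_zero hs hs1))
  have heq : riemannXi =ᶠ[nhds s] factor * riemannZeta := by
    filter_upwards [hre, isOpen_compl_singleton.mem_nhds hs1] with z hz hz1
    exact riemannXi_eq_mul_riemannZeta hz hz1
  rw [analyticOrderAt_congr heq, analyticOrderAt_mul hfactor (analyticOn_riemannZeta s hs1),
    hfactor_order, zero_add]

/-- The point `1/2 + it` of the critical line, in the form used by `allOrds` and `ordMult`. -/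
def criticalLine (t : ℝ) : ℂ := 1 / 2 + t * Complex.I

@[simp] lemma criticalLine_re (t : ℝ) : (criticalLine t).re = 1 / 2 := by simp [criticalLine]

@[simp] lemma criticalLine_im (t : ℝ) : (criticalLine t).im = t := by simp [criticalLine]

lemma criticalLine_injective : Function.Injective criticalLine :=
  Function.LeftInverse.injective criticalLine_im

lemma criticalLine_im_of_re_eq_half {s : ℂ} (hs : s.re = 1 / 2) : criticalLine s.im = s :=
  Complex.ext (by simp [hs]) (by simp)

lemma criticalLine_ne_one (t : ℝ) : criticalLine t ≠ 1 := fun h ↦ by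
  have := congrArg Complex.re h
  norm_num at this

lemma riemannXi_criticalLine_eq_zero_iff (t : ℝ) :
    riemannXi (criticalLine t) = 0 ↔ t ∈ allOrds :=
  riemannXi_eq_zero_iff (by simp) (criticalLine_ne_one t)

lemma analyticOrderNatAt_riemannXi_criticalLine (t : ℝ) :
    analyticOrderNatAt riemannXi (criticalLine t) = ordMult t := by
  have horder := analyticOrderAt_riemannXi (s := criticalLine t) (by simp) (criticalLine_ne_one t)
  have htop : analyticOrderAt riemannZeta (criticalLine t) ≠ ⊤ := by
    rw [← horder]
    exact analyticOrderAt_ne_top_of_apply_ne_zero differentiable_riemannXi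
      (riemannXi_ne_zero_of_one_le_re (s := 1) (by simp)) _
  calc analyticOrderNatAt riemannXi (criticalLine t)
      = analyticOrderNatAt riemannZeta (criticalLine t) := by simp only [analyticOrderNatAt, horder]
    _ = ordMult t := (sInf_iteratedDeriv_ne_zero_eq_analyticOrderNatAt
        (analyticOn_riemannZeta _ (criticalLine_ne_one t)) htop).symm

lemma finite_allOrds_norm_sub_le (c : ℂ) (R : ℝ) :
    {γ : allOrds | ‖criticalLine γ - c‖ ≤ R}.Finite := by
  refine Set.Finite.of_finite_image
    (((isCompact_closedBall c R).inter_riemannZetaZeros_finite).subset ?_)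
    (criticalLine_injective.comp Subtype.val_injective).injOn
  rintro _ ⟨γ, hγ, rfl⟩
  exact ⟨by simpa [dist_eq_norm] using hγ, γ.2⟩

lemma countable_allOrds : allOrds.Countable := by
  refine Set.countable_coe_iff.mp (Set.countable_univ_iff.mp ?_)
  refine (Set.countable_iUnion fun n : ℕ ↦ (finite_allOrds_norm_sub_le 0 n).countable).mono ?_
  intro γ _
  obtain ⟨n, hn⟩ := exists_nat_ge ‖criticalLine γ - 0‖
  exact Set.mem_iUnion.mpr ⟨n, hn⟩

/-- The ordinates `γ` of nontrivial zeros with `|1/2 + iγ - c| ≤ R`, the symmetric truncation in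
which Hadamard's partial fractions converge. -/
def ordsWithin (c : ℂ) (R : ℝ) : Finset allOrds := (finite_allOrds_norm_sub_le c R).toFinset

lemma mem_ordsWithin {c : ℂ} {R : ℝ} {γ : allOrds} :
    γ ∈ ordsWithin c R ↔ ‖criticalLine γ - c‖ ≤ R := by
  simp [ordsWithin]

lemma tendsto_ordsWithin_atTop (c : ℂ) : Tendsto (ordsWithin c) atTop atTop :=
  tendsto_atTop_finset_of_monotone
    (fun _ _ hab _ hγ ↦ mem_ordsWithin.mpr ((mem_ordsWithin.mp hγ).trans hab))
    fun _ ↦ ⟨_, mem_ordsWithin.mpr le_rfl⟩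

end XiZeros

section XiPartialFractions

/-! ### Partial fractions of the logarithmic derivative of xi -/

lemma isLittleO_const_mul_mul_rpow_sq (C : ℝ) {c p : ℝ} (hc : 0 ≤ c) (hp : p < 2) :
    (fun R : ℝ ↦ C * (c * R) ^ p) =o[atTop] fun R ↦ R ^ 2 := by
  have hrpow : (fun R : ℝ ↦ R ^ p) =o[atTop] fun R ↦ R ^ 2 := by
    refine Asymptotics.isLittleO_of_tendsto' ?_
      ((tendsto_rpow_neg_atTop (y := 2 - p) (by linarith)).congr' ?_)
    · filter_upwards [eventually_gt_atTop 0] with R hR h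
      exact absurd h (by positivity)
    · filter_upwards [eventually_gt_atTop 0] with R hR
      rw [← Real.rpow_natCast, ← Real.rpow_sub hR]
      norm_num
  refine (hrpow.const_mul_left (C * c ^ p)).congr' ?_ EventuallyEq.rfl
  filter_upwards [eventually_ge_atTop 0] with R hR
  rw [Real.mul_rpow hc hR, mul_assoc]

lemma exists_criticalLine_eq_iff_riemannXi_eq_zero (hRH : RiemannHypothesis) (c z : ℂ) (R : ℝ) :
    (∃ γ ∈ ordsWithin c R, criticalLine γ = z) ↔ riemannXi z = 0 ∧ ‖z - c‖ ≤ R := by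
  simp only [mem_ordsWithin]
  constructor
  · rintro ⟨γ, hγ, rfl⟩
    exact ⟨(riemannXi_criticalLine_eq_zero_iff γ).mpr γ.2, hγ⟩
  · rintro ⟨hz, hzR⟩
    have him := criticalLine_im_of_re_eq_half (re_eq_half_of_riemannXi_eq_zero hRH hz)
    exact ⟨⟨z.im, (riemannXi_criticalLine_eq_zero_iff _).mp (him.symm ▸ hz)⟩,
      him.symm ▸ hzR, him⟩

lemma tendsto_logDeriv_riemannXi_sub_sum_zeros (hRH : RiemannHypothesis) {s : ℂ}
    (hs : riemannXi s ≠ 0) :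
    Tendsto (fun R ↦ logDeriv riemannXi s - logDeriv riemannXi (3 / 2) -
      ∑ γ ∈ ordsWithin (3 / 2) R, (ordMult γ : ℂ) *
        (1 / (s - criticalLine γ) - 1 / (3 / 2 - criticalLine γ))) atTop (nhds 0) := by
  classical
  obtain ⟨C, hC⟩ := exists_norm_riemannXi_le
  have hgrowth : ∀ᶠ R : ℝ in atTop, ∀ z, ‖z - 3 / 2‖ ≤ R →
      ‖riemannXi z‖ ≤ Real.exp (C * (6 * R) ^ (3 / 2 : ℝ)) := by
    filter_upwards [eventually_ge_atTop 1] with R hR z hz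
    rw [show 6 * R = 2 * (3 * R) by ring]
    refine hC (3 * R) (by linarith) z ?_
    have := norm_le_norm_sub_add z (3 / 2)
    norm_num at this
    linarith
  have hzeros : ∀ R z, z ∈ (ordsWithin (3 / 2) R).image (fun γ : allOrds ↦ criticalLine γ) ↔
      riemannXi z = 0 ∧ ‖z - 3 / 2‖ ≤ R := fun R z ↦ by
    rw [Finset.mem_image, exists_criticalLine_eq_iff_riemannXi_eq_zero hRH]
  refine (tendsto_logDeriv_sub_sum_zeros differentiable_riemannXi
    (riemannXi_ne_zero_of_one_le_re (by norm_num))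
    (isLittleO_const_mul_mul_rpow_sq C (by norm_num) (by norm_num)) hgrowth hzeros hs).congr
    fun R ↦ ?_
  rw [Finset.sum_image fun _ _ _ _ h ↦ Subtype.val_injective (criticalLine_injective h)]
  simp only [analyticOrderNatAt_riemannXi_criticalLine]

lemma logDeriv_riemannXi_one_sub (s : ℂ) :
    logDeriv riemannXi (1 - s) = -logDeriv riemannXi s := by
  have hderiv : deriv riemannXi s = -deriv riemannXi (1 - s) := by
    conv_lhs => rw [← funext riemannXi_one_sub]
    exact deriv_comp_const_sub _ _ _
  rw [logDeriv_apply, logDeriv_apply, hderiv, riemannXi_one_sub]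
  ring

lemma re_one_div_sub_criticalLine (s : ℂ) (t : ℝ) :
    (1 / (s - criticalLine t)).re = (s.re - 1 / 2) / ((s.re - 1 / 2) ^ 2 + (s.im - t) ^ 2) := by
  simp [Complex.inv_re, Complex.normSq_apply, sq]

lemma tendsto_re_logDeriv_riemannXi_sub_sum_zeros (hRH : RiemannHypothesis) {s : ℂ}
    (hs : s.re ≠ 1 / 2) :
    Tendsto (fun R ↦ (logDeriv riemannXi s).re - (logDeriv riemannXi (3 / 2)).re -
      (∑ γ ∈ ordsWithin (3 / 2) R, (ordMult γ : ℝ) * (1 / (s - criticalLine γ)).re -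
        ∑ γ ∈ ordsWithin (3 / 2) R, (ordMult γ : ℝ) * (1 / (3 / 2 - criticalLine γ)).re))
      atTop (nhds 0) := by
  have hlim := tendsto_logDeriv_riemannXi_sub_sum_zeros hRH
    (mt (re_eq_half_of_riemannXi_eq_zero hRH) hs)
  refine ((Complex.continuous_re.tendsto 0).comp hlim).congr fun R ↦ ?_
  simp only [Function.comp_apply, Complex.sub_re, Complex.re_sum, ← Finset.sum_sub_distrib,
    ← Complex.ofReal_natCast, Complex.re_ofReal_mul, mul_sub]

-- At `-1/2` both sides change sign, by the functional equation, so the undetermined constant in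
-- Hadamard's formula has the expected real part.
lemma tendsto_sum_re_one_div_sub_zeros_at_three_halves (hRH : RiemannHypothesis) :
    Tendsto (fun R ↦ ∑ γ ∈ ordsWithin (3 / 2) R,
      (ordMult γ : ℝ) * (1 / (3 / 2 - criticalLine γ)).re) atTop
      (nhds (logDeriv riemannXi (3 / 2)).re) := by
  have hlim := tendsto_re_logDeriv_riemannXi_sub_sum_zeros hRH (s := 1 - 3 / 2) (by norm_num)
  have hodd : ∀ t : ℝ, (1 / (1 - 3 / 2 - criticalLine t)).re =
      -(1 / (3 / 2 - criticalLine t)).re := by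
    intro t
    rw [re_one_div_sub_criticalLine, re_one_div_sub_criticalLine]
    norm_num
    ring
  have hhalf := (hlim.div_const 2).add_const (logDeriv riemannXi (3 / 2)).re
  rw [zero_div, zero_add] at hhalf
  refine hhalf.congr fun R ↦ ?_
  simp only [hodd, logDeriv_riemannXi_one_sub, mul_neg, Finset.sum_neg_distrib, Complex.neg_re]
  ring

lemma hasSum_of_nonneg_of_tendsto_sum {ι κ : Type*} {l : Filter κ} [l.NeBot] {f : ι → ℝ} {a : ℝ}
    {S : κ → Finset ι} (hf : ∀ i, 0 ≤ f i) (hS : Tendsto S l atTop)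
    (hsum : Tendsto (fun k ↦ ∑ i ∈ S k, f i) l (nhds a)) : HasSum f a := by
  have hsummable : Summable f := by
    refine summable_of_sum_le hf (c := a) fun u ↦ ge_of_tendsto hsum ?_
    filter_upwards [hS.eventually (eventually_ge_atTop u)] with k hk
    exact Finset.sum_le_sum_of_subset_of_nonneg hk fun i _ _ ↦ hf i
  exact tendsto_nhds_unique (hsummable.hasSum.comp hS) hsum ▸ hsummable.hasSum

lemma hasSum_re_one_div_sub_zeros (hRH : RiemannHypothesis) {s : ℂ} (hs : 1 / 2 < s.re) :
    HasSum (fun γ : allOrds ↦ (ordMult γ : ℝ) * (1 / (s - criticalLine γ)).re)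
      (logDeriv riemannXi s).re := by
  refine hasSum_of_nonneg_of_tendsto_sum (fun γ ↦ ?_) (tendsto_ordsWithin_atTop (3 / 2)) ?_
  · have : 0 < s.re - 1 / 2 := sub_pos.mpr hs
    rw [re_one_div_sub_criticalLine]
    positivity
  · have hlim := ((tendsto_re_logDeriv_riemannXi_sub_sum_zeros hRH hs.ne').neg.add
      (tendsto_sum_re_one_div_sub_zeros_at_three_halves hRH)).add_const
        ((logDeriv riemannXi s).re - (logDeriv riemannXi (3 / 2)).re)
    rw [neg_zero, zero_add, add_sub_cancel] at hlim
    exact hlim.congr fun R ↦ by ring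

lemma differentiableAt_Gamma_of_re_pos {s : ℂ} (hs : 0 < s.re) :
    DifferentiableAt ℂ Complex.Gamma s := by
  refine Complex.differentiableAt_Gamma _ fun m hm ↦ ?_
  have := congrArg Complex.re hm
  simp only [Complex.neg_re, Complex.natCast_re] at this
  linarith [(m.cast_nonneg : (0 : ℝ) ≤ m)]

lemma logDeriv_Gammaℝ {s : ℂ} (hs : 0 < s.re) :
    logDeriv Complex.Gammaℝ s = -(Real.log π / 2) + Complex.digamma (s / 2) / 2 := by
  have hpi : (π : ℂ) ≠ 0 := Complex.ofReal_ne_zero.mpr Real.pi_ne_zero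
  have hhalf : 0 < (s / 2).re := by simpa using hs
  have hΓ := differentiableAt_Gamma_of_re_pos hhalf
  have hpow : HasDerivAt (fun z : ℂ ↦ (π : ℂ) ^ (-z / 2))
      ((π : ℂ) ^ (-s / 2) * Complex.log π * (-1 / 2)) s :=
    ((hasDerivAt_neg s).div_const 2).const_cpow (Or.inl hpi)
  have hpow_ne : (π : ℂ) ^ (-s / 2) ≠ 0 := by simp [Complex.cpow_eq_zero_iff, hpi]
  have hdigamma : logDeriv (fun z : ℂ ↦ Complex.Gamma (z / 2)) s =
      Complex.digamma (s / 2) / 2 := by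
    have hcomp := logDeriv_comp (g := fun z : ℂ ↦ z / 2) hΓ (by fun_prop)
    rw [deriv_div_const, deriv_id''] at hcomp
    rw [Complex.digamma_def, div_eq_mul_one_div]
    exact hcomp
  rw [show Complex.Gammaℝ = fun z ↦ (π : ℂ) ^ (-z / 2) * Complex.Gamma (z / 2) from
      funext Complex.Gammaℝ_def,
    logDeriv_mul (g := fun z ↦ Complex.Gamma (z / 2)) s hpow_ne
      (Complex.Gamma_ne_zero_of_re_pos hhalf) hpow.differentiableAt
      (hΓ.comp s (by fun_prop)), hdigamma, logDeriv_apply, hpow.deriv,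
    Complex.ofReal_log Real.pi_pos.le]
  field_simp

lemma logDeriv_riemannXi_eq {s : ℂ} (hs : 1 < s.re) :
    logDeriv riemannXi s = 1 / s + 1 / (s - 1) - Real.log π / 2 + Complex.digamma (s / 2) / 2 -
      LSeries (fun n ↦ (ArithmeticFunction.vonMangoldt n : ℂ)) s := by
  have hpos : 0 < s.re := by linarith
  have hs0 : s ≠ 0 := Complex.ne_zero_of_re_pos hpos
  have hs1 : s ≠ 1 := by
    rintro rfl
    simp at hs
  have hs1' : s - 1 ≠ 0 := sub_ne_zero.mpr hs1
  have heq : riemannXi =ᶠ[nhds s] fun z ↦ z * (z - 1) * Complex.Gammaℝ z * riemannZeta z := by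
    filter_upwards [(isOpen_lt continuous_const Complex.continuous_re).mem_nhds hpos,
      isOpen_compl_singleton.mem_nhds hs1] with z hz hz1
    exact riemannXi_eq_mul_riemannZeta hz hz1
  have hΓ := differentiableAt_Gammaℝ hpos
  have hlin : logDeriv (fun z : ℂ ↦ z - 1) s = 1 / (s - 1) := by
    simp [logDeriv_apply]
  rw [(logDeriv_congr_nhds heq).self_of_nhds,
    logDeriv_mul s (mul_Gammaℝ_ne_zero hpos hs1) (riemannZeta_ne_zero_of_one_le_re hs.le)
      (by fun_prop) (differentiableAt_riemannZeta hs1),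
    logDeriv_mul (f := fun z ↦ z * (z - 1)) s (mul_ne_zero hs0 hs1')
      (Complex.Gammaℝ_ne_zero_of_re_pos hpos) (by fun_prop) hΓ,
    logDeriv_mul (g := fun z ↦ z - 1) s hs0 hs1' (by fun_prop) (by fun_prop), logDeriv_id', hlin,
    logDeriv_Gammaℝ hpos, ArithmeticFunction.LSeries_vonMangoldt_eq_deriv_riemannZeta_div hs,
    logDeriv_apply]
  ring

end XiPartialFractions

section GaussDigamma

/-! ### Gauss's integral for the digamma function -/

open Set

/-- The kernel `2 / (1 - e⁻²ᵛ)` of Gauss's integral for `ψ(s/2)`, obtained from the usual one by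
`t = 2v`. -/
def gaussKernel (v : ℝ) : ℝ := 2 / (1 - Real.exp (-2 * v))

variable {a v : ℝ} {s z : ℂ}

lemma one_sub_exp_neg_two_mul_pos (hv : 0 < v) : 0 < 1 - Real.exp (-2 * v) :=
  sub_pos.mpr (Real.exp_lt_one_iff.mpr (by linarith))

lemma gaussKernel_pos (hv : 0 < v) : 0 < gaussKernel v :=
  div_pos two_pos (one_sub_exp_neg_two_mul_pos hv)

lemma gaussKernel_le (hv : 0 < v) : gaussKernel v ≤ 1 / v + 2 := by
  have hexp : Real.exp (-2 * v) * (1 + 2 * v) ≤ 1 := by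
    rw [neg_mul, Real.exp_neg, inv_mul_le_one₀ (Real.exp_pos _), add_comm]
    exact Real.add_one_le_exp _
  rw [gaussKernel, div_add' _ _ _ hv.ne', div_le_div_iff₀ (one_sub_exp_neg_two_mul_pos hv) hv]
  linarith

lemma continuousOn_gaussKernel : ContinuousOn gaussKernel (Ioi 0) :=
  ContinuousOn.div continuousOn_const (by fun_prop) fun _ hv ↦
    (one_sub_exp_neg_two_mul_pos hv).ne'

lemma norm_exp_sub_exp_le_of_re_le {M : ℝ} {z w : ℂ} (hz : z.re ≤ M) (hw : w.re ≤ M) :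
    ‖Complex.exp z - Complex.exp w‖ ≤ Real.exp M * ‖z - w‖ := by
  refine (convex_halfSpace_re_le M).norm_image_sub_le_of_norm_deriv_le (𝕜 := ℂ)
    (fun _ _ ↦ Complex.differentiableAt_exp) (fun x hx ↦ ?_) hw hz
  rw [Complex.deriv_exp, Complex.norm_exp]
  exact Real.exp_le_exp.mpr hx

-- The geometric mean of the Lipschitz bound and the trivial bound: it keeps integrability at `0`
-- while growing only like `|s|^(1/2)`.
lemma norm_exp_neg_two_mul_sub_exp_neg_mul_le (ha : a ≤ 2) (has : a ≤ s.re) (hv : 0 ≤ v) :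
    ‖Complex.exp (-2 * v) - Complex.exp (-s * v)‖ ≤
      √(2 * ‖s - 2‖) * (√v * Real.exp (-a * v)) := by
  have hre_two : (-2 * (v : ℂ)).re ≤ -a * v := by
    simp only [Complex.re_mul_ofReal, Complex.neg_re, Complex.re_ofNat]
    gcongr
  have hre_s : (-s * (v : ℂ)).re ≤ -a * v := by
    simp only [Complex.re_mul_ofReal, Complex.neg_re]
    gcongr
  have hlipschitz : ‖Complex.exp (-2 * v) - Complex.exp (-s * v)‖ ≤
      Real.exp (-a * v) * (‖s - 2‖ * v) := by
    refine (norm_exp_sub_exp_le_of_re_le hre_two hre_s).trans_eq ?_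
    rw [show -2 * (v : ℂ) - -s * v = (s - 2) * v by ring, norm_mul, Complex.norm_of_nonneg hv]
  have htrivial : ‖Complex.exp (-2 * v) - Complex.exp (-s * v)‖ ≤ Real.exp (-a * v) * 2 := by
    refine (norm_sub_le _ _).trans ?_
    rw [Complex.norm_exp, Complex.norm_exp]
    linarith [Real.exp_le_exp.mpr hre_two, Real.exp_le_exp.mpr hre_s]
  refine le_of_pow_le_pow_left₀ two_ne_zero (by positivity) ?_
  calc ‖Complex.exp (-2 * v) - Complex.exp (-s * v)‖ ^ 2
      ≤ Real.exp (-a * v) * (‖s - 2‖ * v) * (Real.exp (-a * v) * 2) := by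
        rw [sq]; gcongr
    _ = (√(2 * ‖s - 2‖) * (√v * Real.exp (-a * v))) ^ 2 := by
        rw [mul_pow, mul_pow, Real.sq_sqrt (by positivity), Real.sq_sqrt hv]; ring

lemma norm_gaussKernel_mul_exp_sub_exp_le (ha : a ≤ 2) (has : a ≤ s.re) (hv : 0 < v) :
    ‖(gaussKernel v : ℂ) * (Complex.exp (-2 * v) - Complex.exp (-s * v))‖ ≤
      √(2 * ‖s - 2‖) * (gaussKernel v * √v * Real.exp (-a * v)) := by
  have hg := gaussKernel_pos hv
  rw [norm_mul, Complex.norm_of_nonneg hg.le]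
  calc gaussKernel v * ‖Complex.exp (-2 * v) - Complex.exp (-s * v)‖
      ≤ gaussKernel v * (√(2 * ‖s - 2‖) * (√v * Real.exp (-a * v))) := by
        gcongr
        exact norm_exp_neg_two_mul_sub_exp_neg_mul_le ha has hv.le
    _ = _ := by ring

lemma integrableOn_gaussKernel_mul_sqrt_mul_exp (ha : 0 < a) :
    IntegrableOn (fun v ↦ gaussKernel v * √v * Real.exp (-a * v)) (Ioi 0) := by
  have hrpow : ∀ p : ℝ, -1 < p → IntegrableOn (fun v ↦ v ^ p * Real.exp (-a * v)) (Ioi 0) :=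
    fun p hp ↦ by simpa using integrableOn_rpow_mul_exp_neg_mul_rpow hp zero_lt_one ha
  refine ((hrpow (-1 / 2) (by norm_num)).add ((hrpow (1 / 2) (by norm_num)).const_mul 2)).mono'
    (((continuousOn_gaussKernel.mul (by fun_prop)).mul
      (by fun_prop)).aestronglyMeasurable measurableSet_Ioi) ?_
  filter_upwards [ae_restrict_mem measurableSet_Ioi] with v hv
  have hv0 : 0 < v := hv
  have hg := gaussKernel_pos hv0
  have hrpow_neg : v ^ (-1 / 2 : ℝ) = 1 / v * √v := by
    rw [Real.sqrt_eq_rpow, one_div v, ← Real.rpow_neg_one, ← Real.rpow_add hv0]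
    norm_num
  rw [Real.norm_of_nonneg (by positivity), Pi.add_apply, hrpow_neg, ← Real.sqrt_eq_rpow]
  calc gaussKernel v * √v * Real.exp (-a * v)
      ≤ (1 / v + 2) * √v * Real.exp (-a * v) := by gcongr; exact gaussKernel_le hv0
    _ = _ := by ring

lemma continuousOn_gaussKernel_mul_exp_sub_exp (s : ℂ) :
    ContinuousOn (fun v : ℝ ↦ (gaussKernel v : ℂ) * (Complex.exp (-2 * v) - Complex.exp (-s * v)))
      (Ioi 0) :=
  (Complex.continuous_ofReal.comp_continuousOn continuousOn_gaussKernel).mul (by fun_prop)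

lemma integrableOn_gaussKernel_mul_exp_sub_exp (hs : 0 < s.re) :
    IntegrableOn (fun v : ℝ ↦ (gaussKernel v : ℂ) *
      (Complex.exp (-2 * v) - Complex.exp (-s * v))) (Ioi 0) := by
  refine ((integrableOn_gaussKernel_mul_sqrt_mul_exp (lt_min two_pos hs)).const_mul
    √(2 * ‖s - 2‖)).mono'
    ((continuousOn_gaussKernel_mul_exp_sub_exp s).aestronglyMeasurable measurableSet_Ioi) ?_
  filter_upwards [ae_restrict_mem measurableSet_Ioi] with v hv
  exact norm_gaussKernel_mul_exp_sub_exp_le (min_le_left _ _) (min_le_right _ _) hv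

lemma image_exp_neg_mul_Ioi (ha : 0 < a) : (fun v ↦ Real.exp (-a * v)) '' Ioi 0 = Ioo 0 1 := by
  ext x
  constructor
  · rintro ⟨v, hv, rfl⟩
    exact ⟨Real.exp_pos _,
      Real.exp_lt_one_iff.mpr (mul_neg_of_neg_of_pos (neg_neg_of_pos ha) hv)⟩
  · rintro ⟨hx0, hx1⟩
    refine ⟨-Real.log x / a, div_pos (neg_pos.mpr (Real.log_neg hx0 hx1)) ha, ?_⟩
    simp only [neg_mul, mul_div_cancel₀ _ ha.ne', neg_neg, Real.exp_log hx0]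

lemma hasDerivAt_exp_neg_mul (a v : ℝ) :
    HasDerivAt (fun v ↦ Real.exp (-a * v)) (Real.exp (-a * v) * -a) v := by
  simpa using ((hasDerivAt_id v).const_mul (-a)).exp

lemma injOn_exp_neg_mul (ha : 0 < a) : InjOn (fun v ↦ Real.exp (-a * v)) (Ioi 0) :=
  (Real.exp_injective.comp (mul_right_injective₀ (neg_ne_zero.mpr ha.ne'))).injOn

lemma abs_deriv_smul_betaIntegrand (z : ℂ) (ε : ℝ) (hv : 0 < v) :
    |Real.exp (-2 * v) * -2| •
        (((Real.exp (-2 * v) : ℝ) : ℂ) ^ (z - 1) *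
          (1 - ((Real.exp (-2 * v) : ℝ) : ℂ)) ^ ((ε : ℂ) - 1)) =
      (gaussKernel v : ℂ) * ((1 - Real.exp (-2 * v)) ^ ε : ℝ) * Complex.exp (-(2 * z) * v) := by
  have hpos := one_sub_exp_neg_two_mul_pos hv
  have hbase : ((Real.exp (-2 * v) : ℝ) : ℂ) ^ (z - 1) = Complex.exp (-2 * v * (z - 1)) := by
    rw [Complex.cpow_def_of_ne_zero (by simp), ← Complex.ofReal_log (Real.exp_pos _).le,
      Real.log_exp]
    push_cast
    rfl
  have hcobase : (1 - ((Real.exp (-2 * v) : ℝ) : ℂ)) ^ ((ε : ℂ) - 1) =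
      ((1 - Real.exp (-2 * v)) ^ ε / (1 - Real.exp (-2 * v)) : ℝ) := by
    rw [← Real.rpow_sub_one hpos.ne', Complex.ofReal_cpow hpos.le]
    push_cast
    rfl
  have hexp : Complex.exp (-(2 * z) * v) =
      (Real.exp (-2 * v) : ℝ) * Complex.exp (-2 * v * (z - 1)) := by
    rw [Complex.ofReal_exp, ← Complex.exp_add]
    push_cast
    ring_nf
  rw [hbase, hcobase, hexp, abs_mul, abs_of_pos (Real.exp_pos _), abs_neg, abs_two,
    Complex.real_smul, gaussKernel]
  push_cast
  ring

lemma integrableOn_gaussKernel_mul_rpow_mul_exp {ε : ℝ} (hz : 0 < z.re) (hε : 0 < ε) :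
    IntegrableOn (fun v : ℝ ↦ (gaussKernel v : ℂ) * ((1 - Real.exp (-2 * v)) ^ ε : ℝ) *
      Complex.exp (-(2 * z) * v)) (Ioi 0) := by
  have hbeta := Complex.betaIntegral_convergent hz (v := ε) (by simpa using hε)
  rw [intervalIntegrable_iff_integrableOn_Ioo_of_le zero_le_one,
    ← image_exp_neg_mul_Ioi two_pos, integrableOn_image_iff_integrableOn_abs_deriv_smul
      measurableSet_Ioi (fun v _ ↦ (hasDerivAt_exp_neg_mul 2 v).hasDerivWithinAt)
      (injOn_exp_neg_mul two_pos)] at hbeta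
  exact hbeta.congr_fun (fun v hv ↦ abs_deriv_smul_betaIntegrand z ε hv) measurableSet_Ioi

lemma betaIntegral_eq_integral_gaussKernel (z : ℂ) (ε : ℝ) :
    Complex.betaIntegral z ε = ∫ v in Ioi (0 : ℝ), (gaussKernel v : ℂ) *
      ((1 - Real.exp (-2 * v)) ^ ε : ℝ) * Complex.exp (-(2 * z) * v) := by
  rw [Complex.betaIntegral, intervalIntegral.integral_of_le zero_le_one,
    integral_Ioc_eq_integral_Ioo, ← image_exp_neg_mul_Ioi two_pos,
    integral_image_eq_integral_abs_deriv_smul measurableSet_Ioi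
      (fun v _ ↦ (hasDerivAt_exp_neg_mul 2 v).hasDerivWithinAt) (injOn_exp_neg_mul two_pos)]
  exact setIntegral_congr_fun measurableSet_Ioi fun v hv ↦ abs_deriv_smul_betaIntegrand z ε hv

lemma hasDerivAt_Gamma_div_Gamma_add (hz : 0 < z.re) :
    HasDerivAt (fun ε : ℝ ↦ Complex.Gamma z / Complex.Gamma (z + ε)) (-Complex.digamma z) 0 := by
  have hne := Complex.Gamma_ne_zero_of_re_pos hz
  have hΓ : HasDerivAt (fun w : ℂ ↦ Complex.Gamma (z + w)) (deriv Complex.Gamma z) (0 : ℝ) := by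
    refine HasDerivAt.comp_const_add z _ ?_
    simpa using (differentiableAt_Gamma_of_re_pos hz).hasDerivAt
  have hdiv := ((hasDerivAt_const _ (Complex.Gamma z)).div hΓ (by simpa using hne)).comp_ofReal
  convert! hdiv using 1
  simp only [Complex.ofReal_zero, add_zero, Complex.digamma_def, logDeriv_apply]
  field_simp
  ring

lemma betaIntegral_ofReal_eq {ε : ℝ} (hz : 0 < z.re) (hε : 0 < ε) :
    Complex.betaIntegral z ε =
      Complex.Gamma (ε + 1) * (Complex.Gamma z / Complex.Gamma (z + ε)) / ε := by
  have hε0 : (ε : ℂ) ≠ 0 := Complex.ofReal_ne_zero.mpr hε.ne'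
  rw [Complex.betaIntegral_eq_Gamma_mul_div _ _ hz (by simpa using hε), Complex.Gamma_add_one _ hε0]
  field_simp

lemma tendsto_betaIntegral_one_sub_betaIntegral (hz : 0 < z.re) :
    Tendsto (fun ε : ℝ ↦ Complex.betaIntegral 1 ε - Complex.betaIntegral z ε)
      (nhdsWithin 0 (Ioi 0)) (nhds (Complex.digamma z + Real.eulerMascheroniConstant)) := by
  have hderiv := (hasDerivAt_Gamma_div_Gamma_add (z := 1) (by simp)).sub
    (hasDerivAt_Gamma_div_Gamma_add hz)
  have hΓ : Tendsto (fun ε : ℝ ↦ Complex.Gamma (ε + 1)) (nhdsWithin 0 (Ioi 0)) (nhds 1) := by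
    have hcont : ContinuousAt (fun ε : ℝ ↦ Complex.Gamma (ε + 1)) 0 :=
      ContinuousAt.comp (f := fun ε : ℝ ↦ (ε : ℂ) + 1)
        (differentiableAt_Gamma_of_re_pos (by simp)).continuousAt (by fun_prop)
    simpa using hcont.tendsto.mono_left nhdsWithin_le_nhds
  have hlim := hΓ.mul hderiv.tendsto_slope_zero_right
  rw [one_mul, Complex.digamma_one, neg_neg, sub_neg_eq_add, add_comm] at hlim
  refine hlim.congr' ?_
  filter_upwards [self_mem_nhdsWithin] with ε hε
  rw [betaIntegral_ofReal_eq (z := 1) (by simp) hε, betaIntegral_ofReal_eq hz hε]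
  simp only [Pi.sub_apply, zero_add, Complex.ofReal_zero, add_zero, Complex.real_smul,
    div_self (Complex.Gamma_ne_zero_of_re_pos hz), Complex.Gamma_one, div_one, sub_self, sub_zero]
  push_cast
  ring

lemma tendsto_betaIntegral_one_sub_betaIntegral_half (hs : 0 < s.re) :
    Tendsto (fun ε : ℝ ↦ Complex.betaIntegral 1 ε - Complex.betaIntegral (s / 2) ε)
      (nhdsWithin 0 (Ioi 0)) (nhds (∫ v in Ioi (0 : ℝ),
        (gaussKernel v : ℂ) * (Complex.exp (-2 * v) - Complex.exp (-s * v)))) := by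
  have hdominated : Tendsto (fun ε : ℝ ↦ ∫ v in Ioi (0 : ℝ),
      (((1 - Real.exp (-2 * v)) ^ ε : ℝ) : ℂ) *
        ((gaussKernel v : ℂ) * (Complex.exp (-2 * v) - Complex.exp (-s * v))))
      (nhdsWithin 0 (Ioi 0)) (nhds (∫ v in Ioi (0 : ℝ),
        (gaussKernel v : ℂ) * (Complex.exp (-2 * v) - Complex.exp (-s * v)))) := by
    refine tendsto_integral_filter_of_dominated_convergence _ (Eventually.of_forall fun ε ↦ ?_) ?_
      (integrableOn_gaussKernel_mul_exp_sub_exp hs).norm ?_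
    · refine ((Complex.continuous_ofReal.comp_continuousOn ?_).mul
        (continuousOn_gaussKernel_mul_exp_sub_exp s)).aestronglyMeasurable measurableSet_Ioi
      exact ContinuousOn.rpow_const (by fun_prop)
        fun v hv ↦ Or.inl (one_sub_exp_neg_two_mul_pos hv).ne'
    · filter_upwards [self_mem_nhdsWithin] with ε hε
      filter_upwards [ae_restrict_mem measurableSet_Ioi] with v hv
      have hpos := one_sub_exp_neg_two_mul_pos hv
      rw [norm_mul, Complex.norm_of_nonneg (by positivity)]
      exact mul_le_of_le_one_left (norm_nonneg _)
        (Real.rpow_le_one hpos.le (by linarith [Real.exp_pos (-2 * v)]) (mem_Ioi.mp hε).le)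
    · filter_upwards [ae_restrict_mem measurableSet_Ioi] with v hv
      have hrpow : ContinuousAt (fun ε : ℝ ↦ (1 - Real.exp (-2 * v)) ^ ε) 0 :=
        Real.continuousAt_const_rpow (one_sub_exp_neg_two_mul_pos hv).ne'
      simpa using ((Complex.continuous_ofReal.tendsto _).comp
        (hrpow.tendsto.mono_left nhdsWithin_le_nhds)).mul_const _
  refine hdominated.congr' ?_
  filter_upwards [self_mem_nhdsWithin] with ε hε
  rw [betaIntegral_eq_integral_gaussKernel, betaIntegral_eq_integral_gaussKernel, ← integral_sub
    (integrableOn_gaussKernel_mul_rpow_mul_exp (z := 1) (by simp) hε)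
    (integrableOn_gaussKernel_mul_rpow_mul_exp (by simpa using hs) hε)]
  refine setIntegral_congr_fun measurableSet_Ioi fun v _ ↦ ?_
  simp only [mul_one, mul_div_cancel₀ s (two_ne_zero' ℂ)]
  ring

lemma digamma_half_eq_integral (hs : 0 < s.re) :
    Complex.digamma (s / 2) = -Real.eulerMascheroniConstant +
      ∫ v in Ioi (0 : ℝ), (gaussKernel v : ℂ) * (Complex.exp (-2 * v) - Complex.exp (-s * v)) := by
  rw [neg_add_eq_sub, eq_sub_iff_add_eq]
  exact tendsto_nhds_unique (tendsto_betaIntegral_one_sub_betaIntegral (by simpa using hs))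
    (tendsto_betaIntegral_one_sub_betaIntegral_half hs)

end GaussDigamma

section Binet

/-! ### Binet's formula for the digamma function -/

open Set

variable {s : ℂ} {v : ℝ}

lemma integral_exp_neg_mul_Ioi (hs : 0 < s.re) :
    ∫ v in Ioi (0 : ℝ), Complex.exp (-s * v) = 1 / s := by
  rw [integral_exp_mul_complex_Ioi (by simpa using hs) 0]
  simp

lemma integrableOn_exp_neg_sub_exp_neg_mul_div (hs : 0 < s.re) :
    IntegrableOn (fun v : ℝ ↦ (Complex.exp (-v) - Complex.exp (-s * v)) / v) (Ioi 0) := by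
  set m := min 1 s.re
  refine ((exp_neg_integrableOn_Ioi 0 (lt_min one_pos hs : 0 < m)).const_mul ‖s - 1‖).mono' ?_ ?_
  · refine ContinuousOn.aestronglyMeasurable ?_ measurableSet_Ioi
    exact ContinuousOn.div (by fun_prop) (by fun_prop) fun v hv ↦
      Complex.ofReal_ne_zero.mpr (mem_Ioi.mp hv).ne'
  · filter_upwards [ae_restrict_mem measurableSet_Ioi] with v hv
    have hv0 : 0 < v := hv
    have hre_one : (-(v : ℂ)).re ≤ -m * v := by
      rw [Complex.neg_re, Complex.ofReal_re]
      nlinarith [min_le_left 1 s.re]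
    have hre_s : (-s * (v : ℂ)).re ≤ -m * v := by
      rw [Complex.re_mul_ofReal, Complex.neg_re]
      gcongr
      exact min_le_right _ _
    rw [norm_div, Complex.norm_of_nonneg hv0.le, div_le_iff₀ hv0]
    refine (norm_exp_sub_exp_le_of_re_le hre_one hre_s).trans_eq ?_
    rw [show -(v : ℂ) - -s * v = (s - 1) * v by ring, norm_mul, Complex.norm_of_nonneg hv0.le]
    ring

lemma min_one_re_le_re_one_add_mul (s : ℂ) {t : ℝ} (ht : t ∈ Icc (0 : ℝ) 1) :
    min 1 s.re ≤ (1 + t * (s - 1)).re := by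
  have hre : (1 + (t : ℂ) * (s - 1)).re = (1 - t) * 1 + t * s.re := by
    simp only [Complex.add_re, Complex.one_re, Complex.re_ofReal_mul, Complex.sub_re]
    ring
  rw [hre]
  nlinarith [min_le_left 1 s.re, min_le_right 1 s.re, ht.1, ht.2]

lemma hasDerivAt_one_add_ofReal_mul (c : ℂ) (t : ℝ) :
    HasDerivAt (fun t : ℝ ↦ 1 + (t : ℂ) * c) c t := by
  simpa using (Complex.ofRealCLM.hasDerivAt.mul_const c).const_add 1

lemma integral_exp_neg_one_add_mul (s : ℂ) (hv : v ≠ 0) :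
    ∫ t in Ioc (0 : ℝ) 1, (s - 1) * Complex.exp (-(1 + t * (s - 1)) * v) =
      (Complex.exp (-v) - Complex.exp (-s * v)) / v := by
  have hv0 : (v : ℂ) ≠ 0 := Complex.ofReal_ne_zero.mpr hv
  have hderiv : ∀ t ∈ uIcc (0 : ℝ) 1,
      HasDerivAt (fun t : ℝ ↦ -Complex.exp (-(1 + t * (s - 1)) * v) / v)
        ((s - 1) * Complex.exp (-(1 + t * (s - 1)) * v)) t := by
    intro t _
    convert! ((hasDerivAt_one_add_ofReal_mul (s - 1) t).neg.mul_const
      (v : ℂ)).cexp.neg.div_const (v : ℂ) using 1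
    simp only [Pi.neg_apply]
    field_simp
  rw [← intervalIntegral.integral_of_le zero_le_one,
    intervalIntegral.integral_eq_sub_of_hasDerivAt hderiv
      (Continuous.intervalIntegrable (by fun_prop) _ _)]
  simp only [Complex.ofReal_one, Complex.ofReal_zero, one_mul, zero_mul, add_zero]
  ring_nf

lemma integrable_exp_neg_one_add_mul_prod (hs : 0 < s.re) :
    Integrable (fun p : ℝ × ℝ ↦ (s - 1) * Complex.exp (-(1 + p.2 * (s - 1)) * p.1))
      ((volume.restrict (Ioi (0 : ℝ))).prod (volume.restrict (Ioc (0 : ℝ) 1))) := by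
  have hdom := ((exp_neg_integrableOn_Ioi 0 (lt_min one_pos hs)).const_mul ‖s - 1‖).mul_prod
    (integrable_const (1 : ℝ) (μ := volume.restrict (Ioc (0 : ℝ) 1)))
  refine hdom.mono' (Continuous.aestronglyMeasurable (by fun_prop)) ?_
  rw [Measure.prod_restrict]
  filter_upwards [ae_restrict_mem (measurableSet_Ioi.prod measurableSet_Ioc)] with p hp
  rw [norm_mul, Complex.norm_exp, mul_one, Complex.re_mul_ofReal, Complex.neg_re]
  have hv := mem_Ioi.mp hp.1
  gcongr
  exact min_one_re_le_re_one_add_mul s (Ioc_subset_Icc_self hp.2)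

lemma integral_sub_one_div_one_add_mul_eq_log (hs : 0 < s.re) :
    ∫ t in (0 : ℝ)..1, (s - 1) / (1 + t * (s - 1)) = Complex.log s := by
  have hpos : ∀ t ∈ uIcc (0 : ℝ) 1, 0 < (1 + (t : ℂ) * (s - 1)).re := fun t ht ↦
    (lt_min one_pos hs).trans_le
      (min_one_re_le_re_one_add_mul s (uIcc_of_le (zero_le_one' ℝ) ▸ ht))
  rw [intervalIntegral.integral_eq_sub_of_hasDerivAt fun t ht ↦
    (hasDerivAt_one_add_ofReal_mul (s - 1) t).clog_real (Or.inl (hpos t ht))]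
  · simp
  · exact (ContinuousOn.div (by fun_prop) (by fun_prop) fun t ht ↦
      Complex.ne_zero_of_re_pos (hpos t ht)).intervalIntegrable

lemma integral_exp_neg_sub_exp_neg_mul_div (hs : 0 < s.re) :
    ∫ v in Ioi (0 : ℝ), (Complex.exp (-v) - Complex.exp (-s * v)) / v = Complex.log s := by
  calc ∫ v in Ioi (0 : ℝ), (Complex.exp (-v) - Complex.exp (-s * v)) / v
      = ∫ v in Ioi (0 : ℝ), ∫ t in Ioc (0 : ℝ) 1,
          (s - 1) * Complex.exp (-(1 + t * (s - 1)) * v) :=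
        setIntegral_congr_fun measurableSet_Ioi fun v hv ↦
          (integral_exp_neg_one_add_mul s (mem_Ioi.mp hv).ne').symm
    _ = ∫ t in Ioc (0 : ℝ) 1, ∫ v in Ioi (0 : ℝ),
          (s - 1) * Complex.exp (-(1 + t * (s - 1)) * v) :=
        integral_integral_swap (integrable_exp_neg_one_add_mul_prod hs)
    _ = ∫ t in Ioc (0 : ℝ) 1, (s - 1) / (1 + t * (s - 1)) := by
        refine setIntegral_congr_fun measurableSet_Ioc fun t ht ↦ ?_
        have hpos := (lt_min one_pos hs).trans_le
          (min_one_re_le_re_one_add_mul s (Ioc_subset_Icc_self ht))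
        rw [integral_const_mul, integral_exp_neg_mul_Ioi hpos, mul_one_div]
    _ = Complex.log s := by
        rw [← intervalIntegral.integral_of_le zero_le_one,
          integral_sub_one_div_one_add_mul_eq_log hs]

/-- The kernel `2 / (1 - e⁻²ᵛ) - 1 / v` of Binet's formula for `ψ(s/2)`. -/
def binetKernel (v : ℝ) : ℝ := gaussKernel v - 1 / v

lemma binetKernel_le_two (hv : 0 < v) : binetKernel v ≤ 2 :=
  sub_le_iff_le_add'.mpr (gaussKernel_le hv)

lemma binetKernel_nonneg (hv : 0 < v) : 0 ≤ binetKernel v := by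
  rw [binetKernel, sub_nonneg, gaussKernel, div_le_div_iff₀ hv (one_sub_exp_neg_two_mul_pos hv)]
  linarith [Real.add_one_le_exp (-2 * v)]

lemma continuousOn_binetKernel : ContinuousOn binetKernel (Ioi 0) :=
  continuousOn_gaussKernel.sub
    (continuousOn_const.div continuousOn_id fun _ hv ↦ (mem_Ioi.mp hv).ne')

lemma hasDerivAt_binetKernel (hv : 0 < v) :
    HasDerivAt binetKernel
      (1 / v ^ 2 - 4 * Real.exp (-2 * v) / (1 - Real.exp (-2 * v)) ^ 2) v := by
  have hgauss := (hasDerivAt_const v (2 : ℝ)).div ((hasDerivAt_exp_neg_mul 2 v).const_sub 1)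
    (one_sub_exp_neg_two_mul_pos hv).ne'
  convert! hgauss.sub ((hasDerivAt_const v (1 : ℝ)).div (hasDerivAt_id v) hv.ne') using 1
  simp only [id]
  ring

lemma two_mul_mul_exp_neg_le (hv : 0 ≤ v) : 2 * v * Real.exp (-v) ≤ 1 - Real.exp (-2 * v) := by
  have hsinh := Real.self_le_sinh_iff.mpr hv
  have hexp : Real.sinh v * (2 * Real.exp (-v)) = 1 - Real.exp (-2 * v) := by
    rw [Real.sinh_eq, div_mul_eq_mul_div, sub_mul, mul_left_comm, ← Real.exp_add, mul_left_comm,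
      ← Real.exp_add]
    ring_nf
    simp
  rw [← hexp]
  nlinarith [Real.exp_pos (-v)]

lemma monotoneOn_binetKernel : MonotoneOn binetKernel (Ioi 0) := by
  refine monotoneOn_of_hasDerivWithinAt_nonneg (convex_Ioi 0) continuousOn_binetKernel
    (fun v hv ↦ (hasDerivAt_binetKernel (interior_subset hv)).hasDerivWithinAt) fun v hv ↦ ?_
  have hv0 : 0 < v := interior_subset hv
  have hpos := one_sub_exp_neg_two_mul_pos hv0
  have hsq : (2 * v * Real.exp (-v)) ^ 2 ≤ (1 - Real.exp (-2 * v)) ^ 2 := by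
    gcongr
    exact two_mul_mul_exp_neg_le hv0.le
  rw [sub_nonneg, div_le_div_iff₀ (by positivity) (by positivity)]
  calc 4 * Real.exp (-2 * v) * v ^ 2 = (2 * v * Real.exp (-v)) ^ 2 := by
        rw [mul_pow, ← Real.exp_nat_mul]
        push_cast
        ring_nf
    _ ≤ 1 * (1 - Real.exp (-2 * v)) ^ 2 := by rwa [one_mul]

lemma norm_binetKernel_mul_exp_le (s : ℂ) (hv : 0 < v) :
    ‖(binetKernel v : ℂ) * Complex.exp (-s * v)‖ ≤ 2 * Real.exp (-s.re * v) := by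
  rw [norm_mul, Complex.norm_exp, Complex.norm_of_nonneg (binetKernel_nonneg hv),
    Complex.re_mul_ofReal, Complex.neg_re]
  gcongr
  exact binetKernel_le_two hv

lemma integrableOn_binetKernel_mul_exp (hs : 0 < s.re) :
    IntegrableOn (fun v : ℝ ↦ (binetKernel v : ℂ) * Complex.exp (-s * v)) (Ioi 0) := by
  refine ((exp_neg_integrableOn_Ioi 0 hs).const_mul 2).mono'
    (((Complex.continuous_ofReal.comp_continuousOn continuousOn_binetKernel).mul
      (by fun_prop)).aestronglyMeasurable measurableSet_Ioi) ?_
  filter_upwards [ae_restrict_mem measurableSet_Ioi] with v hv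
  exact norm_binetKernel_mul_exp_le s hv

lemma norm_integral_binetKernel_mul_exp_le (hs : 0 < s.re) :
    ‖∫ v in Ioi (0 : ℝ), (binetKernel v : ℂ) * Complex.exp (-s * v)‖ ≤ 2 / s.re := by
  refine (norm_integral_le_of_norm_le ((exp_neg_integrableOn_Ioi 0 hs).const_mul 2)
    ((ae_restrict_mem measurableSet_Ioi).mono fun v hv ↦
      norm_binetKernel_mul_exp_le s hv)).trans_eq ?_
  rw [integral_const_mul, integral_exp_mul_Ioi (neg_neg_of_pos hs)]
  simp [div_eq_mul_inv]

lemma digamma_half_eq_log_add_integral_sub_integral (hs : 0 < s.re) :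
    Complex.digamma (s / 2) = Complex.log s -
      (∫ v in Ioi (0 : ℝ), (binetKernel v : ℂ) * Complex.exp (-s * v)) +
      (-Real.eulerMascheroniConstant + ∫ v in Ioi (0 : ℝ),
        ((gaussKernel v : ℂ) * Complex.exp (-2 * v) - Complex.exp (-v) / v)) := by
  have hgauss := integrableOn_gaussKernel_mul_exp_sub_exp hs
  have hfrullani := integrableOn_exp_neg_sub_exp_neg_mul_div hs
  have hbinet := integrableOn_binetKernel_mul_exp hs
  have hdiff : IntegrableOn (fun v : ℝ ↦
      (gaussKernel v : ℂ) * (Complex.exp (-2 * v) - Complex.exp (-s * v)) -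
        (Complex.exp (-v) - Complex.exp (-s * v)) / v) (Ioi 0) := hgauss.sub hfrullani
  have hsplit : ∀ v : ℝ, (gaussKernel v : ℂ) * Complex.exp (-2 * v) - Complex.exp (-v) / v =
      (gaussKernel v : ℂ) * (Complex.exp (-2 * v) - Complex.exp (-s * v)) -
        (Complex.exp (-v) - Complex.exp (-s * v)) / v +
        (binetKernel v : ℂ) * Complex.exp (-s * v) := by
    intro v
    rw [binetKernel]
    push_cast
    ring
  simp_rw [hsplit]
  rw [integral_add hdiff hbinet, integral_sub hgauss hfrullani,
    integral_exp_neg_sub_exp_neg_mul_div hs, digamma_half_eq_integral hs]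
  ring

lemma tendsto_digamma_natCast_succ_sub_log :
    Tendsto (fun n : ℕ ↦ Complex.digamma (n + 1) - Real.log (n + 1)) atTop (nhds 0) := by
  have hdigamma : ∀ n : ℕ, Complex.digamma (n + 1) - Real.log (n + 1) =
      ((harmonic n - Real.log (n + 1) - Real.eulerMascheroniConstant : ℝ) : ℂ) := by
    intro n
    have hfactorial : (n.factorial : ℂ) ≠ 0 := mod_cast n.factorial_ne_zero
    rw [Complex.digamma_def, logDeriv_apply, Complex.deriv_Gamma_nat,
      Complex.Gamma_nat_eq_factorial, mul_div_cancel_left₀ _ hfactorial]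
    push_cast
    ring
  simp_rw [hdigamma]
  simpa only [sub_self, Complex.ofReal_zero, Function.comp_def] using
    (Complex.continuous_ofReal.tendsto _).comp
      (Real.tendsto_harmonic_sub_log_add_one.sub_const Real.eulerMascheroniConstant)

-- The constant in the preceding formula is found by letting `s = 2 (n + 1)` tend to infinity.
lemma neg_eulerMascheroniConstant_add_integral_eq_neg_log_two :
    (-Real.eulerMascheroniConstant + ∫ v in Ioi (0 : ℝ),
      ((gaussKernel v : ℂ) * Complex.exp (-2 * v) - Complex.exp (-v) / v)) = -Real.log 2 := by
  set c : ℂ := -Real.eulerMascheroniConstant + ∫ v in Ioi (0 : ℝ),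
    ((gaussKernel v : ℂ) * Complex.exp (-2 * v) - Complex.exp (-v) / v)
  have hre : ∀ n : ℕ, ((2 : ℂ) * (n + 1)).re = 2 * (n + 1) := fun n ↦ by simp
  have hpos : ∀ n : ℕ, 0 < ((2 : ℂ) * (n + 1)).re := fun n ↦ by rw [hre]; positivity
  have hdecay : Tendsto (fun n : ℕ ↦ ∫ v in Ioi (0 : ℝ),
      (binetKernel v : ℂ) * Complex.exp (-(2 * (n + 1)) * v)) atTop (nhds 0) := by
    refine squeeze_zero_norm (fun n ↦ ?_) tendsto_one_div_add_atTop_nhds_zero_nat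
    refine (norm_integral_binetKernel_mul_exp_le (hpos n)).trans_eq ?_
    rw [hre]
    field_simp
  have hconst : ∀ n : ℕ, (Complex.digamma (n + 1) - Real.log (n + 1)) - Real.log 2 +
      (∫ v in Ioi (0 : ℝ), (binetKernel v : ℂ) * Complex.exp (-(2 * (n + 1)) * v)) = c := by
    intro n
    have hformula := digamma_half_eq_log_add_integral_sub_integral (hpos n)
    have hlog : Complex.log (2 * (n + 1)) = Real.log (n + 1) + Real.log 2 := by
      rw [← Complex.ofReal_add, ← Real.log_mul (by positivity) two_ne_zero,
        Complex.ofReal_log (by positivity), mul_comm]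
      push_cast
      rfl
    rw [mul_div_cancel_left₀ _ (two_ne_zero' ℂ), hlog] at hformula
    rw [hformula]
    ring
  have hlim := (tendsto_digamma_natCast_succ_sub_log.sub_const (Real.log 2 : ℂ)).add hdecay
  simp only [hconst, zero_sub, add_zero] at hlim
  exact tendsto_nhds_unique tendsto_const_nhds hlim

lemma digamma_half_eq_log_sub_integral (hs : 0 < s.re) :
    Complex.digamma (s / 2) = Complex.log s - Real.log 2 -
      ∫ v in Ioi (0 : ℝ), (binetKernel v : ℂ) * Complex.exp (-s * v) := by
  rw [digamma_half_eq_log_add_integral_sub_integral hs,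
    neg_eulerMascheroniConstant_add_integral_eq_neg_log_two]
  ring

end Binet

section OscillatoryIntegrals

/-! ### Laplace transforms of bounded antitone functions -/

open Set

variable {f : ℝ → ℝ} {B h : ℝ}

lemma setIntegral_Ioi_zero_comp_add_right {E : Type*} [NormedAddCommGroup E] [NormedSpace ℝ E]
    (g : ℝ → E) (h : ℝ) : ∫ v in Ioi (0 : ℝ), g (v + h) = ∫ v in Ioi h, g v := by
  have hshift := (measurePreserving_add_right volume h).setIntegral_preimage_emb
    (measurableEmbedding_addRight h) g (Ioi h)
  rwa [preimage_add_const_Ioi, sub_self] at hshift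

lemma integrableOn_Ioi_zero_comp_add_right (hf : IntegrableOn f (Ioi 0)) (hh : 0 ≤ h) :
    IntegrableOn (fun v ↦ f (v + h)) (Ioi 0) := by
  have hshift := ((measurePreserving_add_right volume h).integrableOn_comp_preimage
    (measurableEmbedding_addRight h)).mpr (hf.mono_set (Ioi_subset_Ioi hh))
  rwa [preimage_add_const_Ioi, sub_self] at hshift

lemma setIntegral_Ioi_zero_eq_Ioc_add_Ioi {E : Type*} [NormedAddCommGroup E] [NormedSpace ℝ E]
    {g : ℝ → E} (hg : IntegrableOn g (Ioi 0)) (hh : 0 ≤ h) :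
    ∫ v in Ioi (0 : ℝ), g v = (∫ v in Ioc 0 h, g v) + ∫ v in Ioi h, g v := by
  rw [← setIntegral_union (Ioc_disjoint_Ioi le_rfl) measurableSet_Ioi
    (hg.mono_set Ioc_subset_Ioi_self) (hg.mono_set (Ioi_subset_Ioi hh)),
    Ioc_union_Ioi_eq_Ioi hh]

lemma integrableOn_mul_exp_neg_mul_I (hf : IntegrableOn f (Ioi 0)) (τ : ℝ) :
    IntegrableOn (fun v : ℝ ↦ (f v : ℂ) * Complex.exp (-(τ * v * Complex.I))) (Ioi 0) := by
  refine Integrable.mul_bdd (c := 1) hf.ofReal (by fun_prop) (Eventually.of_forall fun v ↦ ?_)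
  simp [Complex.norm_exp]

-- Shifting by half a period changes the sign of the exponential.
lemma two_mul_integral_mul_exp_neg_mul_I {τ : ℝ} (hτ : 0 < τ) (hf : IntegrableOn f (Ioi 0)) :
    2 * ∫ v in Ioi (0 : ℝ), (f v : ℂ) * Complex.exp (-(τ * v * Complex.I)) =
      (∫ v in Ioc 0 (π / τ), (f v : ℂ) * Complex.exp (-(τ * v * Complex.I))) +
      ∫ v in Ioi (0 : ℝ),
        ((f v - f (v + π / τ) : ℝ) : ℂ) * Complex.exp (-(τ * v * Complex.I)) := by
  have hh : 0 ≤ π / τ := by positivity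
  have hshift : ∀ v : ℝ, Complex.exp (-(τ * (v + π / τ : ℝ) * Complex.I)) =
      -Complex.exp (-(τ * v * Complex.I)) := by
    intro v
    have hτ0 : (τ : ℂ) ≠ 0 := Complex.ofReal_ne_zero.mpr hτ.ne'
    rw [← Complex.exp_sub_pi_mul_I]
    push_cast
    field_simp
    ring_nf
  have htail : ∫ v in Ioi (π / τ), (f v : ℂ) * Complex.exp (-(τ * v * Complex.I)) =
      -∫ v in Ioi (0 : ℝ), (f (v + π / τ) : ℂ) * Complex.exp (-(τ * v * Complex.I)) := by
    rw [← setIntegral_Ioi_zero_comp_add_right, ← integral_neg]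
    simp_rw [hshift, mul_neg]
  have hintegrable := integrableOn_mul_exp_neg_mul_I hf τ
  simp_rw [Complex.ofReal_sub, sub_mul]
  rw [integral_sub hintegrable (integrableOn_mul_exp_neg_mul_I
    (integrableOn_Ioi_zero_comp_add_right hf hh) τ)]
  linear_combination setIntegral_Ioi_zero_eq_Ioc_add_Ioi hintegrable hh + htail

lemma norm_integral_mul_exp_neg_mul_I_le {τ : ℝ} (hτ : 0 < τ) (hanti : AntitoneOn f (Ioi 0))
    (hf_nonneg : ∀ v ∈ Ioi (0 : ℝ), 0 ≤ f v) (hf_le : ∀ v ∈ Ioi (0 : ℝ), f v ≤ B)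
    (hf : IntegrableOn f (Ioi 0)) :
    ‖∫ v in Ioi (0 : ℝ), (f v : ℂ) * Complex.exp (-(τ * v * Complex.I))‖ ≤ π * B / τ := by
  have hh : 0 ≤ π / τ := by positivity
  have hnorm_exp : ∀ v : ℝ, ‖Complex.exp (-(τ * v * Complex.I))‖ = 1 := fun v ↦ by
    simp [Complex.norm_exp]
  have hhead : ∫ v in Ioc 0 (π / τ), f v ≤ B * (π / τ) := by
    refine (setIntegral_mono_on (hf.mono_set Ioc_subset_Ioi_self) (integrableOn_const (by simp))
      measurableSet_Ioc fun v hv ↦ hf_le v hv.1).trans_eq ?_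
    simp [hh, mul_comm]
  have hnorm_head : ‖∫ v in Ioc 0 (π / τ), (f v : ℂ) * Complex.exp (-(τ * v * Complex.I))‖ ≤
      ∫ v in Ioc 0 (π / τ), f v := by
    refine norm_integral_le_of_norm_le (hf.mono_set Ioc_subset_Ioi_self) ?_
    filter_upwards [ae_restrict_mem measurableSet_Ioc] with v hv
    rw [norm_mul, hnorm_exp, mul_one, Complex.norm_of_nonneg (hf_nonneg v hv.1)]
  have hf_shift := integrableOn_Ioi_zero_comp_add_right hf hh
  have hnorm_tail : ‖∫ v in Ioi (0 : ℝ),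
      ((f v - f (v + π / τ) : ℝ) : ℂ) * Complex.exp (-(τ * v * Complex.I))‖ ≤
      ∫ v in Ioc 0 (π / τ), f v := by
    have htotal : ∫ v in Ioi (0 : ℝ), (f v - f (v + π / τ)) = ∫ v in Ioc 0 (π / τ), f v := by
      rw [integral_sub hf hf_shift, setIntegral_Ioi_zero_comp_add_right,
        setIntegral_Ioi_zero_eq_Ioc_add_Ioi hf hh, add_sub_cancel_right]
    rw [← htotal]
    refine norm_integral_le_of_norm_le (hf.sub hf_shift) ?_
    filter_upwards [ae_restrict_mem measurableSet_Ioi] with v hv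
    have hv' : v + π / τ ∈ Ioi (0 : ℝ) := add_pos_of_pos_of_nonneg hv hh
    have hdiff : 0 ≤ f v - f (v + π / τ) := sub_nonneg.mpr (hanti hv hv' (by linarith))
    rw [norm_mul, hnorm_exp, mul_one, Complex.norm_of_nonneg hdiff]
  have hdouble := norm_add_le_of_le hnorm_head hnorm_tail
  rw [← two_mul_integral_mul_exp_neg_mul_I hτ hf, norm_mul, Complex.norm_ofNat] at hdouble
  rw [mul_div_right_comm, mul_comm]
  linarith

lemma integrableOn_mul_exp_neg_mul_of_antitoneOn {σ : ℝ} (hσ : 0 < σ)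
    (hanti : AntitoneOn f (Ioi 0)) (hf_nonneg : ∀ v ∈ Ioi (0 : ℝ), 0 ≤ f v)
    (hf_le : ∀ v ∈ Ioi (0 : ℝ), f v ≤ B) :
    IntegrableOn (fun v ↦ f v * Real.exp (-σ * v)) (Ioi 0) := by
  refine ((exp_neg_integrableOn_Ioi 0 hσ).const_mul B).mono' (AEStronglyMeasurable.mul
    (aemeasurable_restrict_of_antitoneOn measurableSet_Ioi hanti).aestronglyMeasurable
    (by fun_prop)) ?_
  filter_upwards [ae_restrict_mem measurableSet_Ioi] with v hv
  rw [norm_mul, Real.norm_of_nonneg (hf_nonneg v hv), Real.norm_of_nonneg (Real.exp_pos _).le]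
  exact mul_le_mul_of_nonneg_right (hf_le v hv) (Real.exp_pos _).le

lemma ofReal_mul_exp_neg_mul_eq (f : ℝ → ℝ) (s : ℂ) (v : ℝ) :
    (f v : ℂ) * Complex.exp (-s * v) =
      ((f v * Real.exp (-s.re * v) : ℝ) : ℂ) * Complex.exp (-(s.im * v * Complex.I)) := by
  push_cast
  rw [mul_assoc, ← Complex.exp_add]
  congr 2
  linear_combination (-v : ℂ) * (Complex.re_add_im s).symm

lemma integrableOn_antitone_mul_exp {s : ℂ} (hs : 0 < s.re) (hanti : AntitoneOn f (Ioi 0))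
    (hf_nonneg : ∀ v ∈ Ioi (0 : ℝ), 0 ≤ f v) (hf_le : ∀ v ∈ Ioi (0 : ℝ), f v ≤ B) :
    IntegrableOn (fun v : ℝ ↦ (f v : ℂ) * Complex.exp (-s * v)) (Ioi 0) := by
  simp_rw [ofReal_mul_exp_neg_mul_eq]
  exact integrableOn_mul_exp_neg_mul_I
    (integrableOn_mul_exp_neg_mul_of_antitoneOn hs hanti hf_nonneg hf_le) s.im

lemma norm_integral_antitone_mul_exp_le {s : ℂ} (hs : 0 < s.re) (him : 0 < s.im)
    (hanti : AntitoneOn f (Ioi 0)) (hf_nonneg : ∀ v ∈ Ioi (0 : ℝ), 0 ≤ f v)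
    (hf_le : ∀ v ∈ Ioi (0 : ℝ), f v ≤ B) :
    ‖∫ v in Ioi (0 : ℝ), (f v : ℂ) * Complex.exp (-s * v)‖ ≤ π * B / s.im := by
  simp_rw [ofReal_mul_exp_neg_mul_eq]
  refine norm_integral_mul_exp_neg_mul_I_le him (fun a ha b hb hab ↦ ?_)
    (fun v hv ↦ mul_nonneg (hf_nonneg v hv) (Real.exp_pos _).le) (fun v hv ↦ ?_)
    (integrableOn_mul_exp_neg_mul_of_antitoneOn hs hanti hf_nonneg hf_le)
  · refine mul_le_mul (hanti ha hb hab) (Real.exp_le_exp.mpr ?_) (Real.exp_pos _).le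
      (hf_nonneg a ha)
    exact mul_le_mul_of_nonpos_left hab (neg_nonpos.mpr hs.le)
  · refine (mul_le_of_le_one_right (hf_nonneg v hv) (Real.exp_le_one_iff.mpr ?_)).trans
      (hf_le v hv)
    exact mul_nonpos_of_nonpos_of_nonneg (neg_nonpos.mpr hs.le) (mem_Ioi.mp hv).le

end OscillatoryIntegrals

section TruncatedDigamma

/-! ### The Gauss integral with a truncated exponential -/

open Set

variable {L : ℝ}

/-- The triangular cutoff `(1 - v / L)₊` on `[0, ∞)`, the weight attached to `v = log n` in the
sum over prime powers. -/
def triangle (L v : ℝ) : ℝ := max (1 - v / L) 0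

lemma triangle_nonneg (L v : ℝ) : 0 ≤ triangle L v := le_max_right _ _

lemma triangle_zero (L : ℝ) : triangle L 0 = 1 := by simp [triangle]

lemma antitone_triangle (hL : 0 ≤ L) : Antitone (triangle L) := by
  intro a b hab
  unfold triangle
  gcongr

lemma triangle_le_one (hL : 0 ≤ L) {v : ℝ} (hv : 0 ≤ v) : triangle L v ≤ 1 :=
  (antitone_triangle hL hv).trans_eq (triangle_zero L)

lemma continuous_triangle (L : ℝ) : Continuous (triangle L) := by
  unfold triangle
  fun_prop

lemma triangle_eq_zero_of_le (hL : 0 < L) {v : ℝ} (hv : L ≤ v) : triangle L v = 0 :=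
  max_eq_right (sub_nonpos.mpr ((one_le_div hL).mpr hv))

lemma triangle_eq_of_le (hL : 0 < L) {v : ℝ} (hv : v ≤ L) : triangle L v = 1 - v / L :=
  max_eq_left (sub_nonneg.mpr ((div_le_one hL).mpr hv))

lemma one_sub_triangle_div_eq_min (hL : 0 < L) {v : ℝ} (hv : 0 < v) :
    (1 - triangle L v) / v = min (1 / L) (1 / v) := by
  rcases le_total v L with hvL | hLv
  · rw [triangle_eq_of_le hL hvL, min_eq_left (one_div_le_one_div_of_le hv hvL)]
    field_simp
    ring
  · rw [triangle_eq_zero_of_le hL hLv, min_eq_right (one_div_le_one_div_of_le hL hLv), sub_zero]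

lemma antitoneOn_min_one_div (L : ℝ) : AntitoneOn (fun v ↦ min (1 / L) (1 / v)) (Ioi 0) :=
  fun _ ha _ _ hab ↦ min_le_min le_rfl (one_div_le_one_div_of_le ha hab)

lemma antitoneOn_triangle_mul_two_sub_binetKernel (hL : 0 ≤ L) :
    AntitoneOn (fun v ↦ triangle L v * (2 - binetKernel v)) (Ioi 0) := fun a ha _ hb hab ↦
  mul_le_mul (antitone_triangle hL hab) (sub_le_sub_left (monotoneOn_binetKernel ha hb hab) 2)
    (sub_nonneg.mpr (binetKernel_le_two hb)) (triangle_nonneg L a)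

lemma triangle_mul_two_sub_binetKernel_le_two (hL : 0 ≤ L) {v : ℝ} (hv : 0 < v) :
    triangle L v * (2 - binetKernel v) ≤ 2 :=
  (mul_le_of_le_one_left (sub_nonneg.mpr (binetKernel_le_two hv))
    (triangle_le_one hL hv.le)).trans (sub_le_self 2 (binetKernel_nonneg hv))

-- Writing `gaussKernel v = 1 / v + 2 - (2 - binetKernel v)` makes every weight antitone.
lemma gaussKernel_mul_exp_sub_triangle_mul_exp_eq (hL : 0 < L) (s : ℂ) {v : ℝ} (hv : 0 < v) :
    (gaussKernel v : ℂ) * (Complex.exp (-2 * v) - triangle L v * Complex.exp (-s * v)) =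
      (gaussKernel v : ℂ) * (Complex.exp (-2 * v) - Complex.exp (-s * v)) +
      (binetKernel v : ℂ) * Complex.exp (-s * v) +
      ((min (1 / L) (1 / v) : ℝ) : ℂ) * Complex.exp (-s * v) -
      2 * (triangle L v * Complex.exp (-s * v)) +
      ((triangle L v * (2 - binetKernel v) : ℝ) : ℂ) * Complex.exp (-s * v) := by
  have hv0 : (v : ℂ) ≠ 0 := Complex.ofReal_ne_zero.mpr hv.ne'
  rw [← one_sub_triangle_div_eq_min hL hv, binetKernel]
  push_cast
  field_simp
  ring

lemma integrableOn_min_one_div_mul_exp (hL : 0 < L) {s : ℂ} (hs : 0 < s.re) :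
    IntegrableOn (fun v : ℝ ↦ ((min (1 / L) (1 / v) : ℝ) : ℂ) * Complex.exp (-s * v)) (Ioi 0) :=
  integrableOn_antitone_mul_exp hs (antitoneOn_min_one_div L)
    (fun _ hv ↦ le_min (by positivity) (one_div_pos.mpr hv).le) fun _ _ ↦ min_le_left _ _

lemma integrableOn_triangle_mul_exp (hL : 0 < L) {s : ℂ} (hs : 0 < s.re) :
    IntegrableOn (fun v : ℝ ↦ (triangle L v : ℂ) * Complex.exp (-s * v)) (Ioi 0) :=
  integrableOn_antitone_mul_exp hs ((antitone_triangle hL.le).antitoneOn _)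
    (fun v _ ↦ triangle_nonneg L v) fun _ hv ↦ triangle_le_one hL.le (mem_Ioi.mp hv).le

lemma integrableOn_triangle_mul_two_sub_binetKernel_mul_exp (hL : 0 < L) {s : ℂ}
    (hs : 0 < s.re) :
    IntegrableOn (fun v : ℝ ↦
      ((triangle L v * (2 - binetKernel v) : ℝ) : ℂ) * Complex.exp (-s * v)) (Ioi 0) :=
  integrableOn_antitone_mul_exp hs (antitoneOn_triangle_mul_two_sub_binetKernel hL.le)
    (fun v hv ↦ mul_nonneg (triangle_nonneg L v) (sub_nonneg.mpr (binetKernel_le_two hv)))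
    fun _ hv ↦ triangle_mul_two_sub_binetKernel_le_two hL.le hv

lemma truncated_gauss_integral_sub_log_eq (hL : 0 < L) {s : ℂ} (hs : 0 < s.re) :
    -Real.eulerMascheroniConstant + (∫ v in Ioi (0 : ℝ), (gaussKernel v : ℂ) *
        (Complex.exp (-2 * v) - triangle L v * Complex.exp (-s * v))) -
      (Complex.log s - Real.log 2) =
      (∫ v in Ioi (0 : ℝ), ((min (1 / L) (1 / v) : ℝ) : ℂ) * Complex.exp (-s * v)) -
      2 * (∫ v in Ioi (0 : ℝ), (triangle L v : ℂ) * Complex.exp (-s * v)) +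
      ∫ v in Ioi (0 : ℝ),
        ((triangle L v * (2 - binetKernel v) : ℝ) : ℂ) * Complex.exp (-s * v) := by
  have hgauss := integrableOn_gaussKernel_mul_exp_sub_exp hs
  have hbinet := integrableOn_binetKernel_mul_exp hs
  have hmin := integrableOn_min_one_div_mul_exp hL hs
  have htri := (integrableOn_triangle_mul_exp hL hs).const_mul 2
  have hmix := integrableOn_triangle_mul_two_sub_binetKernel_mul_exp hL hs
  rw [setIntegral_congr_fun measurableSet_Ioi fun v hv ↦
      gaussKernel_mul_exp_sub_triangle_mul_exp_eq hL s hv,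
    integral_add, integral_sub, integral_add, integral_add hgauss hbinet, integral_const_mul]
  · linear_combination digamma_half_eq_log_sub_integral hs - digamma_half_eq_integral hs
  exacts [hgauss.add hbinet, hmin, (hgauss.add hbinet).add hmin, htri,
    ((hgauss.add hbinet).add hmin).sub htri, hmix]

lemma norm_truncated_gauss_integral_sub_log_le (hL : 0 < L) {s : ℂ} (hs : 0 < s.re)
    (him : 0 < s.im) :
    ‖-Real.eulerMascheroniConstant + (∫ v in Ioi (0 : ℝ), (gaussKernel v : ℂ) *
        (Complex.exp (-2 * v) - triangle L v * Complex.exp (-s * v))) -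
      (Complex.log s - Real.log 2)‖ ≤ π * (1 / L + 4) / s.im := by
  have hmin := norm_integral_antitone_mul_exp_le hs him (antitoneOn_min_one_div L)
    (fun _ hv ↦ le_min (by positivity) (one_div_pos.mpr hv).le) fun _ _ ↦ min_le_left _ _
  have htri := norm_integral_antitone_mul_exp_le hs him ((antitone_triangle hL.le).antitoneOn _)
    (fun v _ ↦ triangle_nonneg L v) fun _ hv ↦ triangle_le_one hL.le (mem_Ioi.mp hv).le
  have hmix := norm_integral_antitone_mul_exp_le hs him
    (antitoneOn_triangle_mul_two_sub_binetKernel hL.le)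
    (fun v hv ↦ mul_nonneg (triangle_nonneg L v) (sub_nonneg.mpr (binetKernel_le_two hv)))
    fun _ hv ↦ triangle_mul_two_sub_binetKernel_le_two hL.le hv
  rw [truncated_gauss_integral_sub_log_eq hL hs]
  refine (norm_add_le_of_le (norm_sub_le_of_le hmin (norm_mul_le_of_le ?_ htri)) hmix).trans_eq
    (b := π * (1 / L) / s.im + 2 * (π * 1 / s.im) + π * 2 / s.im) ?_
  · exact Complex.norm_ofNat 2 |>.le
  · ring

lemma abs_log_norm_criticalLine_sub_log_le {τ : ℝ} (hτ : 1 ≤ τ) :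
    |Real.log ‖criticalLine τ‖ - Real.log τ| ≤ 1 / τ := by
  have hτ0 : 0 < τ := one_pos.trans_le hτ
  have hnorm : ‖criticalLine τ‖ = √(τ ^ 2 * (1 + 1 / (4 * τ ^ 2))) := by
    rw [Complex.norm_def, Complex.normSq_apply, criticalLine_re, criticalLine_im]
    congr 1
    field_simp
    ring
  have hlog : Real.log ‖criticalLine τ‖ - Real.log τ = Real.log (1 + 1 / (4 * τ ^ 2)) / 2 := by
    rw [hnorm, Real.log_sqrt (by positivity), Real.log_mul (by positivity) (by positivity),
      Real.log_pow]
    push_cast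
    ring
  have hlog_nonneg : 0 ≤ Real.log (1 + 1 / (4 * τ ^ 2)) :=
    Real.log_nonneg (le_add_of_nonneg_right (by positivity))
  have hlog_le := Real.log_le_sub_one_of_pos (show 0 < 1 + 1 / (4 * τ ^ 2) by positivity)
  have hsq : 1 / (4 * τ ^ 2) ≤ 1 / τ := one_div_le_one_div_of_le hτ0 (by nlinarith)
  rw [hlog, abs_of_nonneg (by linarith)]
  linarith

end TruncatedDigamma

section TriangleTransform

/-! ### The Laplace transform of the triangular cutoff -/

open Set

variable {L : ℝ} {c : ℂ}

/-- The Laplace transform `∫₀^∞ (1 - v / L)₊ exp (c v) dv` of the triangular cutoff, an entire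
function of `c`. -/
def triangleTransform (L : ℝ) (c : ℂ) : ℂ :=
  ∫ v in Ioi (0 : ℝ), (triangle L v : ℂ) * Complex.exp (c * v)

lemma triangleTransform_eq_intervalIntegral (hL : 0 < L) (c : ℂ) :
    triangleTransform L c = ∫ v in (0 : ℝ)..L, (1 - (v : ℂ) / L) * Complex.exp (c * v) := by
  rw [triangleTransform, intervalIntegral.integral_of_le hL.le,
    setIntegral_eq_of_subset_of_forall_sdiff_eq_zero (s := Ioc 0 L) measurableSet_Ioi
      Ioc_subset_Ioi_self]
  · refine setIntegral_congr_fun measurableSet_Ioc fun v hv ↦ ?_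
    simp only [triangle_eq_of_le hL hv.2]
    push_cast
    rfl
  · rintro v ⟨hv0, hvL⟩
    have hLv : L ≤ v := le_of_not_ge fun hle ↦ hvL ⟨hv0, hle⟩
    simp [triangle_eq_zero_of_le hL hLv]

lemma hasDerivAt_triangleTransform_primitive (hL : L ≠ 0) (hc : c ≠ 0) (v : ℝ) :
    HasDerivAt (fun v : ℝ ↦ ((1 - (v : ℂ) / L) / c + 1 / (c ^ 2 * L)) * Complex.exp (c * v))
      ((1 - (v : ℂ) / L) * Complex.exp (c * v)) v := by
  have hLc : (L : ℂ) ≠ 0 := Complex.ofReal_ne_zero.mpr hL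
  have hlinear := (((((hasDerivAt_id (v : ℂ)).div_const (L : ℂ)).const_sub 1).div_const
    c).add_const (1 / (c ^ 2 * L))).mul ((hasDerivAt_id (v : ℂ)).const_mul c).cexp
  convert! hlinear.comp_ofReal using 1
  simp only [id]
  field_simp
  ring

lemma triangleTransform_of_ne_zero (hL : 0 < L) (hc : c ≠ 0) :
    triangleTransform L c = (Complex.exp (c * L) - 1) / (c ^ 2 * L) - 1 / c := by
  have hLc : (L : ℂ) ≠ 0 := Complex.ofReal_ne_zero.mpr hL.ne'
  rw [triangleTransform_eq_intervalIntegral hL, intervalIntegral.integral_eq_sub_of_hasDerivAt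
    (fun v _ ↦ hasDerivAt_triangleTransform_primitive hL.ne' hc v)
    (Continuous.intervalIntegrable (by fun_prop) _ _)]
  simp only [Complex.ofReal_zero, mul_zero, Complex.exp_zero, zero_div]
  field_simp
  ring

lemma triangleTransform_zero (hL : 0 < L) : triangleTransform L 0 = L / 2 := by
  have hLc : (L : ℂ) ≠ 0 := Complex.ofReal_ne_zero.mpr hL.ne'
  have hsimp : ∀ v : ℝ, (1 - (v : ℂ) / L) * Complex.exp (0 * v) = ((1 - v / L : ℝ) : ℂ) := by
    simp
  simp_rw [triangleTransform_eq_intervalIntegral hL, hsimp, intervalIntegral.integral_ofReal]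
  rw [intervalIntegral.integral_sub (by simp)
    (Continuous.intervalIntegrable (by fun_prop) _ _), intervalIntegral.integral_div,
    integral_id, integral_one]
  push_cast
  field_simp
  ring

lemma re_triangleTransform_mul_I (hL : 0 < L) (u : ℝ) :
    (triangleTransform L (u * Complex.I)).re = L / 2 * sincSq (u * L / 2) := by
  rcases eq_or_ne u 0 with rfl | hu
  · simp [triangleTransform_zero hL, sincSq]
  · have hu' : u * L / 2 ≠ 0 := by positivity
    have hsq : ((u : ℂ) * Complex.I) ^ 2 * L = ((-(u ^ 2 * L) : ℝ) : ℂ) := by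
      rw [mul_pow, Complex.I_sq]
      push_cast
      ring
    have hnum : (Complex.exp ((u : ℂ) * Complex.I * L) - 1).re = Real.cos (u * L) - 1 := by
      simp [Complex.exp_re]
    have hinv : (1 / ((u : ℂ) * Complex.I)).re = 0 := by simp
    have hcos : Real.cos (u * L) = 1 - 2 * Real.sin (u * L / 2) ^ 2 := by
      rw [Real.sin_sq_eq_half_sub, mul_div_cancel₀ _ (two_ne_zero' ℝ)]
      ring
    rw [triangleTransform_of_ne_zero hL (by simp [hu]), Complex.sub_re, hsq,
      Complex.div_ofReal_re, hnum, hinv, hcos, sincSq, if_neg hu']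
    field_simp
    ring

lemma abs_re_triangleTransform_le (hL : 0 < L) (hc : c ≠ 0) :
    |(triangleTransform L c).re| ≤
      ((Real.exp (c.re * L) + 1) / L + |c.re|) / ‖c‖ ^ 2 := by
  have hexp : ‖(Complex.exp (c * L) - 1) / (c ^ 2 * L)‖ ≤
      (Real.exp (c.re * L) + 1) / (‖c‖ ^ 2 * L) := by
    rw [norm_div, norm_mul, norm_pow, Complex.norm_of_nonneg hL.le]
    gcongr
    refine (norm_sub_le _ _).trans_eq ?_
    rw [Complex.norm_exp, norm_one, Complex.re_mul_ofReal]
  have hinv : |(1 / c).re| = |c.re| / ‖c‖ ^ 2 := by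
    rw [one_div, Complex.inv_re, Complex.normSq_eq_norm_sq, abs_div, abs_of_nonneg (sq_nonneg ‖c‖)]
  rw [triangleTransform_of_ne_zero hL hc, Complex.sub_re, add_div, div_div, mul_comm L, ← hinv]
  exact (abs_sub _ _).trans
    (add_le_add_left ((Complex.abs_re_le_norm _).trans hexp) _)

lemma triangleTransform_conj (L : ℝ) (c : ℂ) :
    triangleTransform L (starRingEnd ℂ c) = starRingEnd ℂ (triangleTransform L c) := by
  simp_rw [triangleTransform, ← integral_conj, map_mul, ← Complex.exp_conj, map_mul,
    Complex.conj_ofReal]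

end TriangleTransform

section FourierWeight

/-! ### The Fourier transform of `(1 - |v| / L)₊ exp |v|` -/

open Set
open scoped FourierTransform

variable {L : ℝ}

/-- The point `1 + 2πiw` of the vertical line of abscissa one, parametrised by the frequency `w`
of the Fourier transform. -/
def unitAbscissa (w : ℝ) : ℂ := 1 + 2 * π * w * Complex.I

@[simp] lemma unitAbscissa_re (w : ℝ) : (unitAbscissa w).re = 1 := by simp [unitAbscissa]

@[simp] lemma unitAbscissa_im (w : ℝ) : (unitAbscissa w).im = 2 * π * w := by
  simp [unitAbscissa]

@[fun_prop] lemma continuous_unitAbscissa : Continuous unitAbscissa := by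
  unfold unitAbscissa
  fun_prop

lemma unitAbscissa_ne_zero (w : ℝ) : unitAbscissa w ≠ 0 := fun h ↦ by
  simpa [h] using unitAbscissa_re w

lemma one_add_norm_sq_le_two_mul_norm_unitAbscissa_sq (w : ℝ) :
    (1 + ‖w‖) ^ 2 ≤ 2 * ‖unitAbscissa w‖ ^ 2 := by
  have hpi : 1 ≤ (2 * π) ^ 2 := by nlinarith [Real.pi_gt_three]
  have hw : ‖w‖ ^ 2 ≤ (2 * π * w) ^ 2 := by
    rw [mul_pow, Real.norm_eq_abs, sq_abs]
    exact le_mul_of_one_le_left (sq_nonneg w) hpi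
  rw [← Complex.normSq_eq_norm_sq, Complex.normSq_apply, unitAbscissa_re, unitAbscissa_im]
  nlinarith [sq_nonneg (1 - ‖w‖)]

/-- The even function `(1 - |v| / L)₊ exp |v|`. The factor `exp |v|` compensates for evaluating
Dirichlet series one unit to the right of the point of interest. -/
def evenTriangleExp (L v : ℝ) : ℂ := ((triangle L |v| * Real.exp |v| : ℝ) : ℂ)

/-- The Fourier transform of `evenTriangleExp L`, as a real-valued function. -/
def fourierWeight (L w : ℝ) : ℝ := 2 * (triangleTransform L (unitAbscissa w)).re

lemma continuous_evenTriangleExp (L : ℝ) : Continuous (evenTriangleExp L) := by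
  have htri := continuous_triangle L
  unfold evenTriangleExp
  fun_prop

lemma hasCompactSupport_evenTriangleExp (hL : 0 < L) : HasCompactSupport (evenTriangleExp L) := by
  refine HasCompactSupport.intro (isCompact_Icc (a := -L) (b := L)) fun v hv ↦ ?_
  have hLv : L ≤ |v| := le_of_not_ge fun hle ↦ hv (abs_le.mp hle)
  simp [evenTriangleExp, triangle_eq_zero_of_le hL hLv]

lemma integrable_evenTriangleExp (hL : 0 < L) : Integrable (evenTriangleExp L) :=
  (continuous_evenTriangleExp L).integrable_of_hasCompactSupport
    (hasCompactSupport_evenTriangleExp hL)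

lemma setIntegral_Ioi_exp_smul_evenTriangleExp (L w : ℝ) :
    ∫ v in Ioi (0 : ℝ), Complex.exp (((-2 * π * v * w : ℝ) : ℂ) * Complex.I) •
      evenTriangleExp L v = triangleTransform L (starRingEnd ℂ (unitAbscissa w)) := by
  refine setIntegral_congr_fun measurableSet_Ioi fun v hv ↦ ?_
  simp only [evenTriangleExp, abs_of_pos (mem_Ioi.mp hv), smul_eq_mul]
  push_cast
  rw [mul_left_comm, ← Complex.exp_add]
  congr 2
  simp only [unitAbscissa, map_add, map_mul, map_one, map_ofNat, Complex.conj_ofReal,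
    Complex.conj_I]
  ring

lemma setIntegral_Iic_exp_smul_evenTriangleExp (L w : ℝ) :
    ∫ v in Iic (0 : ℝ), Complex.exp (((-2 * π * v * w : ℝ) : ℂ) * Complex.I) •
      evenTriangleExp L v = triangleTransform L (unitAbscissa w) := by
  rw [← neg_zero, ← integral_comp_neg_Ioi]
  refine setIntegral_congr_fun measurableSet_Ioi fun v hv ↦ ?_
  simp only [evenTriangleExp, abs_neg, abs_of_pos (mem_Ioi.mp hv), smul_eq_mul]
  push_cast
  rw [mul_left_comm, ← Complex.exp_add]
  congr 2
  simp only [unitAbscissa]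
  ring

lemma fourier_evenTriangleExp (hL : 0 < L) :
    𝓕 (evenTriangleExp L) = fun w ↦ (fourierWeight L w : ℂ) := by
  ext w
  have hintegrable : Integrable fun v : ℝ ↦
      Complex.exp (((-2 * π * v * w : ℝ) : ℂ) * Complex.I) • evenTriangleExp L v := by
    have hcont := continuous_evenTriangleExp L
    exact Continuous.integrable_of_hasCompactSupport (by fun_prop)
      (HasCompactSupport.smul_left
        (f := fun v : ℝ ↦ Complex.exp (((-2 * π * v * w : ℝ) : ℂ) * Complex.I))
        (hasCompactSupport_evenTriangleExp hL))
  rw [Real.fourier_real_eq_integral_exp_smul,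
    ← intervalIntegral.integral_Iic_add_Ioi (b := 0) hintegrable.integrableOn
      hintegrable.integrableOn,
    setIntegral_Iic_exp_smul_evenTriangleExp, setIntegral_Ioi_exp_smul_evenTriangleExp,
    triangleTransform_conj, Complex.add_conj, fourierWeight]

lemma continuous_fourierWeight (hL : 0 < L) : Continuous (fourierWeight L) := by
  have hLc : (L : ℂ) ≠ 0 := Complex.ofReal_ne_zero.mpr hL.ne'
  unfold fourierWeight
  simp_rw [triangleTransform_of_ne_zero hL (unitAbscissa_ne_zero _)]
  have hne := unitAbscissa_ne_zero
  fun_prop (disch := simp [hne, hLc])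

lemma abs_fourierWeight_le (hL : 0 < L) (w : ℝ) :
    |fourierWeight L w| ≤ 4 * ((Real.exp L + 1) / L + 1) * (1 + ‖w‖) ^ (-2 : ℝ) := by
  have hnorm := one_add_norm_sq_le_two_mul_norm_unitAbscissa_sq w
  have hpos : 0 < ‖unitAbscissa w‖ ^ 2 := by have := unitAbscissa_ne_zero w; positivity
  have hre := abs_re_triangleTransform_le hL (unitAbscissa_ne_zero w)
  rw [unitAbscissa_re, one_mul, abs_one] at hre
  set K := (Real.exp L + 1) / L + 1
  have hK : 0 ≤ K := by positivity
  calc |fourierWeight L w| = 2 * |(triangleTransform L (unitAbscissa w)).re| := by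
        rw [fourierWeight, abs_mul, abs_two]
    _ ≤ 2 * (K / ‖unitAbscissa w‖ ^ 2) := by gcongr
    _ ≤ 4 * K / (1 + ‖w‖) ^ 2 := by
        rw [← mul_div_assoc, div_le_div_iff₀ hpos (by positivity)]
        nlinarith
    _ = 4 * K * (1 + ‖w‖) ^ (-2 : ℝ) := by
        rw [Real.rpow_neg (by positivity), Real.rpow_two, div_eq_mul_inv]

lemma integrable_fourierWeight (hL : 0 < L) : Integrable (fourierWeight L) :=
  ((integrable_one_add_norm (by simp)).const_mul _).mono'
    (continuous_fourierWeight hL).aestronglyMeasurable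
    (Eventually.of_forall (abs_fourierWeight_le hL))

lemma integrable_abs_fourierWeight_mul_sqrt (hL : 0 < L) :
    Integrable fun w ↦ |fourierWeight L w| * √(1 + ‖w‖) := by
  have hcont := continuous_fourierWeight hL
  refine ((integrable_one_add_norm (r := 3 / 2) (by norm_num)).const_mul
    (4 * ((Real.exp L + 1) / L + 1))).mono' (Continuous.aestronglyMeasurable (by fun_prop))
    (Eventually.of_forall fun w ↦ ?_)
  rw [Real.norm_of_nonneg (by positivity)]
  calc |fourierWeight L w| * √(1 + ‖w‖)
      ≤ 4 * ((Real.exp L + 1) / L + 1) * (1 + ‖w‖) ^ (-2 : ℝ) * √(1 + ‖w‖) := by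
        gcongr
        exact abs_fourierWeight_le hL w
    _ = 4 * ((Real.exp L + 1) / L + 1) * (1 + ‖w‖) ^ (-(3 / 2) : ℝ) := by
        rw [Real.sqrt_eq_rpow, mul_assoc, ← Real.rpow_add (by positivity)]
        norm_num

lemma integral_fourierWeight_mul_exp (hL : 0 < L) {v : ℝ} (hv : 0 ≤ v) :
    ∫ w : ℝ, (fourierWeight L w : ℂ) * Complex.exp (-(2 * π * w * Complex.I) * v) =
      (triangle L v * Real.exp v : ℝ) := by
  have hfourier := fourier_evenTriangleExp hL
  have hinversion := congrFun ((continuous_evenTriangleExp L).fourierInv_fourier_eq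
    (integrable_evenTriangleExp hL) (by rw [hfourier]; exact (integrable_fourierWeight hL).ofReal))
    (-v)
  rw [hfourier, Real.fourierInv_eq', evenTriangleExp, abs_neg, abs_of_nonneg hv] at hinversion
  rw [← hinversion]
  refine integral_congr_ae (Eventually.of_forall fun w ↦ ?_)
  simp only [smul_eq_mul, mul_comm (Complex.exp _), RCLike.inner_apply, conj_trivial]
  push_cast
  ring_nf

lemma integral_fourierWeight (hL : 0 < L) : ∫ w : ℝ, (fourierWeight L w : ℂ) = 1 := by
  simpa [triangle_zero] using integral_fourierWeight_mul_exp hL le_rfl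

end FourierWeight

section WeightedVerticalIntegrals

/-! ### Weighted integrals along vertical lines -/

open Set

variable {L : ℝ} {s : ℂ}

lemma norm_exp_neg_add_unitAbscissa_mul (s : ℂ) (w v : ℝ) :
    ‖Complex.exp (-(s + unitAbscissa w) * v)‖ = Real.exp (-(s.re + 1) * v) := by
  simp [Complex.norm_exp]

lemma integrable_fourierWeight_mul_exp_shift (hL : 0 < L) (s : ℂ) (v : ℝ) :
    Integrable fun w : ℝ ↦
      (fourierWeight L w : ℂ) * Complex.exp (-(s + unitAbscissa w) * v) :=
  (integrable_fourierWeight hL).ofReal.mul_bdd (Continuous.aestronglyMeasurable (by fun_prop))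
    (Eventually.of_forall fun w ↦ (norm_exp_neg_add_unitAbscissa_mul s w v).le)

lemma integral_fourierWeight_mul_exp_shift (hL : 0 < L) (s : ℂ) {v : ℝ} (hv : 0 ≤ v) :
    ∫ w : ℝ, (fourierWeight L w : ℂ) * Complex.exp (-(s + unitAbscissa w) * v) =
      triangle L v * Complex.exp (-s * v) := by
  have hfactor : ∀ w : ℝ, (fourierWeight L w : ℂ) * Complex.exp (-(s + unitAbscissa w) * v) =
      (fourierWeight L w : ℂ) * Complex.exp (-(2 * π * w * Complex.I) * v) *
        Complex.exp (-(s + 1) * v) := by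
    intro w
    rw [mul_assoc, ← Complex.exp_add, unitAbscissa]
    ring_nf
  simp_rw [hfactor]
  rw [integral_mul_const, integral_fourierWeight_mul_exp hL hv]
  push_cast
  rw [mul_assoc, ← Complex.exp_add]
  ring_nf

section Resolvent

variable {ρ : ℂ}

lemma integrable_fourierWeight_mul_exp_sub_prod (hL : 0 < L) (hρ : ρ.re < s.re + 1) :
    Integrable (fun p : ℝ × ℝ ↦
        (fourierWeight L p.1 : ℂ) * Complex.exp (-(s - ρ + unitAbscissa p.1) * p.2))
      (volume.prod (volume.restrict (Ioi 0))) := by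
  have hexp : IntegrableOn (fun v : ℝ ↦ Real.exp (-((s - ρ).re + 1) * v)) (Ioi 0) :=
    exp_neg_integrableOn_Ioi 0 (by rw [Complex.sub_re]; linarith)
  have hcont := continuous_fourierWeight hL
  refine ((integrable_fourierWeight hL).norm.mul_prod hexp).mono'
    (Continuous.aestronglyMeasurable (by fun_prop)) (Eventually.of_forall fun p ↦ le_of_eq ?_)
  rw [norm_mul, Complex.norm_real, norm_exp_neg_add_unitAbscissa_mul]

lemma integral_Ioi_fourierWeight_mul_exp_sub (hρ : ρ.re < s.re + 1) (w : ℝ) :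
    ∫ v in Ioi (0 : ℝ),
      (fourierWeight L w : ℂ) * Complex.exp (-(s - ρ + unitAbscissa w) * v) =
      (fourierWeight L w : ℂ) * (1 / (s + unitAbscissa w - ρ)) := by
  have hre : 0 < (s - ρ + unitAbscissa w).re := by
    rw [Complex.add_re, Complex.sub_re, unitAbscissa_re]
    linarith
  rw [integral_const_mul, integral_exp_neg_mul_Ioi hre, sub_add_eq_add_sub]

lemma integrable_fourierWeight_mul_one_div_sub (hL : 0 < L) (hρ : ρ.re < s.re + 1) :
    Integrable fun w : ℝ ↦ (fourierWeight L w : ℂ) * (1 / (s + unitAbscissa w - ρ)) :=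
  (integrable_fourierWeight_mul_exp_sub_prod hL hρ).integral_prod_left.congr
    (Eventually.of_forall (integral_Ioi_fourierWeight_mul_exp_sub hρ))

lemma integral_fourierWeight_mul_one_div_sub (hL : 0 < L) (hρ : ρ.re < s.re + 1) :
    ∫ w : ℝ, (fourierWeight L w : ℂ) * (1 / (s + unitAbscissa w - ρ)) =
      triangleTransform L (ρ - s) := by
  simp_rw [← integral_Ioi_fourierWeight_mul_exp_sub hρ]
  rw [integral_integral_swap (integrable_fourierWeight_mul_exp_sub_prod hL hρ)]
  refine setIntegral_congr_fun measurableSet_Ioi fun v hv ↦ ?_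
  rw [integral_fourierWeight_mul_exp_shift hL _ (mem_Ioi.mp hv).le, neg_sub]

end Resolvent

section Digamma

lemma sqrt_norm_add_unitAbscissa_sub_two_le (s : ℂ) (w : ℝ) :
    √(2 * ‖s + unitAbscissa w - 2‖) ≤ √(2 * (‖s - 1‖ + 2 * π)) * √(1 + ‖w‖) := by
  have hnorm : ‖s + unitAbscissa w - 2‖ ≤ ‖s - 1‖ + 2 * π * ‖w‖ := by
    have hsplit : s + unitAbscissa w - 2 = (s - 1) + (2 * π * w : ℝ) * Complex.I := by
      rw [unitAbscissa]
      push_cast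
      ring
    rw [hsplit]
    refine (norm_add_le _ _).trans_eq ?_
    rw [norm_mul, Complex.norm_I, mul_one, Complex.norm_real, norm_mul,
      Real.norm_of_nonneg Real.two_pi_pos.le]
  rw [← Real.sqrt_mul (by positivity)]
  apply Real.sqrt_le_sqrt
  nlinarith [norm_nonneg (s - 1), norm_nonneg w, Real.pi_pos]

lemma integrable_fourierWeight_mul_gaussKernel_prod (hL : 0 < L) (hs : -1 < s.re) :
    Integrable (fun p : ℝ × ℝ ↦ (fourierWeight L p.1 : ℂ) * ((gaussKernel p.2 : ℂ) *
        (Complex.exp (-2 * p.2) - Complex.exp (-(s + unitAbscissa p.1) * p.2))))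
      (volume.prod (volume.restrict (Ioi 0))) := by
  set a := min 2 (s.re + 1)
  have ha : 0 < a := lt_min two_pos (by linarith)
  set K := √(2 * (‖s - 1‖ + 2 * π))
  have hdom := ((integrable_abs_fourierWeight_mul_sqrt hL).const_mul K).mul_prod
    (integrableOn_gaussKernel_mul_sqrt_mul_exp ha)
  have hweight := continuous_fourierWeight hL
  have hgauss : AEStronglyMeasurable (fun v : ℝ ↦ (gaussKernel v : ℂ))
      (volume.restrict (Ioi 0)) :=
    (Complex.continuous_ofReal.comp_continuousOn continuousOn_gaussKernel).aestronglyMeasurable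
      measurableSet_Ioi
  have hpos : ∀ᵐ p ∂((volume : Measure ℝ).prod (volume.restrict (Ioi (0 : ℝ)))), p.2 ∈ Ioi 0 :=
    Measure.quasiMeasurePreserving_snd.ae (ae_restrict_mem measurableSet_Ioi)
  refine hdom.mono' (.mul (Continuous.aestronglyMeasurable (by fun_prop))
    (hgauss.comp_snd.mul (Continuous.aestronglyMeasurable (by fun_prop)))) ?_
  filter_upwards [hpos] with ⟨w, v⟩ hv
  have hkernel := norm_gaussKernel_mul_exp_sub_exp_le (s := s + unitAbscissa w)
    (min_le_left 2 (s.re + 1)) (by simp) hv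
  have hkernel_nonneg := gaussKernel_pos hv
  calc ‖(fourierWeight L w : ℂ) * ((gaussKernel v : ℂ) *
        (Complex.exp (-2 * v) - Complex.exp (-(s + unitAbscissa w) * v)))‖
      ≤ |fourierWeight L w| * (√(2 * ‖s + unitAbscissa w - 2‖) *
        (gaussKernel v * √v * Real.exp (-a * v))) := by
        rw [norm_mul, Complex.norm_real, Real.norm_eq_abs]
        gcongr
    _ ≤ |fourierWeight L w| * (K * √(1 + ‖w‖) * (gaussKernel v * √v * Real.exp (-a * v))) := by
        gcongr
        exact sqrt_norm_add_unitAbscissa_sub_two_le s w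
    _ = _ := by ring

lemma fourierWeight_mul_digamma_eq (hs : -1 < s.re) (w : ℝ) :
    (fourierWeight L w : ℂ) * Complex.digamma ((s + unitAbscissa w) / 2) =
      (fourierWeight L w : ℂ) * (-Real.eulerMascheroniConstant) +
      ∫ v in Ioi (0 : ℝ), (fourierWeight L w : ℂ) * ((gaussKernel v : ℂ) *
        (Complex.exp (-2 * v) - Complex.exp (-(s + unitAbscissa w) * v))) := by
  have hre : 0 < (s + unitAbscissa w).re := by
    rw [Complex.add_re, unitAbscissa_re]
    linarith
  rw [digamma_half_eq_integral hre, integral_const_mul, mul_add]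

lemma integrable_fourierWeight_mul_digamma (hL : 0 < L) (hs : -1 < s.re) :
    Integrable fun w : ℝ ↦
      (fourierWeight L w : ℂ) * Complex.digamma ((s + unitAbscissa w) / 2) := by
  simp_rw [fourierWeight_mul_digamma_eq hs]
  exact ((integrable_fourierWeight hL).ofReal.mul_const _).add
    (integrable_fourierWeight_mul_gaussKernel_prod hL hs).integral_prod_left

lemma integral_fourierWeight_mul_gaussKernel (hL : 0 < L) (s : ℂ) {v : ℝ} (hv : 0 ≤ v) :
    ∫ w : ℝ, (fourierWeight L w : ℂ) * ((gaussKernel v : ℂ) *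
        (Complex.exp (-2 * v) - Complex.exp (-(s + unitAbscissa w) * v))) =
      (gaussKernel v : ℂ) * (Complex.exp (-2 * v) - triangle L v * Complex.exp (-s * v)) := by
  have hconst : Integrable fun w : ℝ ↦ (fourierWeight L w : ℂ) * Complex.exp (-2 * v) :=
    (integrable_fourierWeight hL).ofReal.mul_const _
  simp_rw [mul_left_comm (fourierWeight L _ : ℂ)]
  rw [integral_const_mul]
  simp_rw [mul_sub (fourierWeight L _ : ℂ)]
  rw [integral_sub hconst (integrable_fourierWeight_mul_exp_shift hL s v), integral_mul_const,
    integral_fourierWeight hL, one_mul, integral_fourierWeight_mul_exp_shift hL s hv]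

lemma integral_fourierWeight_mul_digamma (hL : 0 < L) (hs : -1 < s.re) :
    ∫ w : ℝ, (fourierWeight L w : ℂ) * Complex.digamma ((s + unitAbscissa w) / 2) =
      -Real.eulerMascheroniConstant + ∫ v in Ioi (0 : ℝ), (gaussKernel v : ℂ) *
        (Complex.exp (-2 * v) - triangle L v * Complex.exp (-s * v)) := by
  have hprod := integrable_fourierWeight_mul_gaussKernel_prod hL hs
  have hconst : Integrable fun w : ℝ ↦
      (fourierWeight L w : ℂ) * (-Real.eulerMascheroniConstant) :=
    (integrable_fourierWeight hL).ofReal.mul_const _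
  simp_rw [fourierWeight_mul_digamma_eq hs]
  rw [integral_add hconst hprod.integral_prod_left, integral_mul_const,
    integral_fourierWeight hL, one_mul, integral_integral_swap hprod]
  congr 1
  exact setIntegral_congr_fun measurableSet_Ioi fun v hv ↦
    integral_fourierWeight_mul_gaussKernel hL s (mem_Ioi.mp hv).le

end Digamma

section DirichletSeries

lemma term_add_eq_term_mul_exp (a : ℕ → ℂ) (s u : ℂ) (n : ℕ) :
    LSeries.term a (s + u) n = LSeries.term a s n * Complex.exp (-u * Real.log n) := by
  rcases eq_or_ne n 0 with rfl | hn
  · simp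
  · have hn' : (n : ℂ) ≠ 0 := Nat.cast_ne_zero.mpr hn
    rw [LSeries.term_of_ne_zero hn, LSeries.term_of_ne_zero hn, Complex.cpow_add _ _ hn',
      ← div_div, div_eq_mul_inv _ ((n : ℂ) ^ u), ← Complex.cpow_neg,
      Complex.cpow_def_of_ne_zero hn' (-u), Complex.natCast_log, mul_comm (-u)]

variable {a : ℕ → ℂ}

lemma norm_term_add_unitAbscissa (a : ℕ → ℂ) (s : ℂ) (n : ℕ) (w : ℝ) :
    ‖LSeries.term a (s + unitAbscissa w) n‖ = ‖LSeries.term a (s + 1) n‖ := by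
  simp [LSeries.norm_term_eq]

lemma continuous_term_add_unitAbscissa (a : ℕ → ℂ) (s : ℂ) (n : ℕ) :
    Continuous fun w ↦ LSeries.term a (s + unitAbscissa w) n := by
  simp_rw [term_add_eq_term_mul_exp]
  fun_prop

lemma integrable_fourierWeight_mul_term (hL : 0 < L) (a : ℕ → ℂ) (s : ℂ) (n : ℕ) :
    Integrable fun w : ℝ ↦
      (fourierWeight L w : ℂ) * LSeries.term a (s + unitAbscissa w) n :=
  (integrable_fourierWeight hL).ofReal.mul_bdd
    (continuous_term_add_unitAbscissa a s n).aestronglyMeasurable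
    (Eventually.of_forall fun w ↦ (norm_term_add_unitAbscissa a s n w).le)

lemma integral_fourierWeight_mul_term (hL : 0 < L) (a : ℕ → ℂ) (s : ℂ) (n : ℕ) :
    ∫ w : ℝ, (fourierWeight L w : ℂ) * LSeries.term a (s + unitAbscissa w) n =
      triangle L (Real.log n) * LSeries.term a s n := by
  have hexp := integral_fourierWeight_mul_exp_shift hL 0 (Real.log_natCast_nonneg n)
  simp only [zero_add, neg_zero, zero_mul, Complex.exp_zero, mul_one] at hexp
  simp_rw [term_add_eq_term_mul_exp, mul_left_comm _ (LSeries.term a s n)]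
  rw [integral_const_mul, hexp, mul_comm]

lemma integrable_fourierWeight_mul_LSeries (hL : 0 < L) (ha : LSeriesSummable a (s + 1)) :
    Integrable fun w : ℝ ↦ (fourierWeight L w : ℂ) * LSeries a (s + unitAbscissa w) :=
  (integrable_fourierWeight hL).ofReal.mul_bdd
    (continuous_tsum (continuous_term_add_unitAbscissa a s) ha.norm
      fun n w ↦ (norm_term_add_unitAbscissa a s n w).le).aestronglyMeasurable
    (Eventually.of_forall fun w ↦ tsum_of_norm_bounded ha.norm.hasSum
      fun n ↦ (norm_term_add_unitAbscissa a s n w).le)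

lemma hasSum_triangle_mul_term (hL : 0 < L) (ha : LSeriesSummable a (s + 1)) :
    HasSum (fun n : ℕ ↦ (triangle L (Real.log n) : ℂ) * LSeries.term a s n)
      (∫ w : ℝ, (fourierWeight L w : ℂ) * LSeries a (s + unitAbscissa w)) := by
  have hsummable : Summable fun n : ℕ ↦
      ∫ w : ℝ, ‖(fourierWeight L w : ℂ) * LSeries.term a (s + unitAbscissa w) n‖ := by
    refine (ha.norm.mul_left (∫ w : ℝ, ‖(fourierWeight L w : ℂ)‖)).congr fun n ↦ ?_
    simp_rw [norm_mul, norm_term_add_unitAbscissa, integral_mul_const]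
  have hsum := hasSum_integral_of_summable_integral_norm
    (integrable_fourierWeight_mul_term hL a s) hsummable
  simp_rw [tsum_mul_left, integral_fourierWeight_mul_term hL] at hsum
  exact hsum

end DirichletSeries

end WeightedVerticalIntegrals

section ExplicitFormula

/-! ### The explicit formula -/

open Set

section SumIntegralInterchange

variable {α : Type*} [MeasurableSpace α] {μ : Measure α} {g : α → ℝ}

lemma re_integral_ofReal_mul {f : α → ℂ} (hf : Integrable (fun a ↦ (g a : ℂ) * f a) μ) :
    (∫ a, (g a : ℂ) * f a ∂μ).re = ∫ a, g a * (f a).re ∂μ := by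
  simpa using (integral_re hf).symm

lemma integrable_mul_re {f : α → ℂ} (hf : Integrable (fun a ↦ (g a : ℂ) * f a) μ) :
    Integrable (fun a ↦ g a * (f a).re) μ := by
  simpa using hf.re

/-- Nonnegativity of the terms makes `|g| * F` dominate every partial sum. -/
lemma hasSum_integral_mul_of_nonneg {ι : Type*} [Countable ι] {f : ι → α → ℝ} {F : α → ℝ}
    (hf : ∀ i, Integrable (fun a ↦ g a * f i a) μ) (hF : Integrable (fun a ↦ g a * F a) μ)
    (hnonneg : ∀ i a, 0 ≤ f i a) (hsum : ∀ a, HasSum (fun i ↦ f i a) (F a)) :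
    HasSum (fun i ↦ ∫ a, g a * f i a ∂μ) (∫ a, g a * F a ∂μ) := by
  have hpartial (t : Finset ι) :
      ∑ i ∈ t, ∫ a, ‖g a * f i a‖ ∂μ ≤ ∫ a, ‖g a * F a‖ ∂μ := by
    rw [← integral_finsetSum t fun i _ ↦ (hf i).norm]
    refine integral_mono (integrable_finsetSum t fun i _ ↦ (hf i).norm) hF.norm fun a ↦ ?_
    have hle : ∑ i ∈ t, f i a ≤ F a := sum_le_hasSum t (fun i _ ↦ hnonneg i a) (hsum a)
    simp_rw [norm_mul, ← Finset.mul_sum, Real.norm_of_nonneg (hnonneg _ a)]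
    gcongr
    exact hle.trans (Real.le_norm_self _)
  have hinterchange := hasSum_integral_of_summable_integral_norm hf
    (summable_of_sum_le (fun i ↦ integral_nonneg fun a ↦ norm_nonneg _) hpartial)
  simpa only [tsum_mul_left, (hsum _).tsum_eq] using hinterchange

end SumIntegralInterchange

variable {L : ℝ} {s : ℂ}

lemma LSeriesSummable_vonMangoldt_add_one (hs : 0 < s.re) :
    LSeriesSummable (fun n ↦ (ArithmeticFunction.vonMangoldt n : ℂ)) (s + 1) :=
  ArithmeticFunction.LSeriesSummable_vonMangoldt (by simpa using hs)

lemma fourierWeight_mul_logDeriv_riemannXi_eq (hs : 0 < s.re) (w : ℝ) :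
    (fourierWeight L w : ℂ) * logDeriv riemannXi (s + unitAbscissa w) =
      (fourierWeight L w : ℂ) * (1 / (s + unitAbscissa w - 0)) +
      (fourierWeight L w : ℂ) * (1 / (s + unitAbscissa w - 1)) -
      (fourierWeight L w : ℂ) * (Real.log π / 2) +
      (fourierWeight L w : ℂ) * Complex.digamma ((s + unitAbscissa w) / 2) / 2 -
      (fourierWeight L w : ℂ) *
        LSeries (fun n ↦ (ArithmeticFunction.vonMangoldt n : ℂ)) (s + unitAbscissa w) := by
  rw [logDeriv_riemannXi_eq (by simpa using hs), sub_zero]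
  ring

lemma integrable_fourierWeight_mul_logDeriv_riemannXi (hL : 0 < L) (hs : 0 < s.re) :
    Integrable fun w : ℝ ↦
      (fourierWeight L w : ℂ) * logDeriv riemannXi (s + unitAbscissa w) := by
  simp_rw [fourierWeight_mul_logDeriv_riemannXi_eq hs]
  have hpole_zero := integrable_fourierWeight_mul_one_div_sub (s := s) (ρ := 0) hL
    (by simpa using hs.trans (lt_add_one _))
  have hpole_one := integrable_fourierWeight_mul_one_div_sub (s := s) (ρ := 1) hL
    (by simpa using hs)
  exact (((hpole_zero.add hpole_one).sub ((integrable_fourierWeight hL).ofReal.mul_const _)).add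
    ((integrable_fourierWeight_mul_digamma hL (by linarith)).div_const 2)).sub
    (integrable_fourierWeight_mul_LSeries hL (LSeriesSummable_vonMangoldt_add_one hs))

lemma integral_fourierWeight_mul_logDeriv_riemannXi (hL : 0 < L) (hs : 0 < s.re) :
    ∫ w : ℝ, (fourierWeight L w : ℂ) * logDeriv riemannXi (s + unitAbscissa w) =
      triangleTransform L (-s) + triangleTransform L (1 - s) - Real.log π / 2 +
      (∫ w : ℝ, (fourierWeight L w : ℂ) * Complex.digamma ((s + unitAbscissa w) / 2)) / 2 -
      ∫ w : ℝ, (fourierWeight L w : ℂ) *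
        LSeries (fun n ↦ (ArithmeticFunction.vonMangoldt n : ℂ)) (s + unitAbscissa w) := by
  have hzero : (0 : ℂ).re < s.re + 1 := by simpa using hs.trans (lt_add_one _)
  have hone : (1 : ℂ).re < s.re + 1 := by simpa using hs
  have hpole_zero := integrable_fourierWeight_mul_one_div_sub hL hzero
  have hpole_one := integrable_fourierWeight_mul_one_div_sub hL hone
  have hconst := (integrable_fourierWeight hL).ofReal.mul_const (Real.log π / 2 : ℂ)
  have hdigamma :=
    (integrable_fourierWeight_mul_digamma (s := s) hL (by linarith)).div_const 2
  have hseries := integrable_fourierWeight_mul_LSeries hL (LSeriesSummable_vonMangoldt_add_one hs)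
  simp_rw [fourierWeight_mul_logDeriv_riemannXi_eq hs]
  rw [integral_sub, integral_add, integral_sub, integral_add hpole_zero hpole_one,
    integral_fourierWeight_mul_one_div_sub hL hzero,
    integral_fourierWeight_mul_one_div_sub hL hone, integral_mul_const,
    integral_fourierWeight hL, integral_div, one_mul, zero_sub]
  exacts [hpole_zero.add hpole_one, hconst, (hpole_zero.add hpole_one).sub hconst, hdigamma,
    ((hpole_zero.add hpole_one).sub hconst).add hdigamma, hseries]

lemma hasSum_re_triangleTransform_zeros (hRH : RiemannHypothesis) (hL : 0 < L) (hs : 0 < s.re) :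
    HasSum (fun γ : allOrds ↦
        (ordMult γ : ℝ) * (triangleTransform L (criticalLine γ - s)).re)
      (∫ w : ℝ, (fourierWeight L w : ℂ) * logDeriv riemannXi (s + unitAbscissa w)).re := by
  have hzero (γ : allOrds) : (criticalLine γ).re < s.re + 1 := by
    rw [criticalLine_re]
    linarith
  have hre (w : ℝ) : 1 / 2 < (s + unitAbscissa w).re := by
    rw [Complex.add_re, unitAbscissa_re]
    linarith
  have hxi := integrable_fourierWeight_mul_logDeriv_riemannXi hL hs
  have := countable_allOrds.to_subtype
  have hterm (γ : allOrds) := integrable_fourierWeight_mul_one_div_sub hL (hzero γ)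
  have hinterchange := hasSum_integral_mul_of_nonneg
    (fun γ : allOrds ↦ by
      simpa only [mul_left_comm] using (integrable_mul_re (hterm γ)).const_mul (ordMult γ : ℝ))
    (integrable_mul_re hxi)
    (fun γ w ↦ by
      rw [re_one_div_sub_criticalLine]
      have := sub_pos.mpr (hre w)
      positivity)
    (fun w ↦ hasSum_re_one_div_sub_zeros hRH (hre w))
  rw [re_integral_ofReal_mul hxi]
  refine hinterchange.congr_fun fun γ ↦ ?_
  simp_rw [mul_left_comm _ (ordMult γ : ℝ)]
  rw [integral_const_mul, ← re_integral_ofReal_mul (hterm γ),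
    integral_fourierWeight_mul_one_div_sub hL (hzero γ)]

lemma hasSum_sincSq_zeros (hRH : RiemannHypothesis) (hL : 0 < L) (τ : ℝ) :
    HasSum (fun γ : allOrds ↦ L / 2 * ((ordMult γ : ℝ) * sincSq ((γ - τ) * L / 2)))
      (∫ w : ℝ, (fourierWeight L w : ℂ) *
        logDeriv riemannXi (criticalLine τ + unitAbscissa w)).re := by
  refine (hasSum_re_triangleTransform_zeros hRH hL (s := criticalLine τ) (by simp)).congr_fun
    fun γ ↦ ?_
  have hsub : criticalLine γ - criticalLine τ = ((γ - τ : ℝ) : ℂ) * Complex.I := by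
    simp only [criticalLine]
    push_cast
    ring
  rw [hsub, re_triangleTransform_mul_I hL, mul_left_comm]

lemma re_term_criticalLine (a : ℕ → ℝ) (τ : ℝ) {n : ℕ} (hn : n ≠ 0) :
    (LSeries.term (fun n ↦ (a n : ℂ)) (criticalLine τ) n).re =
      a n / √n * Real.cos (τ * Real.log n) := by
  have hn_pos : (0 : ℝ) < n := by positivity
  have hsqrt : Real.exp (Real.log n * (1 / 2)) = √n := by
    rw [← Real.rpow_def_of_pos hn_pos, Real.sqrt_eq_rpow]
  have hpow : (n : ℂ) ^ (-criticalLine τ) =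
      Complex.exp (-(Real.log n * criticalLine τ)) := by
    rw [Complex.cpow_def_of_ne_zero (by exact_mod_cast hn), Complex.natCast_log, mul_neg]
  rw [LSeries.term_of_ne_zero hn, div_eq_mul_inv, ← Complex.cpow_neg, hpow,
    Complex.re_ofReal_mul, Complex.exp_re, Complex.neg_re, Complex.neg_im,
    Complex.re_ofReal_mul, Complex.im_ofReal_mul, criticalLine_re, criticalLine_im,
    Real.exp_neg, hsqrt, Real.cos_neg, mul_comm τ]
  ring

lemma re_integral_fourierWeight_mul_LSeries_eq_sum {a : ℕ → ℝ} {x : ℝ} (hx : 1 < x) {τ : ℝ}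
    (ha : LSeriesSummable (fun n ↦ (a n : ℂ)) (criticalLine τ + 1)) :
    (∫ w : ℝ, (fourierWeight (Real.log x) w : ℂ) *
      LSeries (fun n ↦ (a n : ℂ)) (criticalLine τ + unitAbscissa w)).re =
      ∑ n ∈ Finset.Icc 1 ⌊x⌋₊,
        a n / √n * (1 - Real.log n / Real.log x) * Real.cos (τ * Real.log n) := by
  have hL : 0 < Real.log x := Real.log_pos hx
  have hsum := Complex.hasSum_re (hasSum_triangle_mul_term hL ha)
  rw [← hsum.tsum_eq, tsum_eq_sum (s := Finset.Icc 1 ⌊x⌋₊)]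
  · refine Finset.sum_congr rfl fun n hn ↦ ?_
    obtain ⟨hn_pos, hn_le⟩ := Finset.mem_Icc.mp hn
    have hnx : (n : ℝ) ≤ x := (Nat.le_floor_iff (by linarith)).mp hn_le
    rw [triangle_eq_of_le hL (Real.log_le_log (by exact_mod_cast hn_pos) hnx),
      Complex.re_ofReal_mul, re_term_criticalLine a τ (by omega)]
    ring
  · intro n hn
    rcases eq_or_ne n 0 with rfl | hn_ne
    · simp
    · have hxn : x < n := Nat.lt_of_floor_lt <| by
        by_contra! hle
        exact hn (Finset.mem_Icc.mpr ⟨Nat.one_le_iff_ne_zero.mpr hn_ne, hle⟩)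
      rw [triangle_eq_zero_of_le hL (Real.log_le_log (by linarith) hxn.le)]
      simp

lemma abs_re_triangleTransform_le_of_abs_re_eq_half (hL : 0 < L) {c : ℂ} {τ : ℝ} (hτ : 0 < τ)
    (hre : |c.re| = 1 / 2) (him : |c.im| = τ) :
    |(triangleTransform L c).re| ≤ 2 * Real.exp (L / 2) / (τ ^ 2 * L) + 1 / (2 * τ ^ 2) := by
  have hnorm : τ ≤ ‖c‖ := him ▸ Complex.abs_im_le_norm c
  have hexp : Real.exp (c.re * L) ≤ Real.exp (L / 2) := by
    apply Real.exp_le_exp.mpr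
    nlinarith [le_abs_self c.re]
  have hone : 1 ≤ Real.exp (L / 2) := Real.one_le_exp (by positivity)
  calc |(triangleTransform L c).re|
      ≤ ((Real.exp (c.re * L) + 1) / L + |c.re|) / ‖c‖ ^ 2 :=
        abs_re_triangleTransform_le hL (norm_pos_iff.mp (hτ.trans_le hnorm))
    _ ≤ ((Real.exp (L / 2) + Real.exp (L / 2)) / L + 1 / 2) / τ ^ 2 := by
        rw [hre]
        gcongr
    _ = _ := by
        field_simp
        ring

lemma abs_re_triangleTransform_poles_le {x τ : ℝ} (hx : 1 < x) (hτ : 0 < τ) :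
    |(triangleTransform (Real.log x) (-criticalLine τ)).re +
      (triangleTransform (Real.log x) (1 - criticalLine τ)).re| ≤
      4 * √x / (τ ^ 2 * Real.log x) + 1 / τ ^ 2 := by
  have hL : 0 < Real.log x := Real.log_pos hx
  have hpole_zero := abs_re_triangleTransform_le_of_abs_re_eq_half hL
    (c := -criticalLine τ) hτ (by norm_num) (by simp [abs_of_pos hτ])
  have hpole_one := abs_re_triangleTransform_le_of_abs_re_eq_half hL
    (c := 1 - criticalLine τ) hτ (by norm_num) (by simp [abs_of_pos hτ])
  refine (abs_add_le _ _).trans ((add_le_add hpole_zero hpole_one).trans_eq ?_)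
  rw [Real.exp_half, Real.exp_log (by linarith)]
  ring

lemma abs_re_integral_fourierWeight_mul_digamma_sub_log_le (hL : 1 / 2 ≤ L) {τ : ℝ}
    (hτ : 1 ≤ τ) :
    |(∫ w : ℝ, (fourierWeight L w : ℂ) *
      Complex.digamma ((criticalLine τ + unitAbscissa w) / 2)).re - Real.log (τ / 2)| ≤
      25 / τ := by
  have hL_pos : 0 < L := by linarith
  have hre : 0 < (criticalLine τ).re := by simp
  have him : (criticalLine τ).im = τ := criticalLine_im τ
  have hτ_pos : 0 < τ := by linarith
  rw [integral_fourierWeight_mul_digamma hL_pos (by linarith)]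
  set z := -(Real.eulerMascheroniConstant : ℂ) + ∫ v in Ioi (0 : ℝ), (gaussKernel v : ℂ) *
    (Complex.exp (-2 * v) - triangle L v * Complex.exp (-criticalLine τ * v))
  have hz : |z.re - (Real.log ‖criticalLine τ‖ - Real.log 2)| ≤ 24 / τ := by
    have hgauss := norm_truncated_gauss_integral_sub_log_le hL_pos hre (by rwa [him])
    rw [him] at hgauss
    have hconst : π * (1 / L + 4) ≤ 24 := by
      have hinv : 1 / L ≤ 2 := by simpa using one_div_le_one_div_of_le (by norm_num) hL
      nlinarith [Real.pi_pos, Real.pi_le_four]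
    calc |z.re - (Real.log ‖criticalLine τ‖ - Real.log 2)|
        = |(z - (Complex.log (criticalLine τ) - Real.log 2)).re| := by
          rw [Complex.sub_re, Complex.sub_re, Complex.log_re, Complex.ofReal_re]
      _ ≤ π * (1 / L + 4) / τ := (Complex.abs_re_le_norm _).trans hgauss
      _ ≤ 24 / τ := by gcongr
  have hlog := abs_log_norm_criticalLine_sub_log_le hτ
  calc |z.re - Real.log (τ / 2)|
      = |(z.re - (Real.log ‖criticalLine τ‖ - Real.log 2)) +
          (Real.log ‖criticalLine τ‖ - Real.log τ)| := by
        rw [Real.log_div hτ_pos.ne' two_ne_zero]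
        ring_nf
    _ ≤ 24 / τ + 1 / τ := (abs_add_le _ _).trans (add_le_add hz hlog)
    _ = 25 / τ := by ring

lemma tsum_sincSq_zeros_eq (hRH : RiemannHypothesis) {x : ℝ} (hx : 1 < x) (τ : ℝ) :
    Real.log x / 2 *
        ∑' γ : allOrds, (ordMult γ : ℝ) * sincSq ((γ - τ) * Real.log x / 2) =
      (triangleTransform (Real.log x) (-criticalLine τ)).re +
      (triangleTransform (Real.log x) (1 - criticalLine τ)).re - Real.log π / 2 +
      (∫ w : ℝ, (fourierWeight (Real.log x) w : ℂ) *
        Complex.digamma ((criticalLine τ + unitAbscissa w) / 2)).re / 2 -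
      ∑ n ∈ Finset.Icc 1 ⌊x⌋₊, ArithmeticFunction.vonMangoldt n / √n *
        (1 - Real.log n / Real.log x) * Real.cos (τ * Real.log n) := by
  have hL : 0 < Real.log x := Real.log_pos hx
  have hs : 0 < (criticalLine τ).re := by simp
  rw [← tsum_mul_left, (hasSum_sincSq_zeros hRH hL τ).tsum_eq,
    integral_fourierWeight_mul_logDeriv_riemannXi hL hs,
    ← re_integral_fourierWeight_mul_LSeries_eq_sum hx (LSeriesSummable_vonMangoldt_add_one hs)]
  simp [-Complex.ofReal_ofNat]

lemma tsum_sincSq_zeros_sub_eq (hRH : RiemannHypothesis) {x τ : ℝ} (hx : 1 < x) (hτ : 0 < τ) :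
    ∑' γ : allOrds, (ordMult γ : ℝ) * sincSq ((γ - τ) * Real.log x / 2) -
      (Real.log (τ / (2 * π)) / Real.log x - 2 / Real.log x *
        ∑ n ∈ Finset.Icc 1 ⌊x⌋₊, ArithmeticFunction.vonMangoldt n / √n *
          (1 - Real.log n / Real.log x) * Real.cos (τ * Real.log n)) =
      2 / Real.log x * ((triangleTransform (Real.log x) (-criticalLine τ)).re +
        (triangleTransform (Real.log x) (1 - criticalLine τ)).re +
        ((∫ w : ℝ, (fourierWeight (Real.log x) w : ℂ) *
          Complex.digamma ((criticalLine τ + unitAbscissa w) / 2)).re -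
            Real.log (τ / 2)) / 2) := by
  have hidentity := eq_div_of_mul_eq (half_pos (Real.log_pos hx)).ne'
    ((mul_comm _ _).trans (tsum_sincSq_zeros_eq hRH hx τ))
  have hlog : Real.log (τ / (2 * π)) = Real.log (τ / 2) - Real.log π := by
    rw [← div_div, Real.log_div (by positivity) Real.pi_pos.ne']
  rw [hidentity, hlog]
  ring

end ExplicitFormula

open scoped ArithmeticFunction in
/-- **Lemma 1 (explicit formula).** Assume RH. Then for all `τ ≥ 2` and `x ≥ 2`,
`Σ_γ (sin(½(γ-τ) log x) / (½(γ-τ) log x))² = log(τ/2π)/log x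
  - (2/log x) Σ_{n≤x} Λ(n) n^{-1/2} (1 - log n/log x) cos(τ log n)
  + O(1/(τ log x)) + O(x^{1/2}/(τ log x)²)`,
the sum on the left being over all ordinates `γ ∈ ℝ` of nontrivial zeros, counted with
multiplicity, with absolute implied constants. -/
theorem explicit_formula (hRH : RiemannHypothesis) :
    ∃ C : ℝ, 0 < C ∧ ∀ τ : ℝ, 2 ≤ τ → ∀ x : ℝ, 2 ≤ x →
      |(∑' γ : allOrds, (ordMult (γ : ℝ) : ℝ) * sincSq ((γ - τ) * Real.log x / 2)) -
        (Real.log (τ / (2 * π)) / Real.log x -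
          2 / Real.log x * ∑ n ∈ Finset.Icc 1 ⌊x⌋₊,
            Λ n / Real.sqrt n * (1 - Real.log n / Real.log x) * Real.cos (τ * Real.log n))|
        ≤ C * (1 / (τ * Real.log x)) + C * (Real.sqrt x / (τ * Real.log x) ^ 2) := by
  refine ⟨27, by norm_num, fun τ hτ x hx ↦ ?_⟩
  have hτ_pos : 0 < τ := by linarith
  have hL : 1 / 2 ≤ Real.log x := by
    linarith [Real.log_two_gt_d9, Real.log_le_log two_pos hx]
  have hL_pos : 0 < Real.log x := by linarith
  have hpoles := abs_re_triangleTransform_poles_le (x := x) (by linarith) hτ_pos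
  have hdigamma := abs_re_integral_fourierWeight_mul_digamma_sub_log_le hL (τ := τ) (by linarith)
  have hsq : 1 / τ ^ 2 ≤ 1 / τ := by gcongr; nlinarith
  have hsqrt : 0 ≤ √x / (τ * Real.log x) ^ 2 := by positivity
  rw [tsum_sincSq_zeros_sub_eq hRH (by linarith) hτ_pos, abs_mul,
    abs_of_pos (div_pos two_pos hL_pos)]
  calc _ ≤ 2 / Real.log x * (4 * √x / (τ ^ 2 * Real.log x) + 1 / τ + 25 / τ / 2) := by
        gcongr
        refine (abs_add_le _ _).trans (add_le_add (hpoles.trans (by gcongr)) ?_)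
        rw [abs_div, abs_two]
        gcongr
    _ = 27 * (1 / (τ * Real.log x)) + 8 * (√x / (τ * Real.log x) ^ 2) := by
        field_simp
        ring
    _ ≤ _ := by linarith
end
end

section
/- There is a positive absolute constant C with the following property (unconditionally): for every integer k ≥ 1 and all reals x ≥ 2 and T ≥ 2 with x^k ≤ T, ∫_0^T | Σ_{p≤x, p prime} (log p) · p^{−1/2−it} · (1 − (log p)/(log x)) |^{2k} dt ≤ C^k · k! · T · ( Σ_{p≤x, p prime} (log p)²/p · (1 − (log p)/(log x))² )^k ≤ C^k · k! · T · (log x)^{2k}. -/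
open Filter MeasureTheory
open scoped Real

noncomputable section

/-!
Up to a constant factor, a Gaussian of width comparable to `T + L` majorises the indicator of
`[0, T]`, and its Fourier transform decays on the scale `1 / (T + L)`. For an exponential sum whose
frequencies are `1 / L`-separated, the off-diagonal terms of the mean square are therefore
controlled by Schur's test, and `∫₀ᵀ |∑ aᵢ e^{iωᵢt}|² dt ≪ (T + L) ∑ |aᵢ|²`. The logarithms of
distinct integers up to `N` are `1 / N`-separated, so this applies with `L = N` to Dirichlet
polynomials of length `N`.

The `k`-th power of a polynomial over primes `p ≤ x` has length `x ^ k`. By unique factorisation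
an integer is an ordered product of `k` primes in at most `k!` ways, so Cauchy–Schwarz bounds the
sum of the squared coefficients of the power by `k! (∑ |a_p|²) ^ k`. Finally, the size of
`∑ |a_p|²` comes from `∑_{p ≤ x} log p / p ≤ 2 log x`, a consequence of
`∏_{p ≤ n} p ^ ⌊n / p⌋ ∣ n! ≤ n ^ n`.
-/

section SeparatedFrequencies

open Complex ComplexConjugate

variable {ι : Type*} {s : Finset ι}

theorem sum_sum_mul_mul_le_of_sum_le {K : ι → ι → ℝ} {M : ℝ}
    (hsymm : ∀ i j, K i j = K j i) (hK : ∀ i j, 0 ≤ K i j)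
    (hrow : ∀ i ∈ s, ∑ j ∈ s, K i j ≤ M) (x : ι → ℝ) :
    ∑ i ∈ s, ∑ j ∈ s, x i * x j * K i j ≤ M * ∑ i ∈ s, x i ^ 2 := by
  have hswap : ∑ i ∈ s, ∑ j ∈ s, x j ^ 2 * K i j = ∑ i ∈ s, ∑ j ∈ s, x i ^ 2 * K i j := by
    rw [Finset.sum_comm]
    simp only [hsymm]
  calc ∑ i ∈ s, ∑ j ∈ s, x i * x j * K i j
      ≤ ∑ i ∈ s, ∑ j ∈ s, (x i ^ 2 * K i j + x j ^ 2 * K i j) / 2 := by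
        gcongr with i _ j _
        nlinarith [mul_nonneg (hK i j) (sq_nonneg (x i - x j))]
    _ = ∑ i ∈ s, x i ^ 2 * ∑ j ∈ s, K i j := by
        simp only [← Finset.sum_div, Finset.sum_add_distrib, hswap, Finset.mul_sum,
          add_self_div_two]
    _ ≤ ∑ i ∈ s, x i ^ 2 * M := by
        gcongr with i hi
        exact hrow i hi
    _ = M * ∑ i ∈ s, x i ^ 2 := by rw [← Finset.sum_mul, mul_comm]

/-- A uniform bound for `∑ exp (-x ^ 2)` over any set of reals `x` with mutual distances at least
`1`: such points have distinct integer parts `m`, and each term is at most `exp (2 - |m|)`. -/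
def separatedGaussianConst : ℝ := ∑' m : ℤ, Real.exp (2 - |(m : ℝ)|)

theorem summable_exp_two_sub_abs_int : Summable fun m : ℤ ↦ Real.exp (2 - |(m : ℝ)|) := by
  simp_rw [sub_eq_add_neg, Real.exp_add]
  refine Summable.mul_left _ (summable_int_iff_summable_nat_and_neg.2 ⟨?_, ?_⟩) <;>
    simpa using Real.summable_exp_neg_nat

theorem separatedGaussianConst_pos : 0 < separatedGaussianConst :=
  summable_exp_two_sub_abs_int.tsum_pos (fun _ ↦ (Real.exp_pos _).le) 0 (Real.exp_pos _)

theorem exp_neg_sq_le_exp_two_sub_abs_floor (x : ℝ) :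
    Real.exp (-x ^ 2) ≤ Real.exp (2 - |(⌊x⌋ : ℝ)|) := by
  have habs : |(⌊x⌋ : ℝ)| ≤ |x| + 1 := by
    rw [abs_le]
    constructor <;> linarith [Int.floor_le x, Int.lt_floor_add_one x, neg_abs_le x, le_abs_self x]
  gcongr
  nlinarith [sq_abs x, sq_nonneg (|x| - 1)]

theorem sum_exp_neg_sq_le_of_separated {x : ι → ℝ}
    (hx : (s : Set ι).Pairwise fun i j ↦ 1 ≤ |x i - x j|) :
    ∑ i ∈ s, Real.exp (-x i ^ 2) ≤ separatedGaussianConst := by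
  have hinj : Set.InjOn (fun i ↦ ⌊x i⌋) s := fun i hi j hj hij ↦ by
    by_contra hne
    exact (hx hi hj hne).not_gt (Int.abs_sub_lt_one_of_floor_eq_floor hij)
  calc ∑ i ∈ s, Real.exp (-x i ^ 2)
      ≤ ∑ i ∈ s, Real.exp (2 - |(⌊x i⌋ : ℝ)|) :=
        Finset.sum_le_sum fun i _ ↦ exp_neg_sq_le_exp_two_sub_abs_floor (x i)
    _ = ∑ m ∈ s.image fun i ↦ ⌊x i⌋, Real.exp (2 - |(m : ℝ)|) := by
        rw [Finset.sum_image hinj]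
    _ ≤ separatedGaussianConst :=
        summable_exp_two_sub_abs_int.sum_le_tsum _ fun _ _ ↦ (Real.exp_pos _).le

/-- The Gaussian weight of width `2 * L`. -/
def gaussianWeight (L t : ℝ) : ℝ := Real.exp (-(t / (2 * L)) ^ 2)

theorem gaussianWeight_nonneg (L t : ℝ) : 0 ≤ gaussianWeight L t := (Real.exp_pos _).le

theorem gaussianWeight_eq_exp_neg_mul_sq (L t : ℝ) :
    gaussianWeight L t = Real.exp (-(4 * L ^ 2)⁻¹ * t ^ 2) := by
  rw [gaussianWeight, div_pow, mul_pow, div_eq_inv_mul]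
  norm_num

theorem integrable_gaussianWeight {L : ℝ} (hL : 0 < L) : Integrable (gaussianWeight L) := by
  rw [funext (gaussianWeight_eq_exp_neg_mul_sq L)]
  exact integrable_exp_neg_mul_sq (by positivity)

theorem one_le_two_mul_gaussianWeight {L t : ℝ} (ht : 0 ≤ t) (htL : t ≤ L) :
    1 ≤ 2 * gaussianWeight L t := by
  have hratio : (t / (2 * L)) ^ 2 ≤ (1 / 2) ^ 2 := by
    have hL : 0 ≤ L := ht.trans htL
    have : t / (2 * L) ≤ 1 / 2 := div_le_of_le_mul₀ (by positivity) (by positivity) (by linarith)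
    gcongr
  have := Real.add_one_le_exp (-(t / (2 * L)) ^ 2)
  rw [gaussianWeight]
  linarith

theorem integrable_norm_expSum_sq_mul_gaussianWeight (a : ι → ℂ) (ω : ι → ℝ) {L : ℝ} (hL : 0 < L) :
    Integrable fun t : ℝ ↦ ‖∑ i ∈ s, a i * cexp (ω i * t * I)‖ ^ 2 * gaussianWeight L t := by
  refine (integrable_gaussianWeight hL).bdd_mul (c := (∑ i ∈ s, ‖a i‖) ^ 2)
    (Continuous.aestronglyMeasurable (by fun_prop)) (ae_of_all _ fun t ↦ ?_)
  rw [norm_pow, norm_norm]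
  gcongr
  refine norm_sum_le_of_le _ fun i _ ↦ ?_
  rw [norm_mul, ← ofReal_mul, norm_exp_ofReal_mul_I, mul_one]

theorem integrable_cexp_mul_gaussianWeight {L : ℝ} (hL : 0 < L) (ω : ℝ) :
    Integrable fun t : ℝ ↦ cexp (ω * t * I) * (gaussianWeight L t : ℂ) := by
  refine (integrable_gaussianWeight hL).ofReal.bdd_mul (c := 1)
    (Continuous.aestronglyMeasurable (by fun_prop)) (ae_of_all _ fun t ↦ ?_)
  rw [← ofReal_mul, norm_exp_ofReal_mul_I]

theorem integral_cexp_mul_gaussianWeight {L : ℝ} (hL : 0 < L) (ω : ℝ) :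
    ∫ t : ℝ, cexp (ω * t * I) * (gaussianWeight L t : ℂ) =
      (2 * √π * L * Real.exp (-(L * ω) ^ 2) : ℝ) := by
  have hsqrt : √(π / (4 * L ^ 2)⁻¹) = 2 * √π * L := by
    rw [div_inv_eq_mul, Real.sqrt_eq_iff_eq_sq (by positivity) (by positivity), mul_pow, mul_pow,
      Real.sq_sqrt Real.pi_pos.le]
    ring
  have hfactor : ((π : ℂ) / ((4 * L ^ 2)⁻¹ : ℝ)) ^ (1 / 2 : ℂ) = (2 * √π * L : ℝ) := by
    rw [← hsqrt, Real.sqrt_eq_rpow, ofReal_cpow (by positivity)]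
    push_cast
    rfl
  have hb : 0 < (((4 * L ^ 2)⁻¹ : ℝ) : ℂ).re := by rw [ofReal_re]; positivity
  have hgauss := fourierIntegral_gaussian hb ω
  rw [hfactor] at hgauss
  convert hgauss using 1
  · congr with t
    rw [gaussianWeight_eq_exp_neg_mul_sq]
    push_cast
    ring_nf
  · push_cast
    congr 2
    field_simp

theorem integral_norm_expSum_sq_mul_gaussianWeight (a : ι → ℂ) (ω : ι → ℝ) {L : ℝ} (hL : 0 < L) :
    ((∫ t : ℝ, ‖∑ i ∈ s, a i * cexp (ω i * t * I)‖ ^ 2 * gaussianWeight L t : ℝ) : ℂ) =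
      ∑ i ∈ s, ∑ j ∈ s, a i * conj (a j) *
        (2 * √π * L * Real.exp (-(L * (ω i - ω j)) ^ 2) : ℝ) := by
  have hexpand (t : ℝ) :
      ((‖∑ i ∈ s, a i * cexp (ω i * t * I)‖ ^ 2 * gaussianWeight L t : ℝ) : ℂ) =
      ∑ i ∈ s, ∑ j ∈ s, a i * conj (a j) *
        (cexp ((ω i - ω j : ℝ) * t * I) * (gaussianWeight L t : ℂ)) := by
    rw [ofReal_mul, ofReal_pow, ← mul_conj', map_sum, Finset.sum_mul_sum, Finset.sum_mul]
    refine Finset.sum_congr rfl fun i _ ↦ ?_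
    rw [Finset.sum_mul]
    refine Finset.sum_congr rfl fun j _ ↦ ?_
    have hphase : cexp ((ω i - ω j : ℝ) * t * I) =
        cexp (ω i * t * I) * conj (cexp (ω j * t * I)) := by
      rw [← exp_conj, ← exp_add]
      simp only [map_mul, conj_ofReal, conj_I]
      push_cast
      ring_nf
    rw [hphase, map_mul]
    ring
  have hint (i j : ι) :=
    (integrable_cexp_mul_gaussianWeight hL (ω i - ω j)).const_mul (a i * conj (a j))
  rw [← integral_complex_ofReal]
  simp_rw [hexpand]
  rw [integral_finsetSum _ fun i _ ↦ integrable_finsetSum _ fun j _ ↦ hint i j]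
  refine Finset.sum_congr rfl fun i _ ↦ ?_
  rw [integral_finsetSum _ fun j _ ↦ hint i j]
  simp_rw [integral_const_mul, integral_cexp_mul_gaussianWeight hL]

theorem integral_norm_expSum_sq_mul_gaussianWeight_le (a : ι → ℂ) {ω : ι → ℝ} {L : ℝ} (hL : 0 < L)
    (hω : (s : Set ι).Pairwise fun i j ↦ 1 ≤ L * |ω i - ω j|) :
    ∫ t : ℝ, ‖∑ i ∈ s, a i * cexp (ω i * t * I)‖ ^ 2 * gaussianWeight L t ≤
      2 * √π * L * (separatedGaussianConst * ∑ i ∈ s, ‖a i‖ ^ 2) := by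
  have hrow : ∀ i ∈ s, ∑ j ∈ s, Real.exp (-(L * (ω i - ω j)) ^ 2) ≤ separatedGaussianConst := by
    refine fun i _ ↦ sum_exp_neg_sq_le_of_separated fun j hj l hl hjl ↦ ?_
    beta_reduce
    rw [← mul_sub, sub_sub_sub_cancel_left, abs_mul, abs_of_pos hL]
    exact hω hl hj hjl.symm
  have hsymm (i j : ι) : Real.exp (-(L * (ω i - ω j)) ^ 2) = Real.exp (-(L * (ω j - ω i)) ^ 2) := by
    ring_nf
  refine (Real.le_norm_self _).trans ?_
  rw [← norm_real, integral_norm_expSum_sq_mul_gaussianWeight a ω hL]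
  calc _ ≤ ∑ i ∈ s, ∑ j ∈ s,
        2 * √π * L * (‖a i‖ * ‖a j‖ * Real.exp (-(L * (ω i - ω j)) ^ 2)) := by
        refine norm_sum_le_of_le _ fun i _ ↦ norm_sum_le_of_le _ fun j _ ↦ le_of_eq ?_
        rw [norm_mul, norm_mul, norm_conj, norm_real, Real.norm_of_nonneg (by positivity)]
        ring
    _ = 2 * √π * L *
        ∑ i ∈ s, ∑ j ∈ s, ‖a i‖ * ‖a j‖ * Real.exp (-(L * (ω i - ω j)) ^ 2) := by
        simp only [Finset.mul_sum]
    _ ≤ 2 * √π * L * (separatedGaussianConst * ∑ i ∈ s, ‖a i‖ ^ 2) := by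
        gcongr
        exact sum_sum_mul_mul_le_of_sum_le hsymm (fun _ _ ↦ (Real.exp_pos _).le) hrow _

/-- The absolute constant in the mean value theorem for exponential sums with separated
frequencies. -/
def meanValueConst : ℝ := 4 * √π * separatedGaussianConst

theorem meanValueConst_pos : 0 < meanValueConst :=
  mul_pos (by positivity) separatedGaussianConst_pos

theorem integral_norm_expSum_sq_le (a : ι → ℂ) {ω : ι → ℝ} {L T : ℝ} (hL : 0 < L) (hT : 0 ≤ T)
    (hω : (s : Set ι).Pairwise fun i j ↦ 1 ≤ L * |ω i - ω j|) :
    ∫ t in (0 : ℝ)..T, ‖∑ i ∈ s, a i * cexp (ω i * t * I)‖ ^ 2 ≤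
      meanValueConst * (T + L) * ∑ i ∈ s, ‖a i‖ ^ 2 := by
  have hTL : 0 < T + L := by positivity
  have hω' : (s : Set ι).Pairwise fun i j ↦ 1 ≤ (T + L) * |ω i - ω j| :=
    hω.mono' fun i j h ↦ h.trans (by gcongr; linarith)
  set F : ℝ → ℝ := fun t ↦ ‖∑ i ∈ s, a i * cexp (ω i * t * I)‖ ^ 2
  have hint : Integrable fun t ↦ F t * gaussianWeight (T + L) t :=
    integrable_norm_expSum_sq_mul_gaussianWeight a ω hTL
  calc ∫ t in (0 : ℝ)..T, F t
      ≤ ∫ t in (0 : ℝ)..T, 2 * (F t * gaussianWeight (T + L) t) := by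
        refine intervalIntegral.integral_mono_on hT
          (Continuous.intervalIntegrable (by fun_prop) _ _)
          (hint.const_mul 2).intervalIntegrable fun t ht ↦ ?_
        rw [mul_left_comm]
        exact le_mul_of_one_le_right (by positivity)
          (one_le_two_mul_gaussianWeight ht.1 (by linarith [ht.2]))
    _ = 2 * ∫ t in (0 : ℝ)..T, F t * gaussianWeight (T + L) t :=
        intervalIntegral.integral_const_mul _ _
    _ ≤ 2 * ∫ t, F t * gaussianWeight (T + L) t := by
        rw [intervalIntegral.integral_of_le hT]
        gcongr
        · exact ae_of_all _ fun t ↦ mul_nonneg (sq_nonneg _) (gaussianWeight_nonneg _ t)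
        · exact Measure.restrict_le_self
    _ ≤ 2 * (2 * √π * (T + L) * (separatedGaussianConst * ∑ i ∈ s, ‖a i‖ ^ 2)) := by
        gcongr
        exact integral_norm_expSum_sq_mul_gaussianWeight_le a hTL hω'
    _ = meanValueConst * (T + L) * ∑ i ∈ s, ‖a i‖ ^ 2 := by
        rw [meanValueConst]
        ring

end SeparatedFrequencies

section DirichletPolynomial

open Complex
open scoped Pointwise

theorem inv_le_log_sub_log_of_lt {m n : ℕ} (hm : m ≠ 0) (hmn : m < n) :
    (n : ℝ)⁻¹ ≤ Real.log n - Real.log m := by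
  have hm' : (0 : ℝ) < m := by positivity
  have hn' : (0 : ℝ) < n := hm'.trans (by exact_mod_cast hmn)
  have hgap : (m : ℝ) + 1 ≤ n := by exact_mod_cast hmn
  calc (n : ℝ)⁻¹ ≤ 1 - (n / m : ℝ)⁻¹ := by
        rw [inv_div, ← one_div, one_sub_div hn'.ne']
        gcongr
        linarith
    _ ≤ Real.log (n / m) := Real.one_sub_inv_le_log_of_pos (by positivity)
    _ = Real.log n - Real.log m := Real.log_div hn'.ne' hm'.ne'

theorem one_le_mul_abs_log_sub_log {N : ℝ} {m n : ℕ} (hm : m ≠ 0) (hn : n ≠ 0) (hmN : m ≤ N)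
    (hnN : n ≤ N) (hmn : m ≠ n) : 1 ≤ N * |Real.log m - Real.log n| := by
  wlog hlt : m < n generalizing m n
  · rw [abs_sub_comm]
    exact this hn hm hnN hmN hmn.symm (by lia)
  have hn' : (0 : ℝ) < n := by positivity
  calc (1 : ℝ) = n * (n : ℝ)⁻¹ := (mul_inv_cancel₀ hn'.ne').symm
    _ ≤ N * (Real.log n - Real.log m) := by
        gcongr
        · exact hn'.le.trans hnN
        · exact inv_le_log_sub_log_of_lt hm hlt
    _ ≤ N * |Real.log m - Real.log n| := by
        rw [abs_sub_comm]
        gcongr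
        · exact hn'.le.trans hnN
        · exact le_abs_self _

theorem natCast_cpow_neg_mul_I {n : ℕ} (hn : n ≠ 0) (t : ℝ) :
    (n : ℂ) ^ (-(t * I)) = cexp ((-Real.log n : ℝ) * t * I) := by
  rw [cpow_def_of_ne_zero (Nat.cast_ne_zero.2 hn), ← natCast_log]
  push_cast
  ring_nf

theorem integral_norm_dirichletPoly_sq_le {s : Finset ℕ} {N T : ℝ} (hN : 0 < N) (hT : 0 ≤ T)
    (hs : ∀ n ∈ s, n ≠ 0 ∧ n ≤ N) (a : ℕ → ℂ) :
    ∫ t in (0 : ℝ)..T, ‖∑ n ∈ s, a n * (n : ℂ) ^ (-(t * I))‖ ^ 2 ≤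
      meanValueConst * (T + N) * ∑ n ∈ s, ‖a n‖ ^ 2 := by
  have hsep : (s : Set ℕ).Pairwise fun m n ↦ 1 ≤ N * |-Real.log m - -Real.log n| := by
    intro m hm n hn hmn
    rw [neg_sub_neg]
    exact one_le_mul_abs_log_sub_log (hs n hn).1 (hs m hm).1 (hs n hn).2 (hs m hm).2 hmn.symm
  have hexp (t : ℝ) : ∑ n ∈ s, a n * (n : ℂ) ^ (-(t * I)) =
      ∑ n ∈ s, a n * cexp ((-Real.log n : ℝ) * t * I) :=
    Finset.sum_congr rfl fun n hn ↦ by rw [natCast_cpow_neg_mul_I (hs n hn).1]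
  simp_rw [hexp]
  exact integral_norm_expSum_sq_le a hN hT hsep

/-- The coefficient of `n ^ (-s)` in the `k`-th power of the Dirichlet polynomial
`∑ m ∈ S, a m * m ^ (-s)`. It vanishes unless `n` lies in the pointwise power `S ^ k`, the set of
`k`-fold products of elements of `S`. -/
def dirichletPowCoeff {R : Type*} [CommSemiring R] (S : Finset ℕ) (a : ℕ → R) (k n : ℕ) : R :=
  ∑ f ∈ Fintype.piFinset (fun _ : Fin k ↦ S) with ∏ i, f i = n, ∏ i, a (f i)

theorem prod_mem_pow_of_mem_piFinset {M : Type*} [CommMonoid M] [DecidableEq M] {S : Finset M}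
    {k : ℕ} {f : Fin k → M} (hf : f ∈ Fintype.piFinset fun _ ↦ S) : ∏ i, f i ∈ S ^ k :=
  Finset.mem_pow.2 ⟨fun i ↦ ⟨f i, Fintype.mem_piFinset.1 hf i⟩, List.prod_ofFn⟩

theorem sum_mul_monoidHom_pow {R : Type*} [CommSemiring R] (S : Finset ℕ) (a : ℕ → R) (χ : ℕ →* R)
    (k : ℕ) :
    (∑ m ∈ S, a m * χ m) ^ k = ∑ n ∈ S ^ k, dirichletPowCoeff S a k n * χ n := by
  rw [Finset.sum_pow', ← Finset.sum_fiberwise_of_maps_to (t := S ^ k)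
    fun f hf ↦ prod_mem_pow_of_mem_piFinset hf]
  refine Finset.sum_congr rfl fun n _ ↦ ?_
  rw [dirichletPowCoeff, Finset.sum_mul]
  refine Finset.sum_congr rfl fun f hf ↦ ?_
  rw [Finset.prod_mul_distrib, ← map_prod, (Finset.mem_filter.1 hf).2]

theorem card_piFinset_primes_filter_prod_eq_le {S : Finset ℕ} (hS : ∀ p ∈ S, p.Prime) (k n : ℕ) :
    Finset.card {f ∈ Fintype.piFinset fun _ : Fin k ↦ S | ∏ i, f i = n} ≤ k.factorial := by
  set fiber := {f ∈ Fintype.piFinset fun _ : Fin k ↦ S | ∏ i, f i = n}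
  have hperm : ∀ f ∈ fiber, (List.ofFn f).Perm n.primeFactorsList := by
    intro f hf
    obtain ⟨hfS, hprod⟩ := Finset.mem_filter.1 hf
    refine Nat.primeFactorsList_unique (List.prod_ofFn.trans hprod) fun p hp ↦ ?_
    obtain ⟨i, rfl⟩ := List.mem_ofFn.1 hp
    exact hS _ (Fintype.mem_piFinset.1 hfS i)
  rcases fiber.eq_empty_or_nonempty with hempty | ⟨f₀, hf₀⟩
  · simp [hempty]
  calc fiber.card ≤ n.primeFactorsList.permutations.toFinset.card :=
        Finset.card_le_card_of_injOn List.ofFn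
          (fun f hf ↦ List.mem_toFinset.2 (List.mem_permutations.2 (hperm f hf)))
          List.ofFn_injective.injOn
    _ ≤ n.primeFactorsList.permutations.length := List.toFinset_card_le _
    _ = k.factorial := by
        rw [List.length_permutations, ← (hperm f₀ hf₀).length_eq, List.length_ofFn]

theorem sum_norm_dirichletPowCoeff_sq_le {S : Finset ℕ} (hS : ∀ p ∈ S, p.Prime) (a : ℕ → ℂ)
    (k : ℕ) :
    ∑ n ∈ S ^ k, ‖dirichletPowCoeff S a k n‖ ^ 2 ≤ k.factorial * (∑ p ∈ S, ‖a p‖ ^ 2) ^ k := by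
  have hcoeff (n : ℕ) : ‖dirichletPowCoeff S a k n‖ ^ 2 ≤ k.factorial *
      ∑ f ∈ Fintype.piFinset (fun _ : Fin k ↦ S) with ∏ i, f i = n, ∏ i, ‖a (f i)‖ ^ 2 := by
    calc ‖dirichletPowCoeff S a k n‖ ^ 2
        ≤ (∑ f ∈ Fintype.piFinset (fun _ : Fin k ↦ S) with ∏ i, f i = n, ∏ i, ‖a (f i)‖) ^ 2 := by
          gcongr
          exact norm_sum_le_of_le _ fun f _ ↦ (norm_prod _ _).le
      _ ≤ _ := sq_sum_le_card_mul_sum_sq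
      _ ≤ _ := by
          simp_rw [← Finset.prod_pow]
          gcongr
          exact card_piFinset_primes_filter_prod_eq_le hS k n
  calc ∑ n ∈ S ^ k, ‖dirichletPowCoeff S a k n‖ ^ 2
      ≤ ∑ n ∈ S ^ k, k.factorial *
          ∑ f ∈ Fintype.piFinset (fun _ : Fin k ↦ S) with ∏ i, f i = n, ∏ i, ‖a (f i)‖ ^ 2 :=
        Finset.sum_le_sum fun n _ ↦ hcoeff n
    _ = k.factorial * (∑ p ∈ S, ‖a p‖ ^ 2) ^ k := by
        rw [← Finset.mul_sum, Finset.sum_fiberwise_of_maps_to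
          fun f hf ↦ prod_mem_pow_of_mem_piFinset hf, Finset.sum_pow']

theorem ne_zero_and_le_pow_of_mem_pow {S : Finset ℕ} {x : ℝ} (hS : ∀ m ∈ S, m ≠ 0 ∧ m ≤ x) {k n : ℕ}
    (hn : n ∈ S ^ k) : n ≠ 0 ∧ n ≤ x ^ k := by
  induction k generalizing n with
  | zero => simp_all
  | succ k ih =>
    obtain ⟨l, hl, m, hm, rfl⟩ := Finset.mem_mul.1 (pow_succ S k ▸ hn)
    obtain ⟨hl0, hlx⟩ := ih hl
    obtain ⟨hm0, hmx⟩ := hS m hm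
    refine ⟨mul_ne_zero hl0 hm0, ?_⟩
    have hx : 0 ≤ x := m.cast_nonneg.trans hmx
    push_cast
    rw [pow_succ]
    gcongr

/-- The completely multiplicative function `n ↦ n ^ s`. -/
def natCpowHom (s : ℂ) : ℕ →* ℂ where
  toFun n := (n : ℂ) ^ s
  map_one' := by simp
  map_mul' m n := by rw [Nat.cast_mul, natCast_mul_natCast_cpow]

theorem integral_norm_primeDirichletPoly_pow_le {S : Finset ℕ} {x T : ℝ} (hx : 0 < x) (hT : 0 ≤ T)
    (hS : ∀ p ∈ S, p.Prime) (hSx : ∀ p ∈ S, p ≤ x) (a : ℕ → ℂ) (k : ℕ) :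
    ∫ t in (0 : ℝ)..T, ‖∑ p ∈ S, a p * (p : ℂ) ^ (-(t * I))‖ ^ (2 * k) ≤
      meanValueConst * (T + x ^ k) * (k.factorial * (∑ p ∈ S, ‖a p‖ ^ 2) ^ k) := by
  have hpow (t : ℝ) : ‖∑ p ∈ S, a p * (p : ℂ) ^ (-(t * I))‖ ^ (2 * k) =
      ‖∑ n ∈ S ^ k, dirichletPowCoeff S a k n * (n : ℂ) ^ (-(t * I))‖ ^ 2 := by
    rw [mul_comm 2 k, pow_mul, ← norm_pow]
    exact congrArg (‖·‖ ^ 2) (sum_mul_monoidHom_pow S a (natCpowHom (-(t * I))) k)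
  simp_rw [hpow]
  calc _ ≤ meanValueConst * (T + x ^ k) * ∑ n ∈ S ^ k, ‖dirichletPowCoeff S a k n‖ ^ 2 :=
        integral_norm_dirichletPoly_sq_le (pow_pos hx k) hT
          (fun n hn ↦ ne_zero_and_le_pow_of_mem_pow (fun p hp ↦ ⟨(hS p hp).ne_zero, hSx p hp⟩) hn) _
    _ ≤ _ := by
        gcongr
        · exact mul_nonneg meanValueConst_pos.le (by positivity)
        · exact sum_norm_dirichletPowCoeff_sq_le hS a k

end DirichletPolynomial

section Mertens

theorem prod_primesBelow_pow_div_dvd_factorial (n : ℕ) :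
    ∏ p ∈ Nat.primesBelow (n + 1), p ^ (n / p) ∣ n.factorial := by
  refine Finset.prod_dvd_of_isRelPrime (fun p hp q hq hpq ↦ ?_) fun p hp ↦ ?_
  · exact Nat.coprime_iff_isRelPrime.1 <| Nat.coprime_pow_primes _ _
      (Nat.prime_of_mem_primesBelow hp) (Nat.prime_of_mem_primesBelow hq) hpq
  · rw [(Nat.prime_of_mem_primesBelow hp).pow_dvd_factorial_iff
      (b := Nat.log p n + 2) (by lia)]
    simpa using Finset.single_le_sum (f := fun i ↦ n / p ^ i) (s := Finset.Ico 1 (Nat.log p n + 2))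
      (fun _ _ ↦ Nat.zero_le _) (Finset.mem_Ico.2 ⟨le_rfl, by lia⟩)

theorem sum_div_mul_log_primesBelow_le (n : ℕ) :
    ∑ p ∈ Nat.primesBelow (n + 1), ((n / p : ℕ) : ℝ) * Real.log p ≤ n * Real.log n := by
  have hle : ∏ p ∈ Nat.primesBelow (n + 1), p ^ (n / p) ≤ n ^ n :=
    (Nat.le_of_dvd n.factorial_pos (prod_primesBelow_pow_div_dvd_factorial n)).trans
      n.factorial_le_pow
  have hpos : ∀ p ∈ Nat.primesBelow (n + 1), 0 < p ^ (n / p) := fun p hp ↦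
    pow_pos (Nat.prime_of_mem_primesBelow hp).pos _
  calc ∑ p ∈ Nat.primesBelow (n + 1), ((n / p : ℕ) : ℝ) * Real.log p
      = Real.log (∏ p ∈ Nat.primesBelow (n + 1), p ^ (n / p) : ℕ) := by
        rw [Nat.cast_prod, Real.log_prod fun p hp ↦ Nat.cast_ne_zero.2 (hpos p hp).ne']
        simp only [Nat.cast_pow, Real.log_pow]
    _ ≤ Real.log (n ^ n : ℕ) :=
        Real.log_le_log (Nat.cast_pos.2 (Finset.prod_pos hpos)) (Nat.cast_le.2 hle)
    _ = n * Real.log n := by rw [Nat.cast_pow, Real.log_pow]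

theorem sum_log_div_primesBelow_le (n : ℕ) :
    ∑ p ∈ Nat.primesBelow (n + 1), Real.log p / p ≤ 2 * Real.log n := by
  rcases n.eq_zero_or_pos with rfl | hn
  · simp [Nat.primesBelow, Finset.sum_filter]
  have hfloor : ∀ p ∈ Nat.primesBelow (n + 1), (n : ℝ) / p ≤ 2 * (n / p : ℕ) := by
    intro p hp
    have hp0 := (Nat.prime_of_mem_primesBelow hp).pos
    have hquot : 1 ≤ n / p :=
      (Nat.one_le_div_iff hp0).2 (Nat.lt_succ_iff.1 (Nat.lt_of_mem_primesBelow hp))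
    have hlt : n < 2 * (n / p) * p := by nlinarith [Nat.lt_div_mul_add (a := n) hp0]
    rw [div_le_iff₀ (by positivity)]
    exact_mod_cast hlt.le
  refine le_of_mul_le_mul_left ?_ (Nat.cast_pos.2 hn : (0 : ℝ) < n)
  calc n * ∑ p ∈ Nat.primesBelow (n + 1), Real.log p / p
      = ∑ p ∈ Nat.primesBelow (n + 1), (n : ℝ) / p * Real.log p := by
        rw [Finset.mul_sum]
        exact Finset.sum_congr rfl fun p _ ↦ by ring
    _ ≤ ∑ p ∈ Nat.primesBelow (n + 1), 2 * (n / p : ℕ) * Real.log p := by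
        gcongr with p hp
        exact hfloor p hp
    _ = 2 * ∑ p ∈ Nat.primesBelow (n + 1), ((n / p : ℕ) : ℝ) * Real.log p := by
        simp only [Finset.mul_sum, mul_assoc]
    _ ≤ 2 * (n * Real.log n) := by
        gcongr
        exact sum_div_mul_log_primesBelow_le n
    _ = n * (2 * Real.log n) := by ring

theorem natCast_le_of_mem_primesBelow_floor {x : ℝ} (hx : 0 ≤ x) {p : ℕ}
    (hp : p ∈ Nat.primesBelow (⌊x⌋₊ + 1)) : (p : ℝ) ≤ x :=
  (Nat.le_floor_iff hx).1 (Nat.lt_succ_iff.1 (Nat.lt_of_mem_primesBelow hp))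

theorem sum_log_sq_div_mul_tent_sq_le {x : ℝ} (hx : 1 < x) :
    ∑ p ∈ Nat.primesBelow (⌊x⌋₊ + 1),
      Real.log p ^ 2 / p * (1 - Real.log p / Real.log x) ^ 2 ≤ Real.log x ^ 2 := by
  have hL : 0 < Real.log x := Real.log_pos hx
  have hterm : ∀ p ∈ Nat.primesBelow (⌊x⌋₊ + 1),
      Real.log p * (1 - Real.log p / Real.log x) ^ 2 ≤ Real.log x / 2 := by
    intro p hp
    have hp0 : (0 : ℝ) < p := Nat.cast_pos.2 (Nat.prime_of_mem_primesBelow hp).pos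
    have hlog : Real.log p ≤ Real.log x :=
      Real.log_le_log hp0 (natCast_le_of_mem_primesBelow_floor (by linarith) hp)
    set u := Real.log p / Real.log x with hu
    have hu0 : 0 ≤ u := div_nonneg (Real.log_natCast_nonneg p) hL.le
    have hu1 : u ≤ 1 := (div_le_one hL).2 hlog
    rw [← (eq_div_iff hL.ne').1 hu]
    have hcubic : u * (1 - u) ^ 2 ≤ 1 / 2 := by
      nlinarith [sq_nonneg (u - 1 / 2), mul_nonneg hu0 hu0]
    nlinarith
  calc _ = ∑ p ∈ Nat.primesBelow (⌊x⌋₊ + 1),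
        Real.log p / p * (Real.log p * (1 - Real.log p / Real.log x) ^ 2) :=
        Finset.sum_congr rfl fun p _ ↦ by ring
    _ ≤ ∑ p ∈ Nat.primesBelow (⌊x⌋₊ + 1), Real.log p / p * (Real.log x / 2) := by
        gcongr with p hp
        exact hterm p hp
    _ ≤ 2 * Real.log ⌊x⌋₊ * (Real.log x / 2) := by
        rw [← Finset.sum_mul]
        gcongr
        exact sum_log_div_primesBelow_le _
    _ ≤ 2 * Real.log x * (Real.log x / 2) := by
        gcongr
        · exact Nat.cast_pos.2 (Nat.floor_pos.2 hx.le)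
        · exact Nat.floor_le (by linarith)
    _ = Real.log x ^ 2 := by ring

end Mertens

section TentCoefficients

open Complex

/-- The coefficient of `n ^ (-(t * I))` in the Dirichlet polynomial with the weights
`log n * (1 - log n / log x)`, taken at the point `1 / 2 + t * I` of the critical line. -/
def tentCoeff (x : ℝ) (n : ℕ) : ℂ :=
  Real.log n * (n : ℂ) ^ (-(1 / 2 : ℂ)) * (1 - Real.log n / Real.log x)

theorem log_mul_cpow_mul_tent_eq {n : ℕ} (hn : n ≠ 0) (x t : ℝ) :
    (Real.log n : ℂ) * (n : ℂ) ^ (-(1 / 2 : ℂ) - t * I) * (1 - Real.log n / Real.log x) =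
      tentCoeff x n * (n : ℂ) ^ (-(t * I)) := by
  rw [tentCoeff, sub_eq_add_neg, cpow_add _ _ (Nat.cast_ne_zero.2 hn)]
  ring

theorem norm_tentCoeff_sq {n : ℕ} (hn : n ≠ 0) (x : ℝ) :
    ‖tentCoeff x n‖ ^ 2 = Real.log n ^ 2 / n * (1 - Real.log n / Real.log x) ^ 2 := by
  have hcpow : ‖(n : ℂ) ^ (-(1 / 2 : ℂ))‖ ^ 2 = (n : ℝ)⁻¹ := by
    rw [norm_natCast_cpow_of_pos (Nat.pos_of_ne_zero hn), ← Real.rpow_natCast,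
      ← Real.rpow_mul n.cast_nonneg, ← Real.rpow_neg_one]
    norm_num
  have hfactor : ‖(1 - Real.log n / Real.log x : ℂ)‖ ^ 2 =
      (1 - Real.log n / Real.log x) ^ 2 := by
    rw [← ofReal_one, ← ofReal_div, ← ofReal_sub, norm_real, Real.norm_eq_abs, sq_abs]
  rw [tentCoeff, norm_mul, norm_mul, mul_pow, mul_pow, hcpow, hfactor, norm_real,
    Real.norm_eq_abs, sq_abs, ← div_eq_mul_inv]

theorem integral_norm_sum_tent_pow_le {x T : ℝ} (hx : 0 < x) (hT : 0 ≤ T) (k : ℕ) :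
    ∫ t in (0 : ℝ)..T, ‖∑ p ∈ Nat.primesBelow (⌊x⌋₊ + 1),
        (Real.log p : ℂ) * (p : ℂ) ^ (-(1 / 2 : ℂ) - t * I) *
          (1 - Real.log p / Real.log x)‖ ^ (2 * k) ≤
      meanValueConst * (T + x ^ k) * (k.factorial * (∑ p ∈ Nat.primesBelow (⌊x⌋₊ + 1),
        Real.log p ^ 2 / p * (1 - Real.log p / Real.log x) ^ 2) ^ k) := by
  have hprime : ∀ p ∈ Nat.primesBelow (⌊x⌋₊ + 1), p.Prime := fun p hp ↦
    Nat.prime_of_mem_primesBelow hp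
  have hpoly (t : ℝ) := Finset.sum_congr rfl fun p hp ↦
    log_mul_cpow_mul_tent_eq (hprime p hp).ne_zero x t
  have hnorm := Finset.sum_congr rfl fun p hp ↦ norm_tentCoeff_sq (hprime p hp).ne_zero x
  simp_rw [hpoly, ← hnorm]
  exact integral_norm_primeDirichletPoly_pow_le hx hT hprime
    (fun p hp ↦ natCast_le_of_mem_primesBelow_floor hx.le hp) _ k

end TentCoefficients

/-- **Moment bound for a Dirichlet polynomial over primes** (unconditional). There is a
positive absolute constant `C` such that for every integer `k ≥ 1` and all reals `x ≥ 2`,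
`T ≥ 2` with `x^k ≤ T`,
`∫₀^T |Σ_{p≤x} (log p) p^{-1/2-it} (1 - log p/log x)|^{2k} dt
  ≤ C^k k! T (Σ_{p≤x} (log p)²/p (1 - log p/log x)²)^k ≤ C^k k! T (log x)^{2k}`. -/
theorem prime_dirichlet_poly_moment :
    ∃ C : ℝ, 0 < C ∧ ∀ k : ℕ, 1 ≤ k → ∀ x : ℝ, 2 ≤ x → ∀ T : ℝ, 2 ≤ T → x ^ k ≤ T →
      (∫ t in (0:ℝ)..T, ‖∑ p ∈ Nat.primesBelow (⌊x⌋₊ + 1),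
          (Real.log p : ℂ) * (p : ℂ) ^ (-(1/2 : ℂ) - t * Complex.I) *
            ((1 : ℂ) - Real.log p / Real.log x)‖ ^ (2 * k)) ≤
        C ^ k * (k.factorial : ℝ) * T *
          (∑ p ∈ Nat.primesBelow (⌊x⌋₊ + 1),
            (Real.log p) ^ 2 / p * (1 - Real.log p / Real.log x) ^ 2) ^ k ∧
      C ^ k * (k.factorial : ℝ) * T *
          (∑ p ∈ Nat.primesBelow (⌊x⌋₊ + 1),
            (Real.log p) ^ 2 / p * (1 - Real.log p / Real.log x) ^ 2) ^ k ≤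
        C ^ k * (k.factorial : ℝ) * T * Real.log x ^ (2 * k) := by
  refine ⟨1 + 2 * meanValueConst, by linarith [meanValueConst_pos], fun k hk x hx T hT hxT ↦ ?_⟩
  set V := ∑ p ∈ Nat.primesBelow (⌊x⌋₊ + 1),
    Real.log p ^ 2 / p * (1 - Real.log p / Real.log x) ^ 2
  have : 0 ≤ V := Finset.sum_nonneg fun p _ ↦ by positivity
  have hC := meanValueConst_pos
  constructor
  · calc _ ≤ meanValueConst * (T + x ^ k) * (k.factorial * V ^ k) :=
          integral_norm_sum_tent_pow_le (by linarith) (by linarith) k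
      _ ≤ meanValueConst * (T + T) * (k.factorial * V ^ k) := by gcongr
      _ = 2 * meanValueConst * k.factorial * T * V ^ k := by ring
      _ ≤ (1 + 2 * meanValueConst) ^ k * k.factorial * T * V ^ k := by
          gcongr
          linarith [le_self_pow₀ (a := 1 + 2 * meanValueConst) (by linarith) (by lia : k ≠ 0)]
  · rw [pow_mul]
    gcongr
    exact sum_log_sq_div_mul_tent_sq_le (by linarith)
end
end
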